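/- Let β>0, f ∈ C¹([0,1]), and for each integer n≥2 let u_n ∈ PC_{1/n}(0,1) be a minimizer of DPMF_n(β,f,(0,1),·). Let x_n = k_n/n with k_n ∈ {0,…,n−1} and x_n → x_∞ ∈ (0,1), and define w_n(y) = (u_n(x_n + ω(n)y) − f(x_n))/ω(n). Set H = (1/(β|f′(x_∞)|²))^{1/3} and V = f′(x_∞)H (with the canonical (H,V)-staircase identically 0 when f′(x_∞)=0). Then the sequence {w_n} is relatively compact with respect to locally strict convergence in BV_loc(ℝ), and every limit point is an oblique translation of the canonical (H,V)-staircase: for every sequence n_k → +∞ there exist a subsequence n_{k_h} and w_∞ ∈ Obl(H,V) such that w_{n_{k_h}} → w_∞ locally strictly in BV_loc(ℝ). -/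

import Mathlib

/-!
Blow-ups of minimizers of the discrete Perona–Malik functional are staircases.

In the variables of the blow-up, and after division by `ω(n)³`, the functional becomes a finite sum
over cells of length `δ(n)` of a jump cost `log (1 + (h/δ)²) / log n` and of the squared distance
from the cell means of the forcing term. Since `-log δ(n) = (2 log n + log log n) / 3`, the cost
tends to `4/3` for bounded jumps that are not too small (at least `1 / (log n)²`), while increments
below this threshold have total height controlled by a vanishing multiple of their cost. The forcing
term is asymptotic to the linear function `M y`, with `M = f'(x_∞)`. These features are collected
in the structure `Blow`, for which everything else is proved, by direct comparison arguments at
finite `n`; no compactness theorem for an intermediate limit functional is used.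

* Comparison with staircases of optimal step bounds the energy of a window by the optimal energy
  density times its length, up to an error that does not grow with the window (`Blow.upper`). This
  produces cells where `W` is close to the forcing term, and truncation gives sup bounds
  (`Blow.sup_bound`). If `M = 0` the density can be taken arbitrarily small and `W` tends to `0`
  (`Blow.zero_lim`).
* If `M ≠ 0`, the distance between consecutive jumps is bounded above and away from zero
  (`Blow.gap_upper`, `Blow.gap_lower`). Stationarity with respect to vertical shifts of a plateau
  puts its height at the value of `M y` at its midpoint (`Blow.plateau`); stationarity with respect
  to horizontal shifts of a jump puts `M y` there at the mean of the adjacent plateaus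
  (`Blow.jump_pos`). Hence consecutive gaps are asymptotically equal (`Blow.gap_eq`).
* A gap `ℓ` repeated over a long window costs `(4/3) / ℓ + β M² ℓ² / 12` per unit length, which is
  minimal only for `β M² ℓ³ = 8`, that is `ℓ = 2 H`; comparison with the upper bound forces
  this value (`Blow.gap_len`). So `W` is asymptotically the staircase through its own value at
  the origin (`Blow.stair`), and its variation is asymptotically the modulus of its total increment
  (`Blow.variation`).
* The level of the central plateau is bounded, so it converges along a subsequence; the pointwise
  convergence away from the jumps and the control of the variation then give locally strict
  convergence (`Blow.locStrict`, `Blow.main`).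
-/

open MeasureTheory Filter Set

namespace PeronaMalik

/-- `a_{δ,*} = δ⌊a/δ⌋`, the lower `δ`-approximation of `a`. -/
noncomputable def lowGrid (δ a : ℝ) : ℝ := δ * (⌊a / δ⌋ : ℤ)

/-- `b_δ^* = δ⌈b/δ⌉`, the upper `δ`-approximation of `b`. -/
noncomputable def highGrid (δ b : ℝ) : ℝ := δ * (⌈b / δ⌉ : ℤ)

/-- `u` is piecewise constant at scale `δ`: constant on every interval `[zδ, (z+1)δ)`. -/
def IsPC (δ : ℝ) (u : ℝ → ℝ) : Prop :=
  ∀ z : ℤ, ∀ x ∈ Set.Ico ((z : ℝ) * δ) (((z : ℝ) + 1) * δ), u x = u ((z : ℝ) * δ)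

/-- Discrete derivative `D^δ u (x) = (u(x+δ) - u(x))/δ`. -/
noncomputable def Dd (δ : ℝ) (u : ℝ → ℝ) (x : ℝ) : ℝ := (u (x + δ) - u x) / δ

/-- The discrete Perona–Malik functional with fidelity term on `(a,b)`. -/
noncomputable def DPMF (n : ℕ) (β : ℝ) (f : ℝ → ℝ) (a b : ℝ) (u : ℝ → ℝ) : ℝ :=
  (∫ x in lowGrid (1 / (n : ℝ)) a..(highGrid (1 / (n : ℝ)) b - 1 / (n : ℝ)),
      Real.log (1 + (Dd (1 / (n : ℝ)) u x) ^ 2)) +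
    β * ∫ x in a..b, (u x - f x) ^ 2

/-- `u` is a minimizer of `DPMF n β f (0,1)` over `PC_{1/n}(0,1)`. -/
def IsMinimizer (n : ℕ) (β : ℝ) (f : ℝ → ℝ) (u : ℝ → ℝ) : Prop :=
  IsPC (1 / (n : ℝ)) u ∧
    ∀ v : ℝ → ℝ, IsPC (1 / (n : ℝ)) v → DPMF n β f 0 1 u ≤ DPMF n β f 0 1 v

/-- `m(n,β,f)`, the minimum value of the discrete Perona–Malik functional. -/
noncomputable def mval (n : ℕ) (β : ℝ) (f : ℝ → ℝ) : ℝ :=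
  sInf ((fun u => DPMF n β f 0 1 u) '' {u | IsPC (1 / (n : ℝ)) u})

/-- `ω(n) = (log n / n)^{1/3}`. -/
noncomputable def omg (n : ℕ) : ℝ := (Real.log n / n) ^ ((1 : ℝ) / 3)

/-- `δ(n) = 1/(n ω(n))`. -/
noncomputable def dlt (n : ℕ) : ℝ := 1 / ((n : ℝ) * omg n)

/-- The rescaled discrete Perona–Malik functional. -/
noncomputable def RDPM (n : ℕ) (a b : ℝ) (u : ℝ → ℝ) : ℝ :=
  (1 / omg n ^ 2) *
    ∫ x in lowGrid (dlt n) a..(highGrid (dlt n) b - dlt n),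
      Real.log (1 + (Dd (dlt n) u x) ^ 2)

/-- The rescaled discrete Perona–Malik functional with fidelity term. -/
noncomputable def RDPMF (n : ℕ) (β : ℝ) (f : ℝ → ℝ) (a b : ℝ) (u : ℝ → ℝ) : ℝ :=
  RDPM n a b u + β * ∫ x in Set.Ioo a b, (u x - f x) ^ 2

/-- `u` is a step function with finitely many jumps on `(a,b)`. -/
def IsStep (a b : ℝ) (u : ℝ → ℝ) : Prop :=
  ∃ (s : Finset ℝ) (c : ℝ) (J : ℝ → ℝ),
    (∀ p ∈ s, p ∈ Set.Ioo a b ∧ J p ≠ 0) ∧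
    ∀ x ∈ Set.Ioo a b, u x = c + ∑ p ∈ s, (if p ≤ x then J p else 0)

/-- The set of jump (discontinuity) points of `u` inside `(a,b)`. -/
def jumpSet (a b : ℝ) (u : ℝ → ℝ) : Set ℝ :=
  {x ∈ Set.Ioo a b | ¬ ContinuousAt u x}

/-- The limit functional `JF(α,β,f,(a,b),u) = α·#jumps + β∫(u-f)²`. -/
noncomputable def JF (α β : ℝ) (f : ℝ → ℝ) (a b : ℝ) (u : ℝ → ℝ) : ℝ :=
  α * ((jumpSet a b u).ncard : ℝ) + β * ∫ x in Set.Ioo a b, (u x - f x) ^ 2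

/-- Strict convergence in `BV((a,b))`: `L¹` convergence plus convergence of
total variations. -/
def StrictBV (useq : ℕ → ℝ → ℝ) (u : ℝ → ℝ) (a b : ℝ) : Prop :=
  Tendsto (fun k => ∫ x in Set.Ioo a b, |useq k x - u x|) atTop (nhds 0) ∧
  Tendsto (fun k => eVariationOn (useq k) (Set.Ioo a b)) atTop
    (nhds (eVariationOn u (Set.Ioo a b)))

/-- Locally strict convergence in `BV_loc(ℝ)`: strict convergence on every bounded
interval whose endpoints are not jump points of the limit. -/
def LocStrictBV (useq : ℕ → ℝ → ℝ) (u : ℝ → ℝ) : Prop :=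
  ∀ a b : ℝ, a < b → ContinuousAt u a → ContinuousAt u b → StrictBV useq u a b

/-- `S(x) = 2⌊(x+1)/2⌋`. -/
noncomputable def stairS (x : ℝ) : ℝ := 2 * (⌊(x + 1) / 2⌋ : ℤ)

/-- The canonical `(H,V)`-staircase `S_{H,V}(x) = V·S(x/H)`. -/
noncomputable def canStair (H V : ℝ) (x : ℝ) : ℝ := V * stairS (x / H)

/-- Oblique translations of the canonical `(H,V)`-staircase. -/
def Obl (H V : ℝ) (v : ℝ → ℝ) : Prop :=
  ∃ τ ∈ Set.Icc (-1 : ℝ) 1, ∀ x, v x = canStair H V (x - H * τ) + V * τ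

/-- Graph translations of horizontal type of the canonical `(H,V)`-staircase. -/
def Orz (H V : ℝ) (v : ℝ → ℝ) : Prop :=
  ∃ τ ∈ Set.Icc (-1 : ℝ) 1, ∀ x, v x = canStair H V (x - H * τ)

/-- `μ_n(β,L,M)`: minimum of the rescaled functional with affine forcing term. -/
noncomputable def muDisc (n : ℕ) (β L M : ℝ) : ℝ :=
  sInf ((fun u => RDPMF n β (fun x => M * x) 0 L u) '' {u | IsPC (dlt n) u})

/-- `μ*_n(β,L,M)`: same as `μ_n` but with boundary conditions `u(0)=0`, `u(L^*)=ML`. -/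
noncomputable def muDiscStar (n : ℕ) (β L M : ℝ) : ℝ :=
  sInf ((fun u => RDPMF n β (fun x => M * x) 0 L u) ''
    {u | IsPC (dlt n) u ∧ u 0 = 0 ∧ u (highGrid (dlt n) L - dlt n) = M * L})

/-- `μ(α,β,L,M)`: minimum of the limit functional with affine forcing term. -/
noncomputable def muLim (α β L M : ℝ) : ℝ :=
  sInf ((fun u => JF α β (fun x => M * x) 0 L u) '' {u | IsStep 0 L u})

/-- `μ*(α,β,L,M)`: same as `μ` but with boundary values `u(0⁺)=0`, `u(L⁻)=ML`. -/
noncomputable def muLimStar (α β L M : ℝ) : ℝ :=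
  sInf ((fun u => JF α β (fun x => M * x) 0 L u) ''
    {u | IsStep 0 L u ∧ Tendsto u (nhdsWithin 0 (Set.Ioi 0)) (nhds 0) ∧
         Tendsto u (nhdsWithin L (Set.Iio L)) (nhds (M * L))})

/-- `u` and `v` have the same boundary values `u(a⁺)=v(a⁺)`, `u(b⁻)=v(b⁻)`. -/
def SameBdry (a b : ℝ) (u v : ℝ → ℝ) : Prop :=
  (∀ c : ℝ, Tendsto v (nhdsWithin a (Set.Ioi a)) (nhds c) →
     Tendsto u (nhdsWithin a (Set.Ioi a)) (nhds c)) ∧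
  (∀ c : ℝ, Tendsto v (nhdsWithin b (Set.Iio b)) (nhds c) →
     Tendsto u (nhdsWithin b (Set.Iio b)) (nhds c))

/-- `v` is a local minimizer for `JF(α,β,f,(a,b),·)` among step functions with the
same boundary values. -/
def IsLocalMinJF (α β : ℝ) (f : ℝ → ℝ) (a b : ℝ) (v : ℝ → ℝ) : Prop :=
  IsStep a b v ∧
  ∀ u : ℝ → ℝ, IsStep a b u → SameBdry a b u v → JF α β f a b v ≤ JF α β f a b u

/-- `v` is an entire local minimizer for `JF(α,β,f,·,·)`. -/
def IsEntireLocalMinJF (α β : ℝ) (f : ℝ → ℝ) (v : ℝ → ℝ) : Prop :=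
  ∀ a b : ℝ, a < b → IsLocalMinJF α β f a b v

/-- `v` is a local minimizer for `RDPMF_n(β,f,(a,b),·)` among piecewise constant
functions with the same boundary values. -/
def IsLocalMinRDPMF (n : ℕ) (β : ℝ) (f : ℝ → ℝ) (a b : ℝ) (v : ℝ → ℝ) : Prop :=
  IsPC (dlt n) v ∧
  ∀ u : ℝ → ℝ, IsPC (dlt n) u →
    u (lowGrid (dlt n) a) = v (lowGrid (dlt n) a) →
    u (highGrid (dlt n) b - dlt n) = v (highGrid (dlt n) b - dlt n) →
    RDPMF n β f a b v ≤ RDPMF n β f a b u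

/-! ### The discrete problem -/

/-- The properties of the (rescaled) jump cost `h ↦ log (1 + (h/δ)²) / log n` that do not depend
on `n`. -/
structure Cost (g : ℝ → ℝ) : Prop where
  nonneg : ∀ h, 0 ≤ g h
  zero : g 0 = 0
  mono : ∀ h h', |h| ≤ |h'| → g h ≤ g h'

/-- Discrete energy of the sequence of cell values `W` on the cells `A, …, B - 1`, with forcing
term `a`, jump cost `g` and fidelity weight `κ`. -/
noncomputable def En (g : ℝ → ℝ) (κ : ℝ) (a W : ℕ → ℝ) (A B : ℕ) : ℝ :=
  ∑ i ∈ Finset.Ico A B, (g (W (i + 1) - W i) + κ * (W i - a i) ^ 2)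

/-- `W` is a local minimizer of the discrete energy on the cells `0, …, N`: no modification on the
cells strictly between `A` and `B` lowers the energy. -/
def LM (g : ℝ → ℝ) (κ : ℝ) (a W : ℕ → ℝ) (N : ℕ) : Prop :=
  ∀ A B, A < B → B ≤ N → ∀ V : ℕ → ℝ, (∀ i, i ≤ A → V i = W i) → (∀ i, B ≤ i → V i = W i) →
    En g κ a W A B ≤ En g κ a V A B

lemma Cost.neg {g : ℝ → ℝ} (hg : Cost g) (h : ℝ) : g (-h) = g h :=
  le_antisymm (hg.mono _ _ (by simp)) (hg.mono _ _ (by simp))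

lemma En_term_nonneg {g : ℝ → ℝ} (hg : Cost g) {κ : ℝ} (hκ : 0 ≤ κ) (a W : ℕ → ℝ) (i : ℕ) :
    0 ≤ g (W (i + 1) - W i) + κ * (W i - a i) ^ 2 := by
  have := hg.nonneg (W (i + 1) - W i)
  positivity

lemma En_mono {g : ℝ → ℝ} (hg : Cost g) {κ : ℝ} (hκ : 0 ≤ κ) (a W : ℕ → ℝ) {A A' B B' : ℕ}
    (hA : A' ≤ A) (hB : B ≤ B') : En g κ a W A B ≤ En g κ a W A' B' :=
  Finset.sum_le_sum_of_subset_of_nonneg (Finset.Ico_subset_Ico hA hB)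
    (fun i _ _ => En_term_nonneg hg hκ a W i)

lemma En_add (g : ℝ → ℝ) (κ : ℝ) (a W : ℕ → ℝ) {A B C : ℕ} (h1 : A ≤ B) (h2 : B ≤ C) :
    En g κ a W A B + En g κ a W B C = En g κ a W A C :=
  Finset.sum_Ico_consecutive _ h1 h2

/-- Competitor obtained by adding the constant `t` on the cells `p + 1, …, q`. All stationarity
conditions are derived from this comparison. -/
lemma LM.shift {g : ℝ → ℝ} {κ : ℝ} {a W : ℕ → ℝ} {N : ℕ} (hW : LM g κ a W N) {p q : ℕ}
    (hpq : p < q) (hq : q + 1 ≤ N) (t : ℝ) :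
    g (W (p + 1) - W p) + g (W (q + 1) - W q) ≤
      g (W (p + 1) - W p + t) + g (W (q + 1) - W q - t) +
        κ * ∑ i ∈ Finset.Ico (p + 1) (q + 1), (2 * t * (W i - a i) + t ^ 2) := by
  classical
  set V : ℕ → ℝ := fun i => if p < i ∧ i ≤ q then W i + t else W i with hV
  have h := hW p (q + 1) (by omega) hq V (fun i hi => by simp [hV]; omega)
    (fun i hi => by simp [hV]; omega)
  have hsplit : ∀ φ : ℕ → ℝ, ∑ i ∈ Finset.Ico p (q + 1), φ i =
      φ p + ∑ i ∈ Finset.Ico (p + 1) q, φ i + φ q := by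
    intro φ
    rw [Finset.sum_Ico_succ_top (by omega), Finset.sum_eq_sum_Ico_succ_bot hpq]
  unfold En at h
  rw [hsplit, hsplit] at h
  have e1 : V p = W p := by simp [hV]
  have e2 : V (p + 1) = W (p + 1) + t := by simp [hV]; omega
  have e3 : V q = W q + t := by simp [hV]; omega
  have e4 : V (q + 1) = W (q + 1) := by simp [hV]
  have e5 : ∑ i ∈ Finset.Ico (p + 1) q, (g (V (i + 1) - V i) + κ * (V i - a i) ^ 2) =
      ∑ i ∈ Finset.Ico (p + 1) q, (g (W (i + 1) - W i) + κ * (W i - a i) ^ 2) +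
      κ * ∑ i ∈ Finset.Ico (p + 1) q, (2 * t * (W i - a i) + t ^ 2) := by
    rw [Finset.mul_sum, ← Finset.sum_add_distrib]
    refine Finset.sum_congr rfl fun i hi => ?_
    rw [Finset.mem_Ico] at hi
    have a1 : V i = W i + t := by simp [hV]; omega
    have a2 : V (i + 1) = W (i + 1) + t := by simp [hV]; omega
    rw [a1, a2]
    ring_nf
  rw [e5, e1, e2, e3, e4] at h
  rw [Finset.sum_Ico_succ_top (by omega)]
  have e6 : W (p + 1) + t - W p = W (p + 1) - W p + t := by ring
  have e7 : W (q + 1) - (W q + t) = W (q + 1) - W q - t := by ring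
  rw [e6, e7] at h
  nlinarith [h]

lemma LM.neg {g : ℝ → ℝ} (hg : Cost g) {κ : ℝ} {a W : ℕ → ℝ} {N : ℕ} (hW : LM g κ a W N) :
    LM g κ (fun i => -a i) (fun i => -W i) N := by
  have key : ∀ (V : ℕ → ℝ) A B, En g κ (fun i => -a i) (fun i => -V i) A B = En g κ a V A B := by
    intro V A B
    refine Finset.sum_congr rfl fun i _ => ?_
    rw [← hg.neg (V (i + 1) - V i)]
    ring_nf
  intro A B hAB hB V h1 h2
  have h := hW A B hAB hB (fun i => -V i) (fun i hi => by simp [h1 i hi])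
    (fun i hi => by simp [h2 i hi])
  rw [key]
  calc _ ≤ _ := h
    _ = En g κ (fun i => -a i) (fun i => - -V i) A B := (key _ _ _).symm
    _ = _ := by simp

/-- Maximum principle: truncating from above lowers the energy. -/
lemma LM.le_of_bdry {g : ℝ → ℝ} (hg : Cost g) {κ : ℝ} (hκ : 0 < κ) {a W : ℕ → ℝ} {N : ℕ}
    (hW : LM g κ a W N) {A B : ℕ} (hB : B ≤ N) {T : ℝ} (hWA : W A ≤ T) (hWB : W B ≤ T)
    (ha : ∀ i, A < i → i < B → a i ≤ T) : ∀ i, A ≤ i → i ≤ B → W i ≤ T := by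
  classical
  by_contra! hcon
  obtain ⟨j, hAj, hjB, hj⟩ := hcon
  have hAj' : A < j := lt_of_le_of_ne hAj (by rintro rfl; linarith)
  have hjB' : j < B := lt_of_le_of_ne hjB (by rintro rfl; linarith)
  set V : ℕ → ℝ := fun i => if A < i ∧ i < B then min (W i) T else W i with hV
  have hVeq : ∀ i, A ≤ i → i ≤ B → V i = min (W i) T := by
    intro i h1 h2
    by_cases h : A < i ∧ i < B
    · simp [hV, h]
    · simp only [hV, h, if_false]
      rcases (by omega : i = A ∨ i = B) with rfl | rfl
      · simp [hWA]
      · simp [hWB]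
  have h := hW A B (by omega) hB V (fun i hi => by simp [hV]; omega)
    (fun i hi => by simp [hV]; omega)
  refine absurd h (not_le.mpr ?_)
  have hterm : ∀ i, A < i → i < B → (V i - a i) ^ 2 ≤ (W i - a i) ^ 2 := by
    intro i h1 h2
    rw [hVeq i h1.le h2.le]
    have := ha i h1 h2
    rcases le_total (W i) T with h' | h'
    · rw [min_eq_left h']
    · rw [min_eq_right h']; nlinarith
  refine Finset.sum_lt_sum (fun i hi => ?_) ⟨j, by simp; omega, ?_⟩
  · rw [Finset.mem_Ico] at hi
    refine add_le_add ?_ (mul_le_mul_of_nonneg_left ?_ hκ.le)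
    · refine hg.mono _ _ ?_
      rw [hVeq i hi.1 (by omega), hVeq (i + 1) (by omega) (by omega)]
      have := abs_min_sub_min_le_max (W (i + 1)) T (W i) T
      simpa using this
    · rcases eq_or_lt_of_le hi.1 with h' | h'
      · subst h'; simp [hV]
      · exact hterm i h' hi.2
  · refine add_lt_add_of_le_of_lt ?_ (mul_lt_mul_of_pos_left ?_ hκ)
    · refine hg.mono _ _ ?_
      rw [hVeq j hAj hjB, hVeq (j + 1) (by omega) (by omega)]
      have := abs_min_sub_min_le_max (W (j + 1)) T (W j) T
      simpa using this
    · rw [hVeq j hAj hjB, min_eq_right hj.le]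
      have := ha j hAj' hjB'
      nlinarith

lemma LM.abs_le_of_bdry {g : ℝ → ℝ} (hg : Cost g) {κ : ℝ} (hκ : 0 < κ) {a W : ℕ → ℝ} {N : ℕ}
    (hW : LM g κ a W N) {A B : ℕ} (hB : B ≤ N) {T : ℝ} (hWA : |W A| ≤ T) (hWB : |W B| ≤ T)
    (ha : ∀ i, A < i → i < B → |a i| ≤ T) : ∀ i, A ≤ i → i ≤ B → |W i| ≤ T := by
  intro i h1 h2
  have u := hW.le_of_bdry hg hκ hB (abs_le.mp hWA).2 (abs_le.mp hWB).2
    (fun i h1 h2 => (abs_le.mp (ha i h1 h2)).2) i h1 h2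
  have l := (hW.neg hg).le_of_bdry hg hκ hB (T := T) (by linarith [(abs_le.mp hWA).1])
    (by linarith [(abs_le.mp hWB).1])
    (fun i h1 h2 => by linarith [(abs_le.mp (ha i h1 h2)).1]) i h1 h2
  exact abs_le.mpr ⟨by linarith, u⟩

lemma sum_sq_affine (x d : ℝ) (m : ℕ) :
    ∑ r ∈ Finset.range m, (x + d * r) ^ 2 =
      m * (x + d * ((m : ℝ) - 1) / 2) ^ 2 + d ^ 2 * ((m : ℝ) * ((m : ℝ) ^ 2 - 1)) / 12 := by
  induction m with
  | zero => simp
  | succ m ih => rw [Finset.sum_range_succ, ih]; push_cast; ring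

lemma sum_block {φ : ℕ → ℝ} {m : ℕ} {Y : ℝ} (P : ℕ)
    (h : ∀ b, b < P → ∑ r ∈ Finset.range m, φ (b * m + r) ≤ Y) :
    ∑ j ∈ Finset.range (P * m), φ j ≤ P * Y := by
  induction P with
  | zero => simp
  | succ P ih =>
    rw [Nat.succ_mul, Finset.sum_range_add]
    have h1 := ih (fun b hb => h b (by omega))
    have h2 := h P (by omega)
    push_cast
    linarith

/-- Energy upper bound, by comparison with a staircase made of `P` steps of `m` cells each,
centred on the graph of the affine function `M * y` at the nodes `y = (i - k) * δ`. -/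
lemma LM.upper {g : ℝ → ℝ} (hg : Cost g) {κ : ℝ} (hκ : 0 ≤ κ) {a W : ℕ → ℝ} {N : ℕ}
    (hW : LM g κ a W N) {δ M η C R : ℝ} (hδ : 0 ≤ δ) {k A m P : ℕ} (hm : 1 ≤ m)
    (hP : 1 ≤ P)
    (hB : A + 1 + P * m ≤ N)
    (ha : ∀ i, A < i → i < A + 1 + P * m → |a i - M * (((i : ℝ) - k) * δ)| ≤ η)
    (hA1 : ∀ c, |c| ≤ C → g (c - W A) ≤ 5) (hB1 : ∀ c, |c| ≤ C → g (c - W (A + 1 + P * m)) ≤ 5)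
    (hRA : |((A : ℝ) - k) * δ| ≤ R) (hRB : |(((A + 1 + P * m : ℕ) : ℝ) - k) * δ| ≤ R)
    (hRC : |M| * R ≤ C) :
    En g κ a W A (A + 1 + P * m) ≤ κ * (W A - a A) ^ 2 + 10 +
      P * (g (M * (δ * m)) +
        κ * m * (M ^ 2 * δ ^ 2 * m ^ 2 / 12 + 2 * η * |M| * δ * m + η ^ 2)) := by
  classical
  -- the centre of the step that contains the cell `A + 1 + j`
  set S : ℕ → ℝ := fun j =>
    M * (((A : ℝ) + 1 - k) * δ + δ * ((m : ℝ) * ((j / m : ℕ) : ℝ) + ((m : ℝ) - 1) / 2)) with hS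
  set B := A + 1 + P * m with hBdef
  set V : ℕ → ℝ := fun i => if A < i ∧ i < B then S (i - (A + 1)) else W i with hV
  have hm' : (1 : ℝ) ≤ m := by exact_mod_cast hm
  have hη : 0 ≤ η := (abs_nonneg _).trans
    (ha (A + 1) (by omega) (by have := Nat.mul_pos hP hm; omega))
  have hSC : ∀ j, j < P * m → |S j| ≤ C := by
    intro j hj
    have h1 : j / m + 1 ≤ P := (Nat.div_lt_iff_lt_mul (by omega)).mpr hj
    have h2 : ((j / m : ℕ) : ℝ) + 1 ≤ P := by exact_mod_cast h1
    have h0 : (0 : ℝ) ≤ ((j / m : ℕ) : ℝ) := by positivity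
    refine le_trans ?_ hRC
    rw [hS, abs_mul]
    refine mul_le_mul_of_nonneg_left ?_ (abs_nonneg _)
    have hl := (abs_le.mp hRA).1
    have hu := (abs_le.mp hRB).2
    have h3 : (m : ℝ) * ((j / m : ℕ) : ℝ) + m ≤ P * m := by nlinarith
    rw [hBdef] at hu
    push_cast at hu
    rw [abs_le]
    constructor
    · have : 0 ≤ δ * (1 + ((m : ℝ) * ((j / m : ℕ) : ℝ) + ((m : ℝ) - 1) / 2)) := by
        apply mul_nonneg hδ
        have := mul_nonneg (by positivity : (0:ℝ) ≤ (m:ℝ)) h0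
        linarith
      nlinarith
    · have : 0 ≤ δ * ((P * m : ℝ) - ((m : ℝ) * ((j / m : ℕ) : ℝ) + ((m : ℝ) - 1) / 2)) := by
        apply mul_nonneg hδ
        linarith
      nlinarith
  have hPm : 1 ≤ P * m := Nat.one_le_iff_ne_zero.mpr (by positivity)
  have h := hW A B (by omega) hB V (fun i hi => by simp [hV]; omega)
    (fun i hi => by simp [hV]; omega)
  refine h.trans ?_
  unfold En
  rw [Finset.sum_eq_sum_Ico_succ_bot (by omega), Finset.sum_Ico_eq_sum_range]
  have e0 : B - (A + 1) = P * m := by omega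
  rw [e0]
  have hVS : ∀ j, j < P * m → V (A + 1 + j) = S j := by
    intro j hj
    have : A < A + 1 + j ∧ A + 1 + j < B := by omega
    simp [hV, this]
  have eA : V A = W A := by simp [hV]
  have eB : V B = W B := by simp [hV]
  have t1 : g (V (A + 1) - V A) ≤ 5 := by
    rw [eA]; apply hA1
    have := hVS 0 (by omega)
    rw [add_zero] at this
    rw [this]; exact hSC 0 (by omega)
  have t2 : ∑ j ∈ Finset.range (P * m),
      (g (V (A + 1 + j + 1) - V (A + 1 + j)) + κ * (V (A + 1 + j) - a (A + 1 + j)) ^ 2) ≤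
      5 + ∑ j ∈ Finset.range (P * m), (g (S (j + 1) - S j) + κ * (S j - a (A + 1 + j)) ^ 2) := by
    obtain ⟨Q, hQ⟩ : ∃ Q, P * m = Q + 1 := ⟨P * m - 1, by omega⟩
    rw [hQ, Finset.sum_range_succ, Finset.sum_range_succ]
    have s1 : ∀ j ∈ Finset.range Q,
        (g (V (A + 1 + j + 1) - V (A + 1 + j)) + κ * (V (A + 1 + j) - a (A + 1 + j)) ^ 2) =
        (g (S (j + 1) - S j) + κ * (S j - a (A + 1 + j)) ^ 2) := by
      intro j hj
      rw [Finset.mem_range] at hj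
      rw [hVS j (by omega), add_assoc (A + 1), hVS (j + 1) (by omega)]
    rw [Finset.sum_congr rfl s1]
    have s2 : A + 1 + Q + 1 = B := by omega
    rw [s2, hVS Q (by omega), eB, ← hg.neg]
    have s3 := hB1 (S Q) (hSC Q (by omega))
    have s4 := hg.nonneg (S (Q + 1) - S Q)
    rw [neg_sub]
    linarith
  have t3 : ∑ j ∈ Finset.range (P * m), (g (S (j + 1) - S j) + κ * (S j - a (A + 1 + j)) ^ 2) ≤
      P * (g (M * (δ * m)) +
        κ * m * (M ^ 2 * δ ^ 2 * m ^ 2 / 12 + 2 * η * |M| * δ * m + η ^ 2)) := by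
    refine sum_block P fun b hb => ?_
    rw [Finset.sum_add_distrib, ← Finset.mul_sum]
    have hbP : b * m + m ≤ P * m := by
      have := Nat.mul_le_mul_right m (Nat.succ_le_of_lt hb)
      rwa [Nat.succ_mul] at this
    refine add_le_add ?_ ?_
    · obtain ⟨Q, rfl⟩ : ∃ Q, m = Q + 1 := ⟨m - 1, by omega⟩
      rw [Finset.sum_range_succ, Finset.sum_eq_zero, zero_add]
      · refine le_of_eq (congrArg g ?_)
        have d1 : (b * (Q + 1) + Q) / (Q + 1) = b := by
          rw [mul_comm, Nat.mul_add_div (by omega), Nat.div_eq_of_lt (by omega), add_zero]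
        have d2 : (b * (Q + 1) + Q + 1) / (Q + 1) = b + 1 := by
          rw [show b * (Q + 1) + Q + 1 = (b + 1) * (Q + 1) by ring, Nat.mul_div_cancel _ (by omega)]
        simp only [hS, d1, d2]
        push_cast; ring
      · intro r hr
        rw [Finset.mem_range] at hr
        have d1 : (b * (Q + 1) + r) / (Q + 1) = b := by
          rw [mul_comm, Nat.mul_add_div (by omega), Nat.div_eq_of_lt (by omega), add_zero]
        have d2 : (b * (Q + 1) + r + 1) / (Q + 1) = b := by
          rw [mul_comm, add_assoc, Nat.mul_add_div (by omega), Nat.div_eq_of_lt (by omega),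
            add_zero]
        simp only [hS, d1, d2, sub_self, hg.zero]
    · rw [mul_assoc]
      refine mul_le_mul_of_nonneg_left ?_ hκ
      have hterm : ∀ r ∈ Finset.range m, (S (b * m + r) - a (A + 1 + (b * m + r))) ^ 2 ≤
          (M * δ * (((m : ℝ) - 1) / 2) + (-(M * δ)) * r) ^ 2 +
            (2 * η * |M| * δ * m + η ^ 2) := by
        intro r hr
        rw [Finset.mem_range] at hr
        have d1 : (b * m + r) / m = b := by
          rw [mul_comm, Nat.mul_add_div (by omega), Nat.div_eq_of_lt hr, add_zero]
        have ha' := ha (A + 1 + (b * m + r)) (by omega) (by omega)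
        set e := a (A + 1 + (b * m + r)) - M * ((((A + 1 + (b * m + r) : ℕ) : ℝ) - k) * δ) with he
        have e1 : S (b * m + r) - a (A + 1 + (b * m + r)) =
            (M * δ * (((m : ℝ) - 1) / 2) + (-(M * δ)) * r) - e := by
          simp only [he, hS, d1]; push_cast; ring
        rw [e1]
        set X := M * δ * (((m : ℝ) - 1) / 2) + (-(M * δ)) * r with hX
        have hXb : |X| ≤ |M| * δ * m := by
          have : X = M * δ * (((m : ℝ) - 1) / 2 - r) := by rw [hX]; ring
          rw [this, abs_mul, abs_mul, abs_of_nonneg hδ]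
          refine mul_le_mul_of_nonneg_left ?_ (by positivity)
          have hr' : (r : ℝ) + 1 ≤ m := by exact_mod_cast hr
          have hr0 : (0 : ℝ) ≤ r := by positivity
          rw [abs_le]; constructor <;> linarith
        have hXe : -(X * e) ≤ (|M| * δ * m) * η := by
          calc -(X * e) ≤ |X * e| := neg_le_abs _
            _ = |X| * |e| := abs_mul _ _
            _ ≤ _ := mul_le_mul hXb ha' (abs_nonneg _) (by positivity)
        have he2 : e ^ 2 ≤ η ^ 2 := by
          rw [← sq_abs e]; exact pow_le_pow_left₀ (abs_nonneg _) ha' 2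
        nlinarith
      refine (Finset.sum_le_sum hterm).trans ?_
      rw [Finset.sum_add_distrib, sum_sq_affine, Finset.sum_const, Finset.card_range, nsmul_eq_mul]
      have : (M * δ * (((m : ℝ) - 1) / 2) + -(M * δ) * ((m : ℝ) - 1) / 2) = 0 := by ring
      rw [this]
      have : 0 ≤ (M * δ) ^ 2 * (m : ℝ) := by positivity
      nlinarith
  rw [eA] at t1 ⊢
  linarith

/-! ### Blow-up sequences -/

/-- A sequence of discrete local minimizers at vanishing scale. At stage `n` there are cells
`0, …, N n` of length `δ n`, centred at the cell `k n`; `W n i` is the value on the cell `i`, and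
`a n i` is the mean of the forcing term there, which is asymptotic to the linear function of slope
`M`. A jump of height at least `θ n` costs asymptotically at least `4 / 3`, a bounded jump at most
`4 / 3`, and the total height of the jumps below `θ n` is controlled by a vanishing multiple of
their cost. -/
structure Blow where
  β : ℝ
  M : ℝ
  δ : ℕ → ℝ
  θ : ℕ → ℝ
  g : ℕ → ℝ → ℝ
  k : ℕ → ℕ
  N : ℕ → ℕ
  W : ℕ → ℕ → ℝ
  a : ℕ → ℕ → ℝ
  β_pos : 0 < β
  δ_pos : ∀ᶠ n in atTop, 0 < δ n
  δ_lim : Tendsto δ atTop (nhds 0)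
  cost : ∀ᶠ n in atTop, Cost (g n)
  lm : ∀ᶠ n in atTop, LM (g n) (β * δ n) (a n) (W n) (N n)
  dom : ∀ R : ℝ, ∀ᶠ n in atTop, R ≤ k n * δ n ∧ R ≤ ((N n : ℝ) - k n) * δ n
  aff : ∀ R η : ℝ, 0 < η → ∀ᶠ n in atTop, ∀ i : ℕ, |((i : ℝ) - k n) * δ n| ≤ R →
    |a n i - M * (((i : ℝ) - k n) * δ n)| ≤ η
  crude : ∀ C : ℝ, ∀ᶠ n in atTop, ∀ i : ℕ, i ≤ N n → ∀ c, |c| ≤ C → g n (c - W n i) ≤ 5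
  gup : ∀ C η : ℝ, 0 < η → ∀ᶠ n in atTop, ∀ h, |h| ≤ C → g n h ≤ 4 / 3 + η
  glow : ∀ η : ℝ, 0 < η → ∀ᶠ n in atTop, ∀ h, θ n ≤ |h| → 4 / 3 - η ≤ g n h
  small : ∀ η : ℝ, 0 < η → ∀ᶠ n in atTop, ∀ h, |h| < θ n → |h| ≤ η * δ n + η * g n h

namespace Blow

variable (D : Blow)

/-- Position of the cell `i`. -/
noncomputable def y (n i : ℕ) : ℝ := ((i : ℝ) - D.k n) * D.δ n

/-- Increment of `W n` across the cell `i`. -/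
def inc (n i : ℕ) : ℝ := D.W n (i + 1) - D.W n i

/-- The cell `i` is a jump cell. -/
def J (n i : ℕ) : Prop := D.θ n ≤ |D.inc n i|

/-- The energy at stage `n`. -/
noncomputable def E (n A B : ℕ) : ℝ := En (D.g n) (D.β * D.δ n) (D.a n) (D.W n) A B

lemma y_sub (n i j : ℕ) : D.y n j - D.y n i = ((j : ℝ) - i) * D.δ n := by
  unfold y; ring

lemma y_succ (n i : ℕ) : D.y n (i + 1) = D.y n i + D.δ n := by
  unfold y; push_cast; ring

lemma y_mono {n : ℕ} (hδ : 0 < D.δ n) {i j : ℕ} (h : i ≤ j) : D.y n i ≤ D.y n j := by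
  have := D.y_sub n i j
  have h' : (i : ℝ) ≤ j := by exact_mod_cast h
  nlinarith

lemma y_le_iff {n : ℕ} (hδ : 0 < D.δ n) {i j : ℕ} : D.y n i ≤ D.y n j ↔ i ≤ j := by
  refine ⟨fun h => ?_, D.y_mono hδ⟩
  by_contra! hc
  have h' : (j : ℝ) + 1 ≤ i := by exact_mod_cast hc
  have := D.y_sub n i j
  nlinarith

lemma abs_y_le {n : ℕ} (hδ : 0 < D.δ n) {A i B : ℕ} {R : ℝ} (h1 : A ≤ i) (h2 : i ≤ B)
    (hA : |D.y n A| ≤ R) (hB : |D.y n B| ≤ R) : |D.y n i| ≤ R := by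
  have := D.y_mono hδ h1
  have := D.y_mono hδ h2
  exact abs_le.mpr ⟨by linarith [(abs_le.mp hA).1], by linarith [(abs_le.mp hB).2]⟩

/-- The smallness and minimality properties that hold for all large `n`. -/
lemma basic (R : ℝ) : ∀ᶠ n in atTop, 0 < D.δ n ∧ Cost (D.g n) ∧
    LM (D.g n) (D.β * D.δ n) (D.a n) (D.W n) (D.N n) ∧
    (∀ i, |D.y n i| ≤ R → i + 1 ≤ D.N n) := by
  filter_upwards [D.δ_pos, D.cost, D.lm, D.dom (R + 1),
    D.δ_lim.eventually (gt_mem_nhds (one_half_pos))] with n h1 h2 h3 h4 h5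
  refine ⟨h1, h2, h3, fun i hi => ?_⟩
  rw [← D.y_le_iff h1, y_succ]
  have := (abs_le.mp hi).2
  have h6 := h4.2
  change R + 1 ≤ D.y n (D.N n) at h6
  linarith

lemma δ_lt {x : ℝ} (hx : 0 < x) : ∀ᶠ n in atTop, D.δ n < x :=
  D.δ_lim.eventually (gt_mem_nhds hx)

/-- Energy estimate on bounded windows. The constants do not depend on the window: `c` is the
asymptotic cost of a jump of height at most `|M| * ℓ`. -/
lemma upper {ℓ c : ℝ} (hℓ : 0 < ℓ) (hc0 : 0 ≤ c)
    (hc : ∀ η : ℝ, 0 < η → ∀ᶠ n in atTop, ∀ h, |h| ≤ |D.M| * ℓ → D.g n h ≤ c + η) (R : ℝ) :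
    ∀ᶠ n in atTop, ∀ A B, A < B → |D.y n A| ≤ R → |D.y n B| ≤ R →
      D.E n A B ≤ D.β * D.δ n * (D.W n A - D.a n A) ^ 2 +
        (c + D.β * D.M ^ 2 / 12 * ℓ ^ 3) / ℓ * (D.y n B - D.y n A) +
        (c + D.β * D.M ^ 2 / 12 * ℓ ^ 3 + 12) := by
  have hβ := D.β_pos
  set Y := c + D.β * D.M ^ 2 / 12 * ℓ ^ 3 with hY
  have hY0 : 0 ≤ Y := by positivity
  obtain ⟨x, hx0, hx1, hxℓ, hx⟩ : ∃ x : ℝ, 0 < x ∧ x ≤ 1 ∧ x ≤ ℓ / 2 ∧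
      (Y + x) / (ℓ - x) * |2 * R| ≤ Y / ℓ * |2 * R| + 1 := by
    have ht : Tendsto (fun x : ℝ => (Y + x) / (ℓ - x) * |2 * R|) (nhdsWithin 0 (Ioi 0))
        (nhds ((Y + 0) / (ℓ - 0) * |2 * R|)) := by
      refine (ContinuousAt.tendsto ?_).mono_left nhdsWithin_le_nhds
      refine ContinuousAt.mul (ContinuousAt.div ?_ ?_ ?_) continuousAt_const
      · fun_prop
      · fun_prop
      · simpa using hℓ.ne'
    simp only [add_zero, sub_zero] at ht
    have h1 := ht.eventually (gt_mem_nhds (lt_add_one _))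
    have h2 : ∀ᶠ x : ℝ in nhdsWithin 0 (Ioi 0), x ∈ Ioo (0 : ℝ) (min 1 (ℓ / 2)) :=
      Ioo_mem_nhdsGT (by positivity)
    obtain ⟨x, hx1, hx2⟩ := (h1.and h2).exists
    exact ⟨x, hx2.1, (hx2.2.trans_le (min_le_left _ _)).le,
      (hx2.2.trans_le (min_le_right _ _)).le, hx1.le⟩
  -- error allowed in the forcing term
  obtain ⟨η, hη0, hη⟩ : ∃ η : ℝ, 0 < η ∧ D.β * ℓ * (2 * η * |D.M| * ℓ + η ^ 2) ≤ x / 2 := by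
    have ht : Tendsto (fun η : ℝ => D.β * ℓ * (2 * η * |D.M| * ℓ + η ^ 2)) (nhdsWithin 0 (Ioi 0))
        (nhds (D.β * ℓ * (2 * 0 * |D.M| * ℓ + 0 ^ 2))) := by
      refine (ContinuousAt.tendsto ?_).mono_left nhdsWithin_le_nhds
      fun_prop
    have h1 := ht.eventually (gt_mem_nhds (show _ < x / 2 by simpa using hx0))
    obtain ⟨η, h1, h2⟩ := (h1.and self_mem_nhdsWithin).exists
    exact ⟨η, h2, h1.le⟩
  set R' := |R| + 2 * ℓ with hR'
  filter_upwards [D.basic R', D.δ_lt hx0, D.δ_lt hℓ, D.aff R' η hη0, D.crude (|D.M| * R'),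
    hc (x / 2) (by positivity)] with n ⟨hδ, hg, hlm, hdom⟩ hδx hδℓ haff hcr hc A B hAB hA hB
  set δ := D.δ n with hδdef
  set m := ⌊ℓ / δ⌋₊ with hm
  have hm1 : 1 ≤ m := by
    rw [hm, Nat.one_le_floor_iff, one_le_div hδ]; exact hδℓ.le
  have hmℓ : δ * m ≤ ℓ := by
    have := Nat.floor_le (show 0 ≤ ℓ / δ by positivity)
    rw [le_div_iff₀ hδ] at this
    linarith
  have hmℓ' : ℓ - δ ≤ δ * m := by
    have := Nat.lt_floor_add_one (ℓ / δ)
    rw [div_lt_iff₀ hδ] at this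
    linarith
  set P := (B - A) / m + 1 with hP
  have hB1 : B ≤ A + 1 + P * m := by
    have := Nat.lt_div_mul_add (a := B - A) (b := m) (by omega)
    rw [hP, add_mul]; omega
  have hB2 : A + P * m ≤ B + m := by
    have := Nat.div_mul_le_self (B - A) m
    rw [hP, add_mul]; omega
  have hyB' : D.y n (A + 1 + P * m) ≤ D.y n B + 2 * ℓ := by
    have h1 : D.y n (A + 1 + P * m) - D.y n B = _ := D.y_sub n B (A + 1 + P * m)
    have h2 : ((A + 1 + P * m : ℕ) : ℝ) ≤ B + m + 1 := by exact_mod_cast (by omega)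
    have h3 : (((A + 1 + P * m : ℕ) : ℝ) - B) * δ ≤ (m + 1) * δ := by gcongr; linarith
    linarith
  have hRR : R ≤ |R| := le_abs_self R
  have hAR : |D.y n A| ≤ R' := by linarith
  have hBR : |D.y n (A + 1 + P * m)| ≤ R' := by
    have := D.y_mono hδ hB1
    exact abs_le.mpr ⟨by linarith [(abs_le.mp hB).1], by linarith [(abs_le.mp hB).2]⟩
  have hup := hlm.upper hg (by positivity : 0 ≤ D.β * δ) hδ.le (M := D.M)
    (C := |D.M| * R') (R := R') (k := D.k n) (A := A) (m := m) (P := P) hm1 (Nat.le_add_left _ _)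
    (by have := hdom _ hBR; omega)
    (fun i h1 h2 => haff i (D.abs_y_le hδ h1.le h2.le hAR hBR))
    (hcr A (by have := hdom _ hAR; omega)) (hcr _ (by have := hdom _ hBR; omega)) hAR hBR le_rfl
  have hgm : D.g n (D.M * (δ * m)) ≤ c + x / 2 := by
    apply hc
    rw [abs_mul, abs_of_nonneg (by positivity : (0 : ℝ) ≤ δ * m)]
    gcongr
  have hfid : D.β * δ * m * (D.M ^ 2 * δ ^ 2 * m ^ 2 / 12 + 2 * η * |D.M| * δ * m + η ^ 2) ≤
      D.β * D.M ^ 2 / 12 * ℓ ^ 3 + x / 2 := by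
    have e : D.β * δ * m * (D.M ^ 2 * δ ^ 2 * m ^ 2 / 12 + 2 * η * |D.M| * δ * m + η ^ 2) =
      D.β * D.M ^ 2 / 12 * (δ * m) ^ 3 + D.β * (δ * m) * (2 * η * |D.M| * (δ * m) + η ^ 2) := by
      ring
    rw [e]
    refine add_le_add (by gcongr) (le_trans ?_ hη)
    gcongr
  have hYx : 0 ≤ Y + x := by positivity
  have hPb : (P : ℝ) ≤ (D.y n B - D.y n A) / (ℓ - x) + 1 := by
    have h1 : (((B - A) / m : ℕ) : ℝ) * m ≤ (B : ℝ) - A := by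
      rw [← Nat.cast_sub hAB.le]; exact_mod_cast Nat.div_mul_le_self (B - A) m
    rw [D.y_sub, hP]
    push_cast
    gcongr
    rw [le_div_iff₀ (by linarith)]
    calc (((B - A) / m : ℕ) : ℝ) * (ℓ - x) ≤ (((B - A) / m : ℕ) : ℝ) * (δ * m) := by
          gcongr; linarith
      _ = ((((B - A) / m : ℕ) : ℝ) * m) * δ := by ring
      _ ≤ _ := by gcongr
  have hT0 : 0 ≤ D.y n B - D.y n A := by linarith [D.y_mono hδ hAB.le]
  have hTR : D.y n B - D.y n A ≤ |2 * R| := by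
    have := le_abs_self (2 * R)
    linarith [(abs_le.mp hA).1, (abs_le.mp hB).2]
  have hfin : (P : ℝ) * (D.g n (D.M * (δ * m)) + D.β * δ * m *
      (D.M ^ 2 * δ ^ 2 * m ^ 2 / 12 + 2 * η * |D.M| * δ * m + η ^ 2)) ≤
      Y / ℓ * (D.y n B - D.y n A) + 1 + (Y + 1) := by
    have hq : 0 ≤ (Y + x) / (ℓ - x) - Y / ℓ := by
      rw [sub_nonneg, div_le_div_iff₀ hℓ (by linarith)]
      nlinarith
    calc _ ≤ (P : ℝ) * (Y + x) := by
          refine mul_le_mul_of_nonneg_left ?_ (Nat.cast_nonneg _)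
          rw [hY]; linarith
      _ ≤ ((D.y n B - D.y n A) / (ℓ - x) + 1) * (Y + x) := by gcongr
      _ = (Y + x) / (ℓ - x) * (D.y n B - D.y n A) + (Y + x) := by ring
      _ ≤ _ := by
          have h1 := mul_le_mul_of_nonneg_left hTR hq
          have h2 : ((Y + x) / (ℓ - x) - Y / ℓ) * |2 * R| ≤ 1 := by linarith
          linarith
  have := En_mono hg (by positivity : 0 ≤ D.β * δ) (D.a n) (D.W n) (le_refl A) hB1
  unfold E
  linarith

end Blow

/-! ### Compactness estimates -/

namespace Blow

variable (D : Blow)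

/-- Index of the cell containing the position `x`. -/
noncomputable def idx (n : ℕ) (x : ℝ) : ℕ := ⌊(D.k n : ℝ) + x / D.δ n⌋₊

lemma y_idx {n : ℕ} (hδ : 0 < D.δ n) {x : ℝ} (hx : -x ≤ D.k n * D.δ n) :
    D.y n (D.idx n x) ≤ x ∧ x < D.y n (D.idx n x) + D.δ n := by
  have h0 : 0 ≤ (D.k n : ℝ) + x / D.δ n := by
    have : (D.k n : ℝ) + x / D.δ n = (D.k n * D.δ n + x) / D.δ n := by field_simp
    rw [this]; apply div_nonneg _ hδ.le; linarith
  have h1 := Nat.floor_le h0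
  have h2 := Nat.lt_floor_add_one ((D.k n : ℝ) + x / D.δ n)
  have e : x / D.δ n * D.δ n = x := by field_simp
  unfold y idx
  constructor
  · nlinarith
  · nlinarith

/-- Sup bound on bounded windows: an energy bound of slope `X1` produces, on both sides of the
window, a cell where `W` is close to the forcing term, and truncation propagates the bound. -/
lemma sup_bound {X0 X1 : ℝ} (h0 : 0 ≤ X0) (h1 : 0 ≤ X1)
    (hup : ∀ R, ∀ᶠ n in atTop, ∀ A B, A < B → |D.y n A| ≤ R → |D.y n B| ≤ R →
      D.E n A B ≤ D.β * D.δ n * (D.W n A - D.a n A) ^ 2 + X1 * (D.y n B - D.y n A) + X0)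
    {R L η : ℝ} (hR : 0 ≤ R) (hL : 0 < L) (hη : 0 < η) :
    ∀ᶠ n in atTop, ∀ i, |D.y n i| ≤ R →
      |D.W n i| ≤ Real.sqrt (2 * (X0 + 2 * X1 * L) / (D.β * L)) + |D.M| * (R + L + 1) + η := by
  have hβ := D.β_pos
  set Q := 2 * (X0 + 2 * X1 * L) / (D.β * L) with hQ
  filter_upwards [hup (R + L + 1), D.basic (R + L + 1), D.δ_lt one_pos, D.dom (R + L + 1),
    D.δ_lt (show 0 < L / 8 by positivity), D.aff (R + L + 1) η hη] with n hup
      ⟨hδ, hg, hlm, hdom⟩ hδ1 hk hδL haff i hi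
  -- a good cell in every interval of length `L`
  have good : ∀ x, |x| ≤ R + L → |x + L| ≤ R + L → ∃ j, x < D.y n j ∧ D.y n (j + 1) ≤ x + L ∧
      |D.W n j - D.a n j| ≤ Real.sqrt Q := by
    intro x hx hxL
    have hk' := hk.1
    have hxa := abs_le.mp hx
    have hxb := abs_le.mp hxL
    obtain ⟨hA1, hA2⟩ := D.y_idx hδ (x := x) (by linarith)
    obtain ⟨hB1, hB2⟩ := D.y_idx hδ (x := x + L) (by linarith)
    set A := D.idx n x
    set B := D.idx n (x + L)
    have hAB : A + 1 < B := by
      by_contra! hc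
      have := D.y_mono hδ hc
      rw [D.y_succ] at this
      linarith
    have hE := hup A B (by omega) (abs_le.mpr ⟨by linarith, by linarith⟩)
      (abs_le.mpr ⟨by linarith, by linarith⟩)
    have hsum : ∑ j ∈ Finset.Ico (A + 1) B, D.β * D.δ n * (D.W n j - D.a n j) ^ 2 ≤
        X0 + 2 * X1 * L := by
      unfold E En at hE
      rw [Finset.sum_eq_sum_Ico_succ_bot (by omega : A < B)] at hE
      have h3 : ∑ j ∈ Finset.Ico (A + 1) B, D.β * D.δ n * (D.W n j - D.a n j) ^ 2 ≤
          ∑ j ∈ Finset.Ico (A + 1) B, (D.g n (D.W n (j + 1) - D.W n j) +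
            D.β * D.δ n * (D.W n j - D.a n j) ^ 2) :=
        Finset.sum_le_sum (fun j _ => by linarith [hg.nonneg (D.W n (j + 1) - D.W n j)])
      have h4 := hg.nonneg (D.W n (A + 1) - D.W n A)
      have h5 : X1 * (D.y n B - D.y n A) ≤ X1 * (2 * L) := by gcongr; linarith
      linarith
    by_contra! hc
    have h6 : ∀ j ∈ Finset.Ico (A + 1) B, D.β * D.δ n * Q ≤
        D.β * D.δ n * (D.W n j - D.a n j) ^ 2 := by
      intro j hj
      rw [Finset.mem_Ico] at hj
      have h7 : x < D.y n j := by
        have := D.y_mono hδ hj.1; rw [D.y_succ] at this; linarith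
      have h8 : D.y n (j + 1) ≤ x + L := (D.y_mono hδ (by omega)).trans hB1
      have h9 := (hc j h7 h8).le
      gcongr
      have h10 := Real.sqrt_le_left (x := Q) (y := |D.W n j - D.a n j|) (abs_nonneg _)
      rw [h10, sq_abs] at h9
      exact h9
    have h11 := (Finset.card_nsmul_le_sum _ _ _ h6).trans hsum
    rw [Nat.card_Ico, nsmul_eq_mul, Nat.cast_sub (by omega)] at h11
    have h12 : ((B : ℝ) - ((A + 1 : ℕ) : ℝ)) * D.δ n = D.y n B - D.y n A - D.δ n := by
      rw [D.y_sub]; push_cast; ring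
    have h13 : 3 / 4 * L * (D.β * Q) ≤ X0 + 2 * X1 * L := by
      refine le_trans ?_ h11
      have : ((B : ℝ) - ((A + 1 : ℕ) : ℝ)) * (D.β * D.δ n * Q) =
        (D.y n B - D.y n A - D.δ n) * (D.β * Q) := by rw [← h12]; ring
      rw [this]
      have : 0 ≤ Q := by positivity
      gcongr
      linarith
    have h14 : L * (D.β * Q) = 2 * (X0 + 2 * X1 * L) := by rw [hQ]; field_simp
    have h15 : X0 + 2 * X1 * L = 0 := le_antisymm (by linarith) (by positivity)
    -- degenerate case: all summands vanish, contradicting the strict inequality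
    have hQ0 : Q = 0 := by rw [hQ, h15]; simp
    have h16 := hc (A + 1) (by rw [D.y_succ]; linarith) ((D.y_mono hδ (by omega)).trans hB1)
    rw [hQ0, Real.sqrt_zero] at h16
    have h17 := Finset.single_le_sum (f := fun j => D.β * D.δ n * (D.W n j - D.a n j) ^ 2)
      (fun j _ => by positivity) (Finset.mem_Ico.mpr ⟨le_rfl, hAB⟩)
    rw [h15] at hsum
    have h18 : 0 < (D.W n (A + 1) - D.a n (A + 1)) ^ 2 := by
      rw [← sq_abs]; positivity
    have h19 : 0 < D.β * D.δ n * (D.W n (A + 1) - D.a n (A + 1)) ^ 2 := by positivity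
    linarith
  have hM := abs_nonneg D.M
  have ha : ∀ j, |D.y n j| ≤ R + L + 1 → |D.a n j| ≤ |D.M| * (R + L + 1) + η := by
    intro j hj
    have h3 := haff j hj
    change |D.a n j - D.M * D.y n j| ≤ η at h3
    have h4 : |D.M * D.y n j| ≤ |D.M| * (R + L + 1) := by rw [abs_mul]; gcongr
    have h5 : D.a n j = (D.a n j - D.M * D.y n j) + D.M * D.y n j := by ring
    rw [h5]
    exact (abs_add_le _ _).trans (by linarith)
  have hs := Real.sqrt_nonneg Q
  have key : ∀ j, |D.y n j| ≤ R + L + 1 → |D.W n j - D.a n j| ≤ Real.sqrt Q →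
      |D.W n j| ≤ Real.sqrt Q + |D.M| * (R + L + 1) + η := by
    intro j hj hW
    have h5 : D.W n j = (D.W n j - D.a n j) + D.a n j := by ring
    rw [h5]
    exact (abs_add_le _ _).trans (by linarith [ha j hj])
  obtain ⟨A, hA1, hA2, hA3⟩ := good (-R - L) (abs_le.mpr ⟨by linarith, by linarith⟩)
    (abs_le.mpr ⟨by linarith, by linarith⟩)
  obtain ⟨B, hB1, hB2, hB3⟩ := good R (abs_le.mpr ⟨by linarith, by linarith⟩)
    (abs_le.mpr ⟨by linarith, by linarith⟩)
  rw [D.y_succ] at hA2 hB2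
  have hii := abs_le.mp hi
  have hAR : |D.y n A| ≤ R + L + 1 := abs_le.mpr ⟨by linarith, by linarith⟩
  have hBR : |D.y n B| ≤ R + L + 1 := abs_le.mpr ⟨by linarith, by linarith⟩
  have hAi : A ≤ i := by rw [← D.y_le_iff hδ]; linarith
  have hiB : i ≤ B := by rw [← D.y_le_iff hδ]; linarith
  refine hlm.abs_le_of_bdry hg (by positivity) (by have := hdom _ hBR; omega) (key A hAR hA3)
    (key B hBR hB3) (fun j h3 h4 => ?_) i hAi hiB
  have := ha j (D.abs_y_le hδ h3.le h4.le hAR hBR)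
  linarith

lemma bdd (R : ℝ) : ∃ C, 0 < C ∧ ∀ᶠ n in atTop, ∀ i, |D.y n i| ≤ R → |D.W n i| ≤ C := by
  have hβ := D.β_pos
  have h := D.sup_bound (X0 := 4 / 3 + D.β * D.M ^ 2 / 12 * 1 ^ 3 + 12)
    (X1 := (4 / 3 + D.β * D.M ^ 2 / 12 * 1 ^ 3) / 1) (by positivity) (by positivity)
    (fun R => D.upper one_pos (by norm_num) (fun η hη => D.gup _ η hη) R) (abs_nonneg R) one_pos
    one_pos
  refine ⟨_, ?_, h.mono fun n hn i hi => hn i (hi.trans (le_abs_self R))⟩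
  have := Real.sqrt_nonneg (2 * (4 / 3 + D.β * D.M ^ 2 / 12 * 1 ^ 3 + 12 +
    2 * ((4 / 3 + D.β * D.M ^ 2 / 12 * 1 ^ 3) / 1) * 1) / (D.β * 1))
  positivity

/-- For `M = 0` the energy bound does not grow with the window, and the blow-ups vanish. -/
lemma zero_lim (hM : D.M = 0) (R : ℝ) {ε : ℝ} (hε : 0 < ε) :
    ∀ᶠ n in atTop, ∀ i, |D.y n i| ≤ R → |D.W n i| ≤ ε := by
  have hβ := D.β_pos
  have h0 : ∀ R, ∀ᶠ n in atTop, ∀ A B, A < B → |D.y n A| ≤ R → |D.y n B| ≤ R →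
      D.E n A B ≤ D.β * D.δ n * (D.W n A - D.a n A) ^ 2 + 0 * (D.y n B - D.y n A) + 12 := by
    intro R
    refine (D.upper one_pos le_rfl (fun η hη => ?_) R).mono fun n hn A B h1 h2 h3 => ?_
    · filter_upwards [D.cost] with n hg h hh
      rw [hM, abs_zero, zero_mul] at hh
      have : h = 0 := abs_nonpos_iff.mp hh
      rw [this, hg.zero]; linarith
    · simpa [hM] using hn A B h1 h2 h3
  have hL : 0 < 96 / (D.β * ε ^ 2) := by positivity
  have h := D.sup_bound (by norm_num) le_rfl h0 (abs_nonneg R) hL (half_pos hε)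
  refine h.mono fun n hn i hi => (hn i (hi.trans (le_abs_self R))).trans ?_
  have e : 2 * ((12 : ℝ) + 2 * 0 * (96 / (D.β * ε ^ 2))) / (D.β * (96 / (D.β * ε ^ 2))) =
      (ε / 2) ^ 2 := by field_simp; ring
  rw [e, Real.sqrt_sq (by positivity), hM]
  simp

lemma ebdd (R : ℝ) : ∃ X, 0 < X ∧ ∀ᶠ n in atTop, ∀ A B, A ≤ B → |D.y n A| ≤ R → |D.y n B| ≤ R →
    D.E n A B ≤ X := by
  have hβ := D.β_pos
  obtain ⟨C, hC, hb⟩ := D.bdd R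
  refine ⟨1 + (4 / 3 + D.β * D.M ^ 2 / 12 * 1 ^ 3) / 1 * (2 * |R|) +
    (4 / 3 + D.β * D.M ^ 2 / 12 * 1 ^ 3 + 12), by positivity, ?_⟩
  have hC' : 0 < C + (|D.M| * |R| + 1) := by positivity
  filter_upwards [hb, D.upper one_pos (by norm_num) (fun η hη => D.gup _ η hη) R, D.aff R 1 one_pos,
    D.δ_pos, D.δ_lt (show 0 < 1 / (D.β * (C + (|D.M| * |R| + 1)) ^ 2) by positivity)]
    with n hb hup haff hδ hδ1 A B hAB hA hB
  rcases hAB.eq_or_lt with rfl | hAB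
  · unfold E En; simp only [Finset.Ico_self, Finset.sum_empty]; positivity
  refine (hup A B hAB hA hB).trans ?_
  have hy : D.y n B - D.y n A ≤ 2 * |R| := by
    linarith [(abs_le.mp hA).1, (abs_le.mp hB).2, le_abs_self R]
  have hW : |D.W n A - D.a n A| ≤ C + (|D.M| * |R| + 1) := by
    have h3 := haff A hA
    change |D.a n A - D.M * D.y n A| ≤ 1 at h3
    have h4 : |D.M * D.y n A| ≤ |D.M| * |R| := by
      rw [abs_mul]; exact mul_le_mul_of_nonneg_left (hA.trans (le_abs_self R)) (abs_nonneg _)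
    have h5 := hb A hA
    have := abs_le.mp h3; have := abs_le.mp h4; have := abs_le.mp h5
    exact abs_le.mpr ⟨by linarith, by linarith⟩
  have h6 : D.β * D.δ n * (D.W n A - D.a n A) ^ 2 ≤ 1 := by
    rw [← sq_abs]
    calc D.β * D.δ n * |D.W n A - D.a n A| ^ 2 ≤
        D.β * D.δ n * (C + (|D.M| * |R| + 1)) ^ 2 := by gcongr
      _ = D.δ n * (D.β * (C + (|D.M| * |R| + 1)) ^ 2) := by ring
      _ ≤ 1 := by rw [lt_div_iff₀ (by positivity)] at hδ1; exact hδ1.le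
  have h7 : (4 / 3 + D.β * D.M ^ 2 / 12 * 1 ^ 3) / 1 * (D.y n B - D.y n A) ≤
    (4 / 3 + D.β * D.M ^ 2 / 12 * 1 ^ 3) / 1 * (2 * |R|) := by gcongr
  linarith

open Classical in
/-- The increments below the jump threshold have vanishing total variation. -/
lemma small_var (R : ℝ) {η : ℝ} (hη : 0 < η) :
    ∀ᶠ n in atTop, ∀ A B, A ≤ B → |D.y n A| ≤ R → |D.y n B| ≤ R →
      ∑ i ∈ Finset.Ico A B, (if D.J n i then 0 else |D.inc n i|) ≤ η := by
  obtain ⟨X, hX, hE⟩ := D.ebdd R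
  have hβ := D.β_pos
  have hη' : 0 < η / (2 * |R| + X) := by positivity
  filter_upwards [hE, D.small _ hη', D.basic R] with n hE hs ⟨hδ, hg, _, _⟩ A B hAB hA hB
  have h1 := hE A B hAB hA hB
  have hy : D.y n B - D.y n A ≤ 2 * |R| := by
    linarith [(abs_le.mp hA).1, (abs_le.mp hB).2, le_abs_self R]
  set ζ := η / (2 * |R| + X) with hζ
  calc ∑ i ∈ Finset.Ico A B, (if D.J n i then 0 else |D.inc n i|)
      ≤ ∑ i ∈ Finset.Ico A B, (ζ * D.δ n + ζ * (D.g n (D.W n (i + 1) - D.W n i) +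
          D.β * D.δ n * (D.W n i - D.a n i) ^ 2)) := by
        refine Finset.sum_le_sum fun i _ => ?_
        have h0 : 0 ≤ ζ * (D.β * D.δ n * (D.W n i - D.a n i) ^ 2) := by positivity
        have h2 := hg.nonneg (D.W n (i + 1) - D.W n i)
        split_ifs with hJ
        · positivity
        · have := hs (D.inc n i) (not_le.mp hJ)
          change |D.inc n i| ≤ ζ * D.δ n + ζ * (D.g n (D.inc n i) + _)
          linarith
    _ = ζ * (D.y n B - D.y n A) + ζ * D.E n A B := by
        rw [Finset.sum_add_distrib, Finset.sum_const, Nat.card_Ico, D.y_sub,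
          nsmul_eq_mul, Nat.cast_sub hAB, ← Finset.mul_sum]
        unfold E En; ring
    _ ≤ ζ * (2 * |R|) + ζ * X := by gcongr
    _ = η := by rw [hζ]; field_simp

/-- Between two jump cells `W` is almost constant. -/
lemma flat (R : ℝ) {η : ℝ} (hη : 0 < η) :
    ∀ᶠ n in atTop, ∀ A B, A ≤ B → |D.y n A| ≤ R → |D.y n B| ≤ R →
      (∀ i, A ≤ i → i < B → ¬ D.J n i) → |D.W n B - D.W n A| ≤ η := by
  filter_upwards [D.small_var R hη] with n hs A B hAB hA hB hJ
  have h := hs A B hAB hA hB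
  refine le_trans ?_ h
  rw [← Finset.sum_Ico_sub (D.W n) hAB]
  refine (Finset.abs_sum_le_sum_abs _ _).trans (Finset.sum_le_sum fun i hi => ?_)
  rw [Finset.mem_Ico] at hi
  rw [if_neg (hJ i hi.1 hi.2)]
  rfl

lemma jump_cost (C : ℝ) {η : ℝ} (hη : 0 < η) :
    ∀ᶠ n in atTop, ∀ h h', |h| ≤ C → D.θ n ≤ |h'| → D.g n h ≤ D.g n h' + η := by
  filter_upwards [D.gup C (η / 2) (half_pos hη), D.glow (η / 2) (half_pos hη)] with n h1 h2 h h' hh hh'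
  linarith [h1 h hh, h2 h' hh']

lemma aff' (R : ℝ) {η : ℝ} (hη : 0 < η) : ∀ᶠ n in atTop, ∀ i, |D.y n i| ≤ R →
    |D.a n i - D.M * D.y n i| ≤ η := D.aff R η hη

end Blow

/-! ### Spacing of the jumps: a priori bounds -/

namespace Blow

variable (D : Blow)

lemma osc (R : ℝ) : ∃ C, 0 < C ∧ ∀ᶠ n in atTop, ∀ i, |D.y n i| ≤ R →
    |D.W n i - D.M * D.y n i| ≤ C ∧ |D.inc n i| ≤ C ∧ |D.W n i - D.a n i| ≤ C := by
  obtain ⟨C, hC, hb⟩ := D.bdd (R + 1)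
  refine ⟨2 * C + |D.M| * |R| + 1, by positivity, ?_⟩
  filter_upwards [hb, D.aff' R one_pos, D.δ_pos, D.δ_lt one_pos] with n hb ha hδ hδ1 i hi
  have h1 := abs_le.mp (hb i (by linarith))
  have hi' := abs_le.mp hi
  have h2 := abs_le.mp (hb (i + 1) (by
    rw [D.y_succ]; exact abs_le.mpr ⟨by linarith, by linarith⟩))
  have h3 := abs_le.mp (ha i hi)
  have h4 : |D.M * D.y n i| ≤ |D.M| * |R| := by
    rw [abs_mul]; exact mul_le_mul_of_nonneg_left (hi.trans (le_abs_self R)) (abs_nonneg _)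
  have h4 := abs_le.mp h4
  have h5 : 0 ≤ |D.M| * |R| := by positivity
  unfold inc
  refine ⟨abs_le.mpr ⟨?_, ?_⟩, abs_le.mpr ⟨?_, ?_⟩, abs_le.mpr ⟨?_, ?_⟩⟩ <;> linarith

/-- Lower bound for the energy of a stretch without interior jumps: the best constant
approximation of a linear function of slope `M` on an interval of length `T` costs
`M² T³ / 12`. -/
lemma piece_lower (R : ℝ) {ε : ℝ} (hε : 0 < ε) :
    ∀ᶠ n in atTop, ∀ A B, A < B → |D.y n A| ≤ R → |D.y n B| ≤ R →
      (∀ i, A < i → i < B → ¬ D.J n i) →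
      D.g n (D.inc n A) + D.β * D.M ^ 2 / 12 * (D.y n B - D.y n A) ^ 3 - ε ≤ D.E n A B := by
  have hβ := D.β_pos
  obtain ⟨C, hC, hosc⟩ := D.osc R
  set b := D.β * D.M ^ 2 / 12 with hb
  have hb0 : 0 ≤ b := by positivity
  obtain ⟨η, hη, hηC, hηε⟩ : ∃ η : ℝ, 0 < η ∧ η ≤ C ∧ D.β * (2 * |R|) * (6 * C) * η ≤ ε / 2 := by
    refine ⟨min C (ε / (2 * (D.β * (2 * |R|) * (6 * C) + 1))), by positivity, min_le_left _ _, ?_⟩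
    calc _ ≤ D.β * (2 * |R|) * (6 * C) * (ε / (2 * (D.β * (2 * |R|) * (6 * C) + 1))) := by
          gcongr; exact min_le_right _ _
      _ = ε / 2 * ((D.β * (2 * |R|) * (6 * C)) / (D.β * (2 * |R|) * (6 * C) + 1)) := by
          field_simp
      _ ≤ ε / 2 * 1 := by
          gcongr; rw [div_le_one (by positivity)]; linarith
      _ = ε / 2 := mul_one _
  have hδε : 0 < ε / (2 * (b * (3 * (2 * |R|) ^ 2 + 2 * |R|) + 1)) := by positivity
  filter_upwards [hosc, D.flat R hη, D.aff' R hη, D.basic R, D.δ_lt one_pos, D.δ_lt hδε]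
    with n hosc hflat haff ⟨hδ, hg, _, _⟩ hδ1 hδε A B hAB hA hB hJ
  set δ := D.δ n with hδdef
  set T := D.y n B - D.y n A with hT
  have hTR : T ≤ 2 * |R| := by
    linarith [(abs_le.mp hA).1, (abs_le.mp hB).2, le_abs_self R]
  obtain ⟨m, rfl⟩ : ∃ m, B = A + 1 + m := ⟨B - (A + 1), by omega⟩
  have hTm : T = m * δ + δ := by rw [hT, D.y_sub]; push_cast; ring
  have hT0 : 0 ≤ T := by rw [hTm]; positivity
  set x := D.W n (A + 1) - D.M * D.y n (A + 1) with hx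
  have hterm : ∀ r ∈ Finset.range m, D.β * δ * ((x + (-(D.M * δ)) * r) ^ 2 - 6 * C * η) ≤
      D.β * δ * (D.W n (A + 1 + r) - D.a n (A + 1 + r)) ^ 2 := by
    intro r hr
    rw [Finset.mem_range] at hr
    have hw : ∀ j, A + 1 ≤ j → j ≤ A + 1 + m → |D.y n j| ≤ R := fun j h1 h2 =>
      D.abs_y_le hδ (by omega) h2 hA hB
    have h1 := hflat (A + 1) (A + 1 + r) (by omega) (hw _ le_rfl (by omega))
      (hw _ (by omega) (by omega)) (fun i h2 h3 => hJ i (by omega) (by omega))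
    have h2 := haff (A + 1 + r) (hw _ (by omega) (by omega))
    have h3 := (hosc (A + 1 + r) (hw _ (by omega) (by omega))).2.2
    have h4 : D.y n (A + 1 + r) = D.y n (A + 1) + r * δ := by
      have := D.y_sub n (A + 1) (A + 1 + r)
      push_cast at this ⊢; linarith
    have h5 : |(x + (-(D.M * δ)) * r) - (D.W n (A + 1 + r) - D.a n (A + 1 + r))| ≤ 2 * η := by
      have e : (x + (-(D.M * δ)) * r) - (D.W n (A + 1 + r) - D.a n (A + 1 + r)) =
        -(D.W n (A + 1 + r) - D.W n (A + 1)) +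
          (D.a n (A + 1 + r) - D.M * D.y n (A + 1 + r)) := by rw [hx, h4]; ring
      rw [e]
      refine (abs_add_le _ _).trans ?_
      rw [abs_neg]; linarith
    have h6 := (hosc (A + 1 + r) (hw _ (by omega) (by omega))).1
    have h6' := (hosc (A + 1) (hw _ le_rfl (by omega))).1
    gcongr
    set v := D.W n (A + 1 + r) - D.a n (A + 1 + r)
    set z := x + (-(D.M * δ)) * r
    have hz : |z| ≤ C + η := by
      have e : z = (D.W n (A + 1 + r) - D.M * D.y n (A + 1 + r)) -
        (D.W n (A + 1 + r) - D.W n (A + 1)) := by simp only [z]; rw [hx, h4]; ring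
      rw [e]
      exact (abs_sub _ _).trans (by linarith)
    have h7 : |z ^ 2 - v ^ 2| ≤ (2 * η) * |z + v| := by
      have : z ^ 2 - v ^ 2 = (z - v) * (z + v) := by ring
      rw [this, abs_mul]; gcongr
    have h8 : |z + v| ≤ 3 * C := (abs_add_le _ _).trans (by linarith)
    have h9 := (abs_le.mp h7).2
    have h10 : (2 * η) * |z + v| ≤ (2 * η) * (3 * C) := by gcongr
    linarith
  have hsum := Finset.sum_le_sum hterm
  rw [← Finset.mul_sum, Finset.sum_sub_distrib, sum_sq_affine, Finset.sum_const, Finset.card_range,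
    nsmul_eq_mul] at hsum
  have hE : D.g n (D.inc n A) + ∑ r ∈ Finset.range m,
      D.β * δ * (D.W n (A + 1 + r) - D.a n (A + 1 + r)) ^ 2 ≤ D.E n A (A + 1 + m) := by
    unfold E En
    rw [Finset.sum_eq_sum_Ico_succ_bot (by omega)]
    have e : ∑ i ∈ Finset.Ico (A + 1) (A + 1 + m), (D.g n (D.W n (i + 1) - D.W n i) +
        D.β * D.δ n * (D.W n i - D.a n i) ^ 2) = ∑ r ∈ Finset.range m,
        (D.g n (D.W n (A + 1 + r + 1) - D.W n (A + 1 + r)) +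
          D.β * D.δ n * (D.W n (A + 1 + r) - D.a n (A + 1 + r)) ^ 2) := by
      rw [Finset.sum_Ico_eq_sum_range]; simp
    rw [e]
    have h2 : 0 ≤ D.β * D.δ n * (D.W n A - D.a n A) ^ 2 := by positivity
    have h3 := Finset.sum_le_sum (s := Finset.range m)
      (f := fun r => D.β * δ * (D.W n (A + 1 + r) - D.a n (A + 1 + r)) ^ 2)
      (g := fun r => D.g n (D.W n (A + 1 + r + 1) - D.W n (A + 1 + r)) +
          D.β * D.δ n * (D.W n (A + 1 + r) - D.a n (A + 1 + r)) ^ 2)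
      (fun r _ => le_add_of_nonneg_left (hg.nonneg _))
    change D.g n (D.W n (A + 1) - D.W n A) + _ ≤ _
    linarith
  have hmain : b * T ^ 3 - ε ≤ D.β * δ * (m * (x + -(D.M * δ) * (m - 1) / 2) ^ 2 +
      (-(D.M * δ)) ^ 2 * (m * (m ^ 2 - 1)) / 12 - m * (6 * C * η)) := by
    have h1 : D.β * δ * (m * (x + -(D.M * δ) * (m - 1) / 2) ^ 2 +
      (-(D.M * δ)) ^ 2 * (m * (m ^ 2 - 1)) / 12 - m * (6 * C * η)) =
      D.β * δ * m * (x + -(D.M * δ) * (m - 1) / 2) ^ 2 + b * ((T - δ) ^ 3 - δ ^ 2 * (T - δ)) -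
        D.β * (T - δ) * (6 * C) * η := by
      rw [hTm, hb]; ring
    rw [h1]
    have h2 : 0 ≤ D.β * δ * m * (x + -(D.M * δ) * (m - 1) / 2) ^ 2 := by positivity
    have h3 : D.β * (T - δ) * (6 * C) * η ≤ ε / 2 := by
      refine le_trans ?_ hηε
      gcongr; linarith
    have h4 : b * T ^ 3 - ε / 2 ≤ b * ((T - δ) ^ 3 - δ ^ 2 * (T - δ)) := by
      have h5 : T ^ 3 - ((T - δ) ^ 3 - δ ^ 2 * (T - δ)) ≤ δ * (3 * T ^ 2 + T) := by
        have : T ^ 3 - ((T - δ) ^ 3 - δ ^ 2 * (T - δ)) = δ * (3 * T ^ 2 - 2 * δ * T) := by ring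
        rw [this]
        have h8 : 0 ≤ δ * T := by positivity
        gcongr
        linarith
      have h6 : b * (δ * (3 * T ^ 2 + T)) ≤ ε / 2 := by
        calc b * (δ * (3 * T ^ 2 + T)) ≤ b * (δ * (3 * (2 * |R|) ^ 2 + 2 * |R|)) := by gcongr
          _ ≤ b * (δ * (3 * (2 * |R|) ^ 2 + 2 * |R|)) + δ := by linarith
          _ = δ * (b * (3 * (2 * |R|) ^ 2 + 2 * |R|) + 1) := by ring
          _ ≤ ε / 2 := by
            rw [lt_div_iff₀ (by positivity)] at hδε; linarith
      have h7 := mul_le_mul_of_nonneg_left h5 hb0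
      rw [mul_sub] at h7
      linarith
    linarith
  linarith

/-- Two jumps cannot be too close: removing one of them would save energy. -/
lemma gap_lower (R : ℝ) : ∃ c, 0 < c ∧ ∀ᶠ n in atTop, ∀ p q, p < q → |D.y n p| ≤ R →
    |D.y n q| ≤ R → D.J n p → D.J n q → c ≤ D.y n q - D.y n p := by
  have hβ := D.β_pos
  obtain ⟨C, hC, hosc⟩ := D.osc R
  refine ⟨1 / (2 * (D.β * (3 * C ^ 2))), by positivity, ?_⟩
  filter_upwards [hosc, D.basic R, D.jump_cost (2 * C) (show (0 : ℝ) < 1 / 2 by norm_num),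
    D.glow (1 / 3) (by norm_num)] with n hosc ⟨hδ, hg, hlm, hdom⟩ hjc hlow p q hpq hp hq hJp hJq
  have h := hlm.shift hpq (hdom q hq) (-(D.inc n p))
  change D.g n (D.inc n p) + D.g n (D.inc n q) ≤ D.g n (D.inc n p + -D.inc n p) +
    D.g n (D.inc n q - -D.inc n p) + _ at h
  rw [add_neg_cancel, hg.zero] at h
  have h1 := hjc (D.inc n q - -D.inc n p) (D.inc n q) (by
    rw [sub_neg_eq_add]
    exact (abs_add_le _ _).trans (by linarith [(hosc q hq).2.1, (hosc p hp).2.1])) hJq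
  have h2 := hlow _ hJp
  have h3 : ∑ i ∈ Finset.Ico (p + 1) (q + 1),
      (2 * -D.inc n p * (D.W n i - D.a n i) + (-D.inc n p) ^ 2) ≤ ((q : ℝ) - p) * (3 * C ^ 2) := by
    have : ∀ i ∈ Finset.Ico (p + 1) (q + 1),
      (2 * -D.inc n p * (D.W n i - D.a n i) + (-D.inc n p) ^ 2) ≤ 3 * C ^ 2 := by
      intro i hi
      rw [Finset.mem_Ico] at hi
      have h4 := (hosc p hp).2.1
      have h5 := (hosc i (D.abs_y_le hδ (by omega) (by omega) hp hq)).2.2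
      have h6 : |D.inc n p * (D.W n i - D.a n i)| ≤ C * C := by rw [abs_mul]; gcongr
      have h7 : (D.inc n p) ^ 2 ≤ C ^ 2 := by rw [← sq_abs]; gcongr
      have := (abs_le.mp h6).1
      nlinarith
    refine (Finset.sum_le_card_nsmul _ _ _ this).trans ?_
    rw [Nat.card_Ico, nsmul_eq_mul, Nat.cast_sub (by omega)]
    push_cast
    simp
  have h4 := mul_le_mul_of_nonneg_left h3 (by positivity : 0 ≤ D.β * D.δ n)
  have h5 : D.β * D.δ n * (((q : ℝ) - p) * (3 * C ^ 2)) =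
    (D.y n q - D.y n p) * (D.β * (3 * C ^ 2)) := by rw [D.y_sub]; ring
  rw [div_le_iff₀ (by positivity)]
  linarith

/-- Energy bound with constants independent of the window. -/
lemma energy_upper {ℓ : ℝ} (hℓ : 0 < ℓ) (R : ℝ) :
    ∀ᶠ n in atTop, ∀ A B, A < B → |D.y n A| ≤ R → |D.y n B| ≤ R →
      D.E n A B ≤ (4 / 3 + D.β * D.M ^ 2 / 12 * ℓ ^ 3) / ℓ * (D.y n B - D.y n A) +
        (4 / 3 + D.β * D.M ^ 2 / 12 * ℓ ^ 3 + 13) := by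
  have hβ := D.β_pos
  obtain ⟨C, hC, hosc⟩ := D.osc R
  filter_upwards [hosc, D.upper hℓ (by norm_num) (fun η hη => D.gup _ η hη) R,
    D.δ_pos, D.δ_lt (show 0 < 1 / (D.β * C ^ 2) by positivity)]
    with n hosc hup hδ hδ1 A B hAB hA hB
  have h := hup A B hAB hA hB
  have h6 : D.β * D.δ n * (D.W n A - D.a n A) ^ 2 ≤ 1 := by
    rw [← sq_abs]
    calc D.β * D.δ n * |D.W n A - D.a n A| ^ 2 ≤
        D.β * D.δ n * C ^ 2 := by gcongr; exact (hosc A hA).2.2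
      _ = D.δ n * (D.β * C ^ 2) := by ring
      _ ≤ 1 := by rw [lt_div_iff₀ (by positivity)] at hδ1; exact hδ1.le
  linarith

/-- Stretches without jumps have bounded length, uniformly in the window. -/
lemma gap_upper (hM : D.M ≠ 0) : ∃ G, 0 < G ∧ ∀ R, ∀ᶠ n in atTop, ∀ A B, A < B → |D.y n A| ≤ R →
    |D.y n B| ≤ R → G ≤ D.y n B - D.y n A → ∃ i, A < i ∧ i < B ∧ D.J n i := by
  have hβ := D.β_pos
  have hM2 : 0 < D.M ^ 2 := by positivity
  set b := D.β * D.M ^ 2 / 12 with hb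
  have hb0 : 0 < b := by positivity
  refine ⟨1 + (((4 / 3 + b) + (4 / 3 + b + 13) + 2) / b), by positivity, fun R => ?_⟩
  filter_upwards [D.energy_upper one_pos R, D.piece_lower R one_pos, D.basic R]
    with n hup hlow ⟨_, hg, _, _⟩ A B hAB hA hB hG
  by_contra! hc
  have h1 := hup A B hAB hA hB
  have h2 := hlow A B hAB hA hB (fun i h h' => hc i h h')
  have h3 := hg.nonneg (D.inc n A)
  set T := D.y n B - D.y n A
  have hT : 1 ≤ T := le_trans (by
    have : 0 ≤ ((4 / 3 + b) + (4 / 3 + b + 13) + 2) / b := by positivity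
    linarith) hG
  rw [← hb] at h1 h2
  have h4 : b + (4 / 3 + b) + (4 / 3 + b + 13) + 2 ≤ b * T := by
    have := mul_le_mul_of_nonneg_left hG hb0.le
    rw [mul_add, mul_div_cancel₀ _ hb0.ne'] at this
    linarith
  have h5 : (b + (4 / 3 + b) + (4 / 3 + b + 13) + 2) * T ^ 2 ≤ b * T ^ 3 := by
    have := mul_le_mul_of_nonneg_right h4 (sq_nonneg T)
    nlinarith
  have h6 : T ≤ T ^ 2 := by nlinarith
  norm_num at h1
  nlinarith

/-- `p < q` are consecutive jump cells. -/
def Cons (n p q : ℕ) : Prop := p < q ∧ D.J n p ∧ D.J n q ∧ ∀ i, p < i → i < q → ¬ D.J n i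

lemma surround (hM : D.M ≠ 0) : ∃ G, 0 < G ∧ ∀ R, ∀ᶠ n in atTop, ∀ i, |D.y n i| ≤ R →
    ∃ p q, D.Cons n p q ∧ p < i ∧ i ≤ q ∧ D.y n i - G ≤ D.y n p ∧ D.y n q ≤ D.y n i + G := by
  classical
  obtain ⟨G, hG, hgap⟩ := D.gap_upper hM
  refine ⟨G + 1, by positivity, fun R => ?_⟩
  filter_upwards [hgap (R + G + 1), D.basic R, D.δ_lt one_pos, D.dom (R + G + 1)]
    with n hgap ⟨hδ, _, _, _⟩ hδ1 hdom i hi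
  have hi' := abs_le.mp hi
  have hd := hdom.1
  obtain ⟨hA1, hA2⟩ := D.y_idx hδ (x := D.y n i - G) (by linarith)
  obtain ⟨hB1, hB2⟩ := D.y_idx hδ (x := D.y n i + G + 1) (by linarith)
  set A := D.idx n (D.y n i - G)
  set B := D.idx n (D.y n i + G + 1)
  have hAi : A < i := by
    by_contra! hc
    have := D.y_mono hδ hc
    linarith
  have hiB : i < B := by
    by_contra! hc
    have := D.y_mono hδ hc
    linarith
  obtain ⟨j, hj1, hj2, hj3⟩ := hgap A i hAi (abs_le.mpr ⟨by linarith, by linarith⟩)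
    (by linarith) (by linarith)
  obtain ⟨l, hl1, hl2, hl3⟩ := hgap i B hiB (by linarith)
    (abs_le.mpr ⟨by linarith, by linarith⟩) (by linarith)
  have hex : ∃ q, i ≤ q ∧ D.J n q := ⟨l, hl1.le, hl3⟩
  have hp := Nat.findGreatest_spec (P := fun m => D.J n m) (n := i - 1) (m := j) (by omega) hj3
  have hpj := Nat.le_findGreatest (P := fun m => D.J n m) (n := i - 1) (m := j) (by omega) hj3
  have hpi := Nat.findGreatest_le (P := fun m => D.J n m) (i - 1)
  have hmax : ∀ m, Nat.findGreatest (fun m => D.J n m) (i - 1) < m → m ≤ i - 1 → ¬ D.J n m :=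
    fun m h1 h2 => Nat.findGreatest_is_greatest h1 h2
  set p := Nat.findGreatest (fun m => D.J n m) (i - 1)
  have hq := Nat.find_spec hex
  have hql := Nat.find_min' hex ⟨hl1.le, hl3⟩
  have hmin := fun m => Nat.find_min hex (m := m)
  set q := Nat.find hex
  refine ⟨p, q, ⟨by omega, hp, hq.2, fun m h1 h2 hm => ?_⟩, by omega, hq.1, ?_, ?_⟩
  · rcases lt_or_ge m i with h | h
    · exact hmax m h1 (by omega) hm
    · exact hmin m h2 ⟨h, hm⟩
  · have := D.y_mono hδ (show A ≤ p by omega)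
    linarith
  · have := D.y_mono hδ (show q ≤ B by omega)
    linarith

end Blow

/-! ### Stationarity: position of the plateaus and equality of consecutive gaps -/

namespace Blow

variable (D : Blow)

lemma sum_y (n p m : ℕ) : ∑ i ∈ Finset.Ico (p + 1) (p + m + 1), D.y n i =
    m * ((D.y n p + D.y n (p + m) + D.δ n) / 2) := by
  induction m with
  | zero => simp
  | succ m ih =>
    rw [← add_assoc, Finset.sum_Ico_succ_top (by omega), ih]
    unfold y
    push_cast
    ring

/-- Stationarity with respect to vertical shifts of a plateau: its height is the value of the
linear forcing term at its midpoint. -/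
lemma plateau (R : ℝ) {ε : ℝ} (hε : 0 < ε) : ∀ᶠ n in atTop, ∀ p q, D.Cons n p q →
    |D.y n p| ≤ R → |D.y n q| ≤ R → ∀ i, p < i → i ≤ q →
      |D.W n i - D.M * ((D.y n p + D.y n q) / 2)| ≤ ε := by
  have hβ := D.β_pos
  obtain ⟨C, hC, hosc⟩ := D.osc R
  obtain ⟨c, hc, hgap⟩ := D.gap_lower R
  filter_upwards [hosc, hgap, D.basic R, D.flat R (show 0 < ε / 4 by positivity),
    D.aff' R (show 0 < ε / 4 by positivity),
    D.jump_cost (2 * C) (show 0 < D.β * c * ε ^ 2 / 32 by positivity),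
    D.δ_lt (show 0 < ε / (2 * (|D.M| + 1)) by positivity)] with n hosc hgap ⟨hδ, hg, hlm, hdom⟩
      hflat haff hjc hδε p q ⟨hpq, hJp, hJq, hno⟩ hp hq i hpi hiq
  obtain ⟨m, rfl⟩ : ∃ m, q = p + m := ⟨q - p, by omega⟩
  have hm : (0 : ℝ) < m := by
    have : 0 < m := by omega
    exact_mod_cast this
  have hw : ∀ j, p ≤ j → j ≤ p + m → |D.y n j| ≤ R := fun j h1 h2 => D.abs_y_le hδ h1 h2 hp hq
  have hcard : ((Finset.Ico (p + 1) (p + m + 1)).card : ℝ) = m := by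
    rw [Nat.card_Ico]; congr 1; omega
  set S := ∑ j ∈ Finset.Ico (p + 1) (p + m + 1), (D.W n j - D.a n j) with hS
  set d := S / m with hd
  have hSd : S = m * d := by rw [hd]; field_simp
  have hdC : |d| ≤ C := by
    rw [hd, abs_div, abs_of_pos hm, div_le_iff₀ hm, mul_comm]
    refine (Finset.abs_sum_le_sum_abs _ _).trans ?_
    rw [← hcard, ← nsmul_eq_mul]
    refine Finset.sum_le_card_nsmul _ _ _ fun j hj => ?_
    rw [Finset.mem_Ico] at hj
    exact (hosc j (hw j (by omega) (by omega))).2.2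
  have hsh := hlm.shift hpq (hdom _ hq) (-d)
  change D.g n (D.inc n p) + D.g n (D.inc n (p + m)) ≤ D.g n (D.inc n p + -d) +
    D.g n (D.inc n (p + m) - -d) + _ at hsh
  have e1 : ∑ j ∈ Finset.Ico (p + 1) (p + m + 1), (2 * -d * (D.W n j - D.a n j) + (-d) ^ 2) =
      -(m * d ^ 2) := by
    rw [Finset.sum_add_distrib, ← Finset.mul_sum, ← hS, Finset.sum_const, nsmul_eq_mul, hcard, hSd]
    ring
  rw [e1] at hsh
  have h1 := hjc (D.inc n p + -d) _ ((abs_add_le _ _).trans (by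
    rw [abs_neg]; linarith [(hosc p hp).2.1])) hJp
  have h2 := hjc (D.inc n (p + m) - -d) _ (by
    rw [sub_neg_eq_add]; exact (abs_add_le _ _).trans (by linarith [(hosc _ hq).2.1])) hJq
  have hg' := hgap p (p + m) hpq hp hq hJp hJq
  have h3 : D.β * c * d ^ 2 ≤ D.β * c * (ε / 4) ^ 2 := by
    have e2 : D.β * D.δ n * (m * d ^ 2) = D.β * (D.y n (p + m) - D.y n p) * d ^ 2 := by
      rw [D.y_sub]; push_cast; ring
    have h4 : D.β * c * d ^ 2 ≤ D.β * (D.y n (p + m) - D.y n p) * d ^ 2 := by gcongr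
    linarith
  have hdε : |d| ≤ ε / 4 := by
    have := le_of_mul_le_mul_left h3 (by positivity)
    exact abs_le_of_sq_le_sq this (by positivity)
  -- compare `W n i` with the average over the plateau
  have h5 : |m * (D.W n i - D.M * ((D.y n p + D.y n (p + m) + D.δ n) / 2)) - S| ≤
      m * (ε / 2) := by
    have e3 : m * (D.W n i - D.M * ((D.y n p + D.y n (p + m) + D.δ n) / 2)) - S =
        ∑ j ∈ Finset.Ico (p + 1) (p + m + 1),
          ((D.W n i - D.W n j) + (D.a n j - D.M * D.y n j)) := by
      have e4 : ∑ j ∈ Finset.Ico (p + 1) (p + m + 1),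
          ((D.W n i - D.W n j) + (D.a n j - D.M * D.y n j)) =
          ∑ j ∈ Finset.Ico (p + 1) (p + m + 1),
            (D.W n i - D.M * D.y n j - (D.W n j - D.a n j)) := by
        refine Finset.sum_congr rfl fun j _ => by ring
      rw [e4, Finset.sum_sub_distrib, Finset.sum_sub_distrib, ← Finset.mul_sum, D.sum_y,
        Finset.sum_const, nsmul_eq_mul, hcard]
      ring
    rw [e3]
    refine (Finset.abs_sum_le_sum_abs _ _).trans ?_
    rw [← hcard, ← nsmul_eq_mul]
    refine Finset.sum_le_card_nsmul _ _ _ fun j hj => ?_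
    rw [Finset.mem_Ico] at hj
    refine (abs_add_le _ _).trans ?_
    have h6 := haff j (hw j (by omega) (by omega))
    have h7 : |D.W n i - D.W n j| ≤ ε / 4 := by
      rcases le_total j i with h | h
      · exact hflat j i h (hw j (by omega) (by omega)) (hw i (by omega) hiq)
          (fun l h1 h2 => hno l (by omega) (by omega))
      · rw [abs_sub_comm]
        exact hflat i j h (hw i (by omega) hiq) (hw j (by omega) (by omega))
          (fun l h1 h2 => hno l (by omega) (by omega))
    linarith
  have h8 : |D.W n i - D.M * ((D.y n p + D.y n (p + m) + D.δ n) / 2) - d| ≤ ε / 2 := by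
    have e5 : m * (D.W n i - D.M * ((D.y n p + D.y n (p + m) + D.δ n) / 2)) - S =
      m * (D.W n i - D.M * ((D.y n p + D.y n (p + m) + D.δ n) / 2) - d) := by rw [hSd]; ring
    rw [e5, abs_mul, abs_of_pos hm] at h5
    exact le_of_mul_le_mul_left h5 hm
  have h9 : |D.M * (D.δ n / 2)| ≤ ε / 4 := by
    rw [abs_mul, abs_of_pos (half_pos hδ)]
    rw [lt_div_iff₀ (by positivity)] at hδε
    nlinarith [abs_nonneg D.M]
  have e6 : D.W n i - D.M * ((D.y n p + D.y n (p + m)) / 2) =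
    (D.W n i - D.M * ((D.y n p + D.y n (p + m) + D.δ n) / 2) - d) + d + D.M * (D.δ n / 2) := by
    ring
  rw [e6]
  refine (abs_add_le _ _).trans ?_
  have := abs_add_le (D.W n i - D.M * ((D.y n p + D.y n (p + m) + D.δ n) / 2) - d) d
  linarith

/-- Stationarity with respect to horizontal shifts of a jump: the forcing term takes at the jump
the mean of the two adjacent values. -/
lemma jump_pos (R : ℝ) {σ : ℝ} (hσ : 0 < σ) : ∀ᶠ n in atTop, ∀ p q r, D.Cons n p q →
    D.Cons n q r → |D.y n p| ≤ R → |D.y n r| ≤ R →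
      |D.inc n q * (D.W n q + D.W n (q + 1) - 2 * (D.M * D.y n q))| ≤ σ := by
  have hβ := D.β_pos
  obtain ⟨C, hC, hosc⟩ := D.osc R
  obtain ⟨c, hc, hgap⟩ := D.gap_lower R
  -- the jump is moved by a distance between `ρ / 2` and `ρ`
  obtain ⟨ρ, hρ, hρc, hρσ⟩ : ∃ ρ : ℝ, 0 < ρ ∧ ρ ≤ c / 2 ∧ C * (2 * (|D.M| * ρ)) ≤ σ / 4 := by
    refine ⟨min (c / 2) (σ / (8 * C * (|D.M| + 1))), by positivity, min_le_left _ _, ?_⟩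
    calc C * (2 * (|D.M| * min (c / 2) (σ / (8 * C * (|D.M| + 1))))) ≤
        C * (2 * ((|D.M| + 1) * (σ / (8 * C * (|D.M| + 1))))) := by
          gcongr
          · linarith
          · exact min_le_right _ _
      _ = σ / 4 := by field_simp; norm_num
  obtain ⟨η, hη, hησ⟩ : ∃ η : ℝ, 0 < η ∧ η * (2 / (D.β * ρ) + 4 * C) ≤ σ / 2 := by
    refine ⟨σ / (2 * (2 / (D.β * ρ) + 4 * C)), by positivity, le_of_eq ?_⟩
    have : 0 < 2 / (D.β * ρ) + 4 * C := by positivity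
    field_simp
  filter_upwards [hosc, hgap, D.basic R, D.flat R hη, D.aff' R hη, D.jump_cost (2 * C) hη,
    D.δ_lt (show 0 < ρ / 2 by positivity)] with n hosc hgap ⟨hδ, hg, hlm, hdom⟩
      hflat haff hjc hδρ p q r ⟨hpq, hJp, hJq, hno⟩ ⟨hqr, _, hJr, hno'⟩ hp hr
  have hw : ∀ j, p ≤ j → j ≤ r → |D.y n j| ≤ R := fun j h1 h2 => D.abs_y_le hδ h1 h2 hp hr
  have hq := hw q hpq.le hqr.le
  set m := ⌊ρ / D.δ n⌋₊ with hm
  have hmρ : m * D.δ n ≤ ρ := by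
    have := Nat.floor_le (show 0 ≤ ρ / D.δ n by positivity)
    rwa [le_div_iff₀ hδ] at this
  have hmρ' : ρ / 2 ≤ m * D.δ n := by
    have := Nat.lt_floor_add_one (ρ / D.δ n)
    rw [div_lt_iff₀ hδ] at this
    linarith
  have hm0 : 0 < m := by
    rcases Nat.eq_zero_or_pos m with h | h
    · rw [h] at hmρ'; simp at hmρ'; linarith
    · exact h
  have hg1 := hgap p q hpq hp hq hJp hJq
  have hg2 := hgap q r hqr hq hr hJq hJr
  have hmr : q + m < r := by
    by_contra! h
    have h1 := D.y_mono hδ h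
    have h2 := D.y_sub n q (q + m)
    push_cast at h2
    linarith
  have hpm : p + m < q := by
    by_contra! h
    have h1 := D.y_mono hδ h
    have h2 := D.y_sub n p (p + m)
    push_cast at h2
    linarith
  set s := D.inc n q with hs
  have hsC : |s| ≤ C := (hosc q hq).2.1
  -- common estimate for the two comparisons
  have key : ∀ (F : Finset ℕ) (t ω : ℝ), |t| ≤ C → F.card = m →
      (∀ i ∈ F, |D.W n i - ω| ≤ η ∧ |D.y n i - D.y n q| ≤ ρ ∧ |D.y n i| ≤ R) →
      0 ≤ η + D.β * D.δ n * ∑ i ∈ F, (2 * t * (D.W n i - D.a n i) + t ^ 2) →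
      -(t * (2 * ω + t - 2 * (D.M * D.y n q))) ≤ σ := by
    intro F t ω ht hF hFi h0
    have h1 : ∑ i ∈ F, (2 * t * (D.W n i - D.a n i) + t ^ 2) ≤
        F.card • (t * (2 * ω + t - 2 * (D.M * D.y n q)) + C * (2 * (2 * η + |D.M| * ρ))) := by
      refine Finset.sum_le_card_nsmul _ _ _ fun i hi => ?_
      obtain ⟨h2, h3, h4⟩ := hFi i hi
      have h5 := haff i h4
      have h6 : |D.M * (D.y n i - D.y n q)| ≤ |D.M| * ρ := by rw [abs_mul]; gcongr
      have h7 : |(D.W n i - ω) - (D.a n i - D.M * D.y n i) - D.M * (D.y n i - D.y n q)| ≤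
          2 * η + |D.M| * ρ := by
        refine (abs_sub _ _).trans ?_
        have := abs_sub (D.W n i - ω) (D.a n i - D.M * D.y n i)
        linarith
      have h8 : |t * (2 * ((D.W n i - ω) - (D.a n i - D.M * D.y n i) -
          D.M * (D.y n i - D.y n q)))| ≤ C * (2 * (2 * η + |D.M| * ρ)) := by
        rw [abs_mul, abs_mul, abs_two]; gcongr
      have := (abs_le.mp h8).2
      linarith
    rw [hF, nsmul_eq_mul] at h1
    have h2 := mul_le_mul_of_nonneg_left h1 (by positivity : 0 ≤ D.β * D.δ n)
    set Z := t * (2 * ω + t - 2 * (D.M * D.y n q)) + C * (2 * (2 * η + |D.M| * ρ)) with hZ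
    have h3 : 0 ≤ η + D.β * (m * D.δ n) * Z := by
      have : D.β * D.δ n * (m * Z) = D.β * (m * D.δ n) * Z := by ring
      linarith
    have h4 : -Z ≤ η * (2 / (D.β * ρ)) := by
      rcases le_or_gt 0 Z with h | h
      · have : 0 ≤ η * (2 / (D.β * ρ)) := by positivity
        linarith
      · rw [mul_div_assoc', le_div_iff₀ (by positivity)]
        have h5 : D.β * (ρ / 2) * (-Z) ≤ D.β * (m * D.δ n) * (-Z) := by
          gcongr
          linarith
        linarith
    linarith
  rw [abs_le]
  constructor
  · -- moving the jump to the left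
    have hsh := hlm.shift (p := q - m) (q := q) (by omega) (hdom _ hq) s
    change D.g n (D.inc n (q - m)) + D.g n s ≤ D.g n (D.inc n (q - m) + s) + D.g n (s - s) + _
      at hsh
    rw [sub_self, hg.zero] at hsh
    have h1 := hjc (D.inc n (q - m) + s) s ((abs_add_le _ _).trans (by
      linarith [(hosc (q - m) (hw _ (by omega) (by omega))).2.1])) hJq
    have h2 := hg.nonneg (D.inc n (q - m))
    have h3 := key (Finset.Ico (q - m + 1) (q + 1)) s (D.W n q) hsC (by
      rw [Nat.card_Ico]; omega) (fun i hi => by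
        rw [Finset.mem_Ico] at hi
        have hwi := hw i (by omega) (by omega)
        refine ⟨?_, ?_, hwi⟩
        · rw [abs_sub_comm]
          exact hflat i q (by omega) hwi hq (fun l h1 h2 => hno l (by omega) (by omega))
        · rw [D.y_sub, abs_mul, abs_of_pos hδ]
          refine le_trans ?_ hmρ
          gcongr
          have h4 : (i : ℝ) ≤ q := by exact_mod_cast (by omega : i ≤ q)
          have h5 : (q : ℝ) ≤ i + m := by exact_mod_cast (by omega : q ≤ i + m)
          exact abs_le.mpr ⟨by linarith, by linarith⟩) (by linarith)
    have e : D.W n (q + 1) = D.W n q + s := by rw [hs, inc]; ring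
    rw [e]
    have e2 : s * (D.W n q + (D.W n q + s) - 2 * (D.M * D.y n q)) =
      s * (2 * D.W n q + s - 2 * (D.M * D.y n q)) := by ring
    rw [e2]; linarith
  · -- moving the jump to the right
    have hsh := hlm.shift (p := q) (q := q + m) (by omega) (hdom _ (hw _ (by omega) hmr.le)) (-s)
    change D.g n s + D.g n (D.inc n (q + m)) ≤ D.g n (s + -s) + D.g n (D.inc n (q + m) - -s) + _
      at hsh
    rw [add_neg_cancel, hg.zero, sub_neg_eq_add] at hsh
    have h1 := hjc (D.inc n (q + m) + s) s ((abs_add_le _ _).trans (by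
      linarith [(hosc (q + m) (hw _ (by omega) (by omega))).2.1])) hJq
    have h2 := hg.nonneg (D.inc n (q + m))
    have h3 := key (Finset.Ico (q + 1) (q + m + 1)) (-s) (D.W n (q + 1)) (by rwa [abs_neg]) (by
      rw [Nat.card_Ico]; omega) (fun i hi => by
        rw [Finset.mem_Ico] at hi
        have hwi := hw i (by omega) (by omega)
        refine ⟨?_, ?_, hwi⟩
        · exact hflat (q + 1) i (by omega) (hw _ (by omega) (by omega)) hwi
            (fun l h1 h2 => hno' l (by omega) (by omega))
        · rw [D.y_sub, abs_mul, abs_of_pos hδ]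
          refine le_trans ?_ hmρ
          gcongr
          have h4 : (q : ℝ) ≤ i := by exact_mod_cast (by omega : q ≤ i)
          have h5 : (i : ℝ) ≤ q + m := by exact_mod_cast (by omega : i ≤ q + m)
          exact abs_le.mpr ⟨by linarith, by linarith⟩) (by linarith)
    have e : D.W n (q + 1) = D.W n q + s := by rw [hs, inc]; ring
    rw [e] at h3 ⊢
    linarith

/-- Consecutive gaps are asymptotically equal, and the jumps follow the sign of `M`. -/
lemma gap_eq (hM : D.M ≠ 0) (R : ℝ) {ε : ℝ} (hε : 0 < ε) : ∀ᶠ n in atTop, ∀ p q r, D.Cons n p q →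
    D.Cons n q r → |D.y n p| ≤ R → |D.y n r| ≤ R →
      |(D.y n r - D.y n q) - (D.y n q - D.y n p)| ≤ ε ∧ 0 < D.inc n q * D.M := by
  obtain ⟨c, hc, hgap⟩ := D.gap_lower R
  have hM' : 0 < |D.M| := abs_pos.mpr hM
  obtain ⟨η, hη, hη1, hη2⟩ : ∃ η : ℝ, 0 < η ∧ 2 * η ≤ |D.M| * c / 2 ∧ 2 * η ≤ |D.M| * ε / 4 := by
    refine ⟨min (|D.M| * c / 4) (|D.M| * ε / 8), by positivity, ?_, ?_⟩
    · linarith [min_le_left (|D.M| * c / 4) (|D.M| * ε / 8)]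
    · linarith [min_le_right (|D.M| * c / 4) (|D.M| * ε / 8)]
  filter_upwards [hgap, D.plateau R hη, D.δ_pos,
    D.jump_pos R (show 0 < (|D.M| * c / 2) * (|D.M| * ε / 4) by positivity)]
    with n hgap hpl hδ hjp p q r h1 h2 hp hr
  have hpq := h1.1
  have hqr := h2.1
  have hq := D.abs_y_le hδ hpq.le hqr.le hp hr
  have hg1 := hgap p q hpq hp hq h1.2.1 h1.2.2.1
  have hg2 := hgap q r hqr hq hr h2.2.1 h2.2.2.1
  have h3 := hpl p q h1 hp hq q hpq le_rfl
  have h4 := hpl q r h2 hq hr (q + 1) (by omega) (by omega)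
  set e1 := D.W n q - D.M * ((D.y n p + D.y n q) / 2) with he1
  set e2 := D.W n (q + 1) - D.M * ((D.y n q + D.y n r) / 2) with he2
  have e : D.inc n q = D.M * ((D.y n r - D.y n p) / 2) + (e2 - e1) := by
    rw [he1, he2, inc]; ring
  have h5 : |e2 - e1| ≤ 2 * η := (abs_sub _ _).trans (by linarith)
  have h6 : 0 < (D.y n r - D.y n p) / 2 := by linarith
  have h7 : c * |D.M| ≤ |D.M * ((D.y n r - D.y n p) / 2)| := by
    rw [abs_mul, abs_of_pos h6, mul_comm]; gcongr; linarith
  have h8 : |D.M| * c / 2 ≤ |D.inc n q| := by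
    have := abs_sub_abs_le_abs_sub (D.M * ((D.y n r - D.y n p) / 2)) (-(e2 - e1))
    rw [abs_neg, sub_neg_eq_add, ← e] at this
    linarith
  constructor
  · have h9 := hjp p q r h1 h2 hp hr
    have e' : D.W n q + D.W n (q + 1) - 2 * (D.M * D.y n q) =
      D.M * (((D.y n r - D.y n q) - (D.y n q - D.y n p)) / 2) + (e1 + e2) := by
      rw [he1, he2]; ring
    rw [abs_mul] at h9
    have h10 : |D.W n q + D.W n (q + 1) - 2 * (D.M * D.y n q)| ≤ |D.M| * ε / 4 := by
      have h11 : 0 < |D.M| * c / 2 := by positivity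
      refine le_of_mul_le_mul_left (le_trans ?_ h9) h11
      gcongr
    have h12 : |e1 + e2| ≤ 2 * η := (abs_add_le _ _).trans (by linarith)
    have h13 : |D.M * (((D.y n r - D.y n q) - (D.y n q - D.y n p)) / 2)| ≤ |D.M| * (ε / 2) := by
      have := abs_sub (D.W n q + D.W n (q + 1) - 2 * (D.M * D.y n q)) (e1 + e2)
      rw [e', add_sub_cancel_right, ← e'] at this
      linarith
    rw [abs_mul] at h13
    have h14 := le_of_mul_le_mul_left h13 hM'
    rw [abs_div, abs_two] at h14
    linarith
  · have h15 : |(e2 - e1) * D.M| ≤ (|D.M| * c / 2) * |D.M| := by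
      rw [abs_mul]; gcongr; linarith
    have h16 := (abs_le.mp h15).1
    rw [e, add_mul]
    have h17 : D.M * ((D.y n r - D.y n p) / 2) * D.M = D.M ^ 2 * ((D.y n r - D.y n p) / 2) := by
      ring
    have h18 : D.M ^ 2 * c ≤ D.M ^ 2 * ((D.y n r - D.y n p) / 2) := by gcongr; linarith
    have h19 : (|D.M| * c / 2) * |D.M| = D.M ^ 2 * c / 2 := by
      rw [← sq_abs D.M]; ring
    have h20 : 0 < D.M ^ 2 * c := by positivity
    linarith

end Blow

/-! ### The staircase structure -/

namespace Blow

variable (D : Blow)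

lemma next_prev (hM : D.M ≠ 0) : ∃ G, 0 < G ∧ ∀ R, ∀ᶠ n in atTop, ∀ q, |D.y n q| ≤ R → D.J n q →
    (∃ r, D.Cons n q r ∧ D.y n r ≤ D.y n q + G) ∧
    (∃ p, D.Cons n p q ∧ D.y n q - G ≤ D.y n p) := by
  obtain ⟨G, hG, hs⟩ := D.surround hM
  refine ⟨G + 1, by positivity, fun R => ?_⟩
  filter_upwards [hs (R + 1), D.δ_pos, D.δ_lt one_pos] with n hs hδ hδ1 q hq hJ
  constructor
  · have hq' := abs_le.mp hq
    obtain ⟨p, r, hc, hp, hr, _, h2⟩ := hs (q + 1) (by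
      rw [D.y_succ]; exact abs_le.mpr ⟨by linarith, by linarith⟩)
    have : p = q := by
      by_contra hne
      exact hc.2.2.2 q (by omega) (by omega) hJ
    subst this
    rw [D.y_succ] at h2
    exact ⟨r, hc, by linarith⟩
  · obtain ⟨p, r, hc, hp, hr, h1, _⟩ := hs q (by linarith)
    have : r = q := by
      by_contra hne
      exact hc.2.2.2 q (by omega) (by omega) hJ
    subst this
    exact ⟨p, hc, by linarith⟩

/-- All gaps have asymptotically the optimal length `ℓ`: otherwise a long chain of equal,
suboptimal gaps would have too much energy compared with the optimal staircase. -/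
lemma gap_len (hM : D.M ≠ 0) {ℓ : ℝ} (hℓ : 0 < ℓ) (hopt : D.β * D.M ^ 2 * ℓ ^ 3 = 8) (R : ℝ)
    {ε : ℝ} (hε : 0 < ε) : ∀ᶠ n in atTop, ∀ p q, D.Cons n p q → |D.y n p| ≤ R → |D.y n q| ≤ R →
      |D.y n q - D.y n p - ℓ| ≤ ε := by
  have hβ := D.β_pos
  have hM2 : 0 < D.M ^ 2 := by positivity
  obtain ⟨G, hG, hnext⟩ := D.next_prev hM
  set b := D.β * D.M ^ 2 / 12 with hb
  have hb0 : 0 < b := by positivity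
  have hbℓ : b * ℓ ^ 3 = 2 / 3 := by rw [hb]; linarith
  set ν := b * ε ^ 2 * ℓ / 2 with hν
  have hν0 : 0 < ν := by positivity
  obtain ⟨K, hK⟩ := exists_nat_gt (16 / (ν / 2))
  rw [div_lt_iff₀ (by positivity)] at hK
  set ζ := ε / (2 * (K + 1)) with hζ
  have hζ0 : 0 < ζ := by positivity
  have hζK : ∀ j : ℕ, j ≤ K → j * ζ ≤ ε / 2 := by
    intro j hj
    have h1 : (j : ℝ) ≤ K + 1 := by exact_mod_cast (by omega : j ≤ K + 1)
    calc (j : ℝ) * ζ ≤ (K + 1) * ζ := by gcongr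
      _ = ε / 2 := by rw [hζ]; field_simp
  set R' := |R| + K * G with hR'
  filter_upwards [hnext R', D.gap_eq hM R' hζ0, D.piece_lower R' (show 0 < ν / 4 by positivity),
    D.energy_upper hℓ R', D.glow (ν / 4) (by positivity), D.δ_pos]
    with n hnext heq hlow hup hglow hδ p q hc hp hq
  by_contra! hcon
  set T := D.y n q - D.y n p with hT
  have hpR := abs_le.mp hp
  have hqR := abs_le.mp hq
  have hRR := le_abs_self R
  have hKG : 0 ≤ K * G := by positivity
  have chain : ∀ j : ℕ, j ≤ K → ∃ pj qj, D.Cons n pj qj ∧ p ≤ pj ∧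
      D.y n qj ≤ D.y n q + j * G ∧ |D.y n qj - D.y n pj - T| ≤ j * ζ ∧
      2 / ℓ * (D.y n pj - D.y n p) + j * (ν / 2) ≤ D.E n p pj := by
    intro j
    induction j with
    | zero =>
      intro _
      refine ⟨p, q, hc, le_rfl, by simp, by simp [hT], ?_⟩
      simp [E, En]
    | succ j ih =>
      intro hj
      obtain ⟨pj, qj, hcj, hppj, hyq, hTj, hE⟩ := ih (by omega)
      have hjK : (j : ℝ) + 1 ≤ K := by exact_mod_cast hj
      have hjG : (j : ℝ) * G + G ≤ K * G := by nlinarith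
      have hpj1 := D.y_mono hδ hppj
      have hpj2 := D.y_mono hδ hcj.1.le
      have hpjR : |D.y n pj| ≤ R' := abs_le.mpr ⟨by linarith, by linarith⟩
      have hqjR : |D.y n qj| ≤ R' := abs_le.mpr ⟨by linarith, by linarith⟩
      obtain ⟨⟨r, hcr, hyr⟩, _⟩ := hnext qj hqjR hcj.2.2.1
      have hr1 := D.y_mono hδ hcr.1.le
      have hrR : |D.y n r| ≤ R' := abs_le.mpr ⟨by linarith, by linarith⟩
      refine ⟨qj, r, hcr, hppj.trans hcj.1.le, by push_cast; linarith, ?_, ?_⟩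
      · have h1 := (heq pj qj r hcj hcr hpjR hrR).1
        have e : D.y n r - D.y n qj - T = (D.y n r - D.y n qj - (D.y n qj - D.y n pj)) +
          (D.y n qj - D.y n pj - T) := by ring
        rw [e]
        push_cast
        exact (abs_add_le _ _).trans (by linarith)
      · have h1 := hlow pj qj hcj.1 hpjR hqjR hcj.2.2.2
        have h2 := hglow _ hcj.2.1
        change 4 / 3 - ν / 4 ≤ D.g n (D.inc n pj) at h2
        have h3 : D.E n p pj + D.E n pj qj = D.E n p qj := En_add _ _ _ _ hppj hcj.1.le
        set Tj := D.y n qj - D.y n pj with hTjdef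
        have h4 : ε / 2 ≤ |Tj - ℓ| := by
          have h5 := abs_sub_abs_le_abs_sub (T - ℓ) (T - Tj)
          have e : T - ℓ - (T - Tj) = Tj - ℓ := by ring
          rw [e, abs_sub_comm T Tj] at h5
          linarith [hζK j (by omega)]
        have h5 : (ε / 2) ^ 2 ≤ (Tj - ℓ) ^ 2 := by rw [← sq_abs (Tj - ℓ)]; gcongr
        have hTj0 : 0 ≤ Tj := by linarith
        have h6 : ν ≤ b * ((Tj - ℓ) ^ 2 * (Tj + 2 * ℓ)) := by
          calc ν = b * ((ε / 2) ^ 2 * (0 + 2 * ℓ)) := by rw [hν]; ring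
            _ ≤ _ := by gcongr
        have h7 : b * ((Tj - ℓ) ^ 2 * (Tj + 2 * ℓ)) = b * Tj ^ 3 + 4 / 3 - 2 / ℓ * Tj := by
          have e1 : b * ((Tj - ℓ) ^ 2 * (Tj + 2 * ℓ)) =
            b * Tj ^ 3 - 3 * (b * ℓ ^ 3) / ℓ * Tj + 2 * (b * ℓ ^ 3) := by field_simp; ring
          rw [e1, hbℓ]; ring
        have e2 : 2 / ℓ * (D.y n qj - D.y n p) = 2 / ℓ * (D.y n pj - D.y n p) + 2 / ℓ * Tj := by
          rw [hTjdef]; ring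
        rw [← hb] at h1
        rw [e2, ← h3]
        push_cast
        linarith
  obtain ⟨pK, qK, hcK, hppK, hyq, -, hE⟩ := chain K le_rfl
  rcases hppK.eq_or_lt with h | h
  · rw [← h] at hE
    simp [E, En] at hE
    have : (0 : ℝ) ≤ 16 := by norm_num
    linarith
  · have hpj1 := D.y_mono hδ hppK
    have hpj2 := D.y_mono hδ hcK.1.le
    have h1 := hup p pK h (hp.trans (by linarith)) (abs_le.mpr ⟨by linarith, by linarith⟩)
    rw [← hb, hbℓ] at h1
    norm_num at h1
    linarith

/-- Asymptotically `W` is the staircase with plateaus of length `2 H` passing through its value at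
the origin. -/
lemma stair (hM : D.M ≠ 0) {H : ℝ} (hH : 0 < H) (hopt : D.β * D.M ^ 2 * H ^ 3 = 1) (R : ℝ)
    {ε : ℝ} (hε : 0 < ε) : ∀ᶠ n in atTop, ∀ i, |D.y n i| ≤ R → ∃ z : ℤ,
      |D.W n i - D.M * (D.W n (D.k n) / D.M + 2 * H * z)| ≤ |D.M| * ε ∧
      |D.y n i - D.W n (D.k n) / D.M - 2 * H * z| ≤ H + ε := by
  have hM' : 0 < |D.M| := abs_pos.mpr hM
  obtain ⟨G, hG, hsur⟩ := D.surround hM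
  obtain ⟨G', hG', hnp⟩ := D.next_prev hM
  set R' := |R| + G + 1 with hR'
  have hR'0 : 0 < R' := by positivity
  set ζ := min H (ε / (4 * (2 * R' / H + 1))) with hζ
  have hζ0 : 0 < ζ := by positivity
  have hζH : ζ ≤ H := min_le_left _ _
  have hζ1 : (2 * R' / H + 1) * ζ ≤ ε / 4 := by
    calc (2 * R' / H + 1) * ζ ≤ (2 * R' / H + 1) * (ε / (4 * (2 * R' / H + 1))) := by
          gcongr; exact min_le_right _ _
      _ = ε / 4 := by field_simp
  have hζε : ζ ≤ ε / 4 := by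
    have h1 : 0 ≤ 2 * R' / H := by positivity
    nlinarith
  filter_upwards [hsur |R|, hnp R', D.gap_len hM (ℓ := 2 * H) (by positivity) (by
    rw [mul_pow]; linarith) (R' + G') hζ0, D.plateau R' (show 0 < |D.M| * (ε / 8) by positivity),
    D.δ_pos] with n hsur hnp hlen hpl hδ i hi
  have hk0 : D.y n (D.k n) = 0 := by simp [y]
  have count : ∀ q p, D.J n q → D.J n p → p ≤ q → |D.y n p| ≤ R' → |D.y n q| ≤ R' →
      ∃ m : ℕ, |D.y n q - D.y n p - 2 * H * m| ≤ m * ζ ∧ H * m ≤ D.y n q - D.y n p := by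
    intro q
    induction q using Nat.strong_induction_on with
    | _ q ih =>
      intro p hJq hJp hpq hp hq
      rcases hpq.eq_or_lt with rfl | hpq
      · exact ⟨0, by simp⟩
      obtain ⟨_, p', hc', hyp'⟩ := hnp q hq hJq
      have hpp' : p ≤ p' := by
        by_contra! h
        exact hc'.2.2.2 p h hpq hJp
      have hp' := D.abs_y_le hδ hpp' hc'.1.le hp hq
      obtain ⟨m, hm1, hm2⟩ := ih p' hc'.1 p hc'.2.1 hJp hpp' hp hp'
      have h1 := hlen p' q hc' (by linarith) (by linarith)
      refine ⟨m + 1, ?_, ?_⟩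
      · have e : D.y n q - D.y n p - 2 * H * ((m + 1 : ℕ) : ℝ) = (D.y n q - D.y n p' - 2 * H) +
          (D.y n p' - D.y n p - 2 * H * m) := by push_cast; ring
        rw [e]
        push_cast
        exact (abs_add_le _ _).trans (by linarith)
      · have := (abs_le.mp h1).1
        push_cast
        linarith
  have count' : ∀ q p, D.J n q → D.J n p → |D.y n p| ≤ R' → |D.y n q| ≤ R' →
      ∃ z : ℤ, |D.y n q - D.y n p - 2 * H * z| ≤ ε / 4 := by
    have main : ∀ q p, D.J n q → D.J n p → p ≤ q → |D.y n p| ≤ R' → |D.y n q| ≤ R' →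
      ∃ m : ℕ, |D.y n q - D.y n p - 2 * H * m| ≤ ε / 4 := by
      intro q p hJq hJp hpq hp hq
      obtain ⟨m, hm1, hm2⟩ := count q p hJq hJp hpq hp hq
      refine ⟨m, hm1.trans (le_trans ?_ hζ1)⟩
      have h1 : (m : ℝ) ≤ 2 * R' / H := by
        rw [le_div_iff₀ hH]
        linarith [(abs_le.mp hp).1, (abs_le.mp hq).2]
      gcongr
      linarith
    intro q p hJq hJp hp hq
    rcases le_total p q with h | h
    · obtain ⟨m, hm⟩ := main q p hJq hJp h hp hq
      exact ⟨m, by simpa using hm⟩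
    · obtain ⟨m, hm⟩ := main p q hJp hJq h hq hp
      refine ⟨-m, ?_⟩
      rw [← abs_neg]
      convert hm using 2
      push_cast; ring
  have hiR : |D.y n i| ≤ |R| := hi.trans (le_abs_self R)
  have hi' := abs_le.mp hiR
  have loc : ∀ j, |D.y n j| ≤ |R| → ∃ p, D.J n p ∧ |D.y n p| ≤ R' ∧
      |D.y n j - (D.y n p + H)| ≤ H + ζ ∧ |D.W n j - D.M * (D.y n p + H)| ≤ |D.M| * (ε / 4) := by
    intro j hj
    obtain ⟨p, q, hc, hpj, hjq, hp, hq⟩ := hsur j hj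
    have hj' := abs_le.mp hj
    have h1 := D.y_mono hδ hpj.le
    have h2 := D.y_mono hδ hjq
    have hpR : |D.y n p| ≤ R' := abs_le.mpr ⟨by linarith, by linarith⟩
    have hqR : |D.y n q| ≤ R' := abs_le.mpr ⟨by linarith, by linarith⟩
    have h3 := hlen p q hc (by linarith) (by linarith)
    have h3' := abs_le.mp h3
    refine ⟨p, hc.2.1, hpR, abs_le.mpr ⟨by linarith, by linarith⟩, ?_⟩
    have h4 := hpl p q hc hpR hqR j hpj hjq
    have e : D.W n j - D.M * (D.y n p + H) = (D.W n j - D.M * ((D.y n p + D.y n q) / 2)) +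
      D.M * ((D.y n q - D.y n p - 2 * H) / 2) := by ring
    rw [e]
    have h5 : |D.M * ((D.y n q - D.y n p - 2 * H) / 2)| ≤ |D.M| * (ε / 8) := by
      rw [abs_mul, abs_div, abs_two]
      exact mul_le_mul_of_nonneg_left (by linarith) (abs_nonneg _)
    exact (abs_add_le _ _).trans (by linarith)
  obtain ⟨p, hJp, hpR, hp1, hp2⟩ := loc i hiR
  obtain ⟨p0, hJp0, hp0R, -, hp02⟩ := loc (D.k n) (by rw [hk0]; simp)
  obtain ⟨z, hz⟩ := count' p p0 hJp hJp0 hp0R hpR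
  refine ⟨z, ?_, ?_⟩
  · have e : D.W n i - D.M * (D.W n (D.k n) / D.M + 2 * H * z) =
      (D.W n i - D.M * (D.y n p + H)) - (D.W n (D.k n) - D.M * (D.y n p0 + H)) +
        D.M * (D.y n p - D.y n p0 - 2 * H * z) := by field_simp; ring
    have h5 : |D.M * (D.y n p - D.y n p0 - 2 * H * z)| ≤ |D.M| * (ε / 4) := by
      rw [abs_mul]; gcongr
    rw [e]
    refine (abs_add_le _ _).trans ?_
    have := abs_sub (D.W n i - D.M * (D.y n p + H)) (D.W n (D.k n) - D.M * (D.y n p0 + H))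
    have : 0 < |D.M| * ε := by positivity
    linarith
  · have h6 : |D.W n (D.k n) / D.M - (D.y n p0 + H)| ≤ ε / 4 := by
      have e : D.W n (D.k n) - D.M * (D.y n p0 + H) =
        D.M * (D.W n (D.k n) / D.M - (D.y n p0 + H)) := by field_simp
      rw [e, abs_mul] at hp02
      exact le_of_mul_le_mul_left hp02 hM'
    have e : D.y n i - D.W n (D.k n) / D.M - 2 * H * z = (D.y n i - (D.y n p + H)) -
      (D.W n (D.k n) / D.M - (D.y n p0 + H)) + (D.y n p - D.y n p0 - 2 * H * z) := by ring
    rw [e]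
    refine (abs_add_le _ _).trans ?_
    have := abs_sub (D.y n i - (D.y n p + H)) (D.W n (D.k n) / D.M - (D.y n p0 + H))
    linarith

/-- Asymptotically `W` is monotone, hence its variation is the modulus of its total increment. -/
lemma variation (R : ℝ) {η : ℝ} (hη : 0 < η) : ∀ᶠ n in atTop, ∀ A B, A ≤ B → |D.y n A| ≤ R →
    |D.y n B| ≤ R → ∑ i ∈ Finset.Ico A B, |D.inc n i| ≤ |D.W n B - D.W n A| + η := by
  classical
  have hβ := D.β_pos
  by_cases hM : D.M = 0
  · obtain ⟨X, hX, hE⟩ := D.ebdd R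
    set ε := η / (4 * X) with hε
    have hε0 : 0 < ε := by positivity
    filter_upwards [hE, D.small_var R (half_pos hη), D.zero_lim hM (R + 1) hε0, D.basic R,
      D.glow (1 / 3) (by norm_num), D.δ_lt one_pos]
      with n hE hsv hz ⟨hδ, hg, _, _⟩ hlow hδ1 A B hAB hA hB
    have h1 := hsv A B hAB hA hB
    have h2 := hE A B hAB hA hB
    have h3 : ∑ i ∈ Finset.Ico A B, |D.inc n i| ≤ ∑ i ∈ Finset.Ico A B,
        ((if D.J n i then 0 else |D.inc n i|) + 2 * ε * (D.g n (D.W n (i + 1) - D.W n i) +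
          D.β * D.δ n * (D.W n i - D.a n i) ^ 2)) := by
      refine Finset.sum_le_sum fun i hi => ?_
      rw [Finset.mem_Ico] at hi
      have hiR := abs_le.mp (D.abs_y_le hδ hi.1 hi.2.le hA hB)
      have h4 := hz i (abs_le.mpr ⟨by linarith, by linarith⟩)
      have h5 := hz (i + 1) (by rw [D.y_succ]; exact abs_le.mpr ⟨by linarith, by linarith⟩)
      have h6 : 0 ≤ D.β * D.δ n * (D.W n i - D.a n i) ^ 2 := by positivity
      have h7 := hg.nonneg (D.W n (i + 1) - D.W n i)
      split_ifs with hJ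
      · have h8 : 4 / 3 - 1 / 3 ≤ D.g n (D.W n (i + 1) - D.W n i) := hlow _ hJ
        have h9 : |D.inc n i| ≤ 2 * ε := (abs_sub _ _).trans (by linarith)
        nlinarith
      · have : 0 ≤ 2 * ε * (D.g n (D.W n (i + 1) - D.W n i) +
          D.β * D.δ n * (D.W n i - D.a n i) ^ 2) := by positivity
        linarith
    rw [Finset.sum_add_distrib, ← Finset.mul_sum] at h3
    have h10 : 2 * ε * D.E n A B ≤ η / 2 := by
      calc 2 * ε * D.E n A B ≤ 2 * ε * X := by gcongr
        _ = η / 2 := by rw [hε]; field_simp; norm_num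
    have h11 := abs_nonneg (D.W n B - D.W n A)
    unfold E En at h10
    linarith
  · obtain ⟨G, hG, hnp⟩ := D.next_prev hM
    filter_upwards [D.small_var R (half_pos hη), hnp R, D.gap_eq hM (R + G) one_pos, D.δ_pos]
      with n hsv hnp heq hδ A B hAB hA hB
    have h1 := hsv A B hAB hA hB
    obtain ⟨s, hs, hsM⟩ : ∃ s : ℝ, |s| = 1 ∧ ∀ x, 0 < x * D.M → |x| = s * x := by
      rcases lt_or_gt_of_ne hM with h | h
      · refine ⟨-1, by simp, fun x hx => ?_⟩
        rw [abs_of_neg (by nlinarith)]; ring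
      · refine ⟨1, by simp, fun x hx => ?_⟩
        rw [abs_of_pos (by nlinarith)]; ring
    have h3 : ∑ i ∈ Finset.Ico A B, |D.inc n i| ≤ ∑ i ∈ Finset.Ico A B,
        (s * (D.W n (i + 1) - D.W n i) + 2 * (if D.J n i then 0 else |D.inc n i|)) := by
      refine Finset.sum_le_sum fun i hi => ?_
      rw [Finset.mem_Ico] at hi
      have hiR := D.abs_y_le hδ hi.1 hi.2.le hA hB
      have hiR' := abs_le.mp hiR
      split_ifs with hJ
      · obtain ⟨⟨r, hr, hyr⟩, p, hp, hyp⟩ := hnp i hiR hJ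
        have h4 := D.y_mono hδ hr.1.le
        have h5 := D.y_mono hδ hp.1.le
        have h6 := (heq p i r hp hr (abs_le.mpr ⟨by linarith, by linarith⟩)
          (abs_le.mpr ⟨by linarith, by linarith⟩)).2
        rw [hsM _ h6, mul_zero, add_zero]; rfl
      · have h7 : |s * D.inc n i| = |D.inc n i| := by rw [abs_mul, hs, one_mul]
        have h8 := neg_abs_le (s * D.inc n i)
        change |D.inc n i| ≤ s * D.inc n i + 2 * |D.inc n i|
        linarith
    rw [Finset.sum_add_distrib, ← Finset.mul_sum, ← Finset.mul_sum, Finset.sum_Ico_sub _ hAB] at h3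
    have h9 := le_abs_self (s * (D.W n B - D.W n A))
    rw [abs_mul, hs, one_mul] at h9
    linarith

end Blow

/-! ### Strict convergence -/

/-- A function whose oscillation is dominated by the increments of `T` has variation at most the
total increment of `T`. -/
lemma eVar_le {f T : ℝ → ℝ} {a b : ℝ} (hab : a ≤ b)
    (h : ∀ x y, a ≤ x → x ≤ y → y ≤ b → |f y - f x| ≤ T y - T x) :
    eVariationOn f (Ioo a b) ≤ ENNReal.ofReal (T b - T a) := by
  have hT : MonotoneOn T (Icc a b) := fun x hx y hy hxy => by
    have := h x y hx.1 hxy hy.2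
    linarith [abs_nonneg (f y - f x)]
  have h1 : eVariationOn f (Ioo a b) ≤ eVariationOn T (Ioo a b) := by
    refine iSup_le ?_
    rintro ⟨n, u, hu, hus⟩
    refine le_trans (Finset.sum_le_sum fun i _ => ?_) (eVariationOn.sum_le hu hus)
    have h2 := h (u i) (u (i + 1)) (hus i).1.le (hu (Nat.le_succ i)) (hus (i + 1)).2.le
    rw [edist_dist, edist_dist, Real.dist_eq, Real.dist_eq]
    exact ENNReal.ofReal_le_ofReal (h2.trans (le_abs_self _))
  refine h1.trans ?_
  have h3 := hT.eVariationOn_eq (left_mem_Icc.mpr hab) (right_mem_Icc.mpr hab)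
  rw [inter_self] at h3
  exact (eVariationOn.mono _ Ioo_subset_Icc_self).trans h3.le

lemma ofReal_squeeze {ι : Type*} {l : Filter ι} {F : ι → ENNReal} {V : ℝ}
    (h : ∀ ε : ℝ, 0 < ε → ∀ᶠ i in l, ENNReal.ofReal (V - ε) ≤ F i ∧ F i ≤ ENNReal.ofReal (V + ε)) :
    Tendsto F l (nhds (ENNReal.ofReal V)) := by
  have hc1 : Tendsto (fun ε : ℝ => ENNReal.ofReal (V - ε)) (nhdsWithin 0 (Ioi 0))
      (nhds (ENNReal.ofReal V)) := by
    have : Continuous (fun ε : ℝ => ENNReal.ofReal (V - ε)) :=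
      ENNReal.continuous_ofReal.comp (by fun_prop)
    simpa using (this.tendsto 0).mono_left nhdsWithin_le_nhds
  have hc2 : Tendsto (fun ε : ℝ => ENNReal.ofReal (V + ε)) (nhdsWithin 0 (Ioi 0))
      (nhds (ENNReal.ofReal V)) := by
    have : Continuous (fun ε : ℝ => ENNReal.ofReal (V + ε)) :=
      ENNReal.continuous_ofReal.comp (by fun_prop)
    simpa using (this.tendsto 0).mono_left nhdsWithin_le_nhds
  rw [tendsto_order]
  constructor
  · intro c hc
    obtain ⟨ε, hε, hε0⟩ := ((hc1.eventually (lt_mem_nhds hc)).and self_mem_nhdsWithin).exists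
    filter_upwards [h ε hε0] with i hi using hε.trans_le hi.1
  · intro c hc
    obtain ⟨ε, hε, hε0⟩ := ((hc2.eventually (gt_mem_nhds hc)).and self_mem_nhdsWithin).exists
    filter_upwards [h ε hε0] with i hi using hi.2.trans_lt hε

namespace Blow

variable (D : Blow)

lemma idx_mono {n : ℕ} (hδ : 0 < D.δ n) {x y : ℝ} (h : x ≤ y) : D.idx n x ≤ D.idx n y := by
  unfold idx
  apply Nat.floor_le_floor
  gcongr

lemma abs_y_idx {n : ℕ} {R : ℝ} (hδ : 0 < D.δ n) (hδ1 : D.δ n < 1) (hk : R ≤ D.k n * D.δ n)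
    {x : ℝ} (hx : |x| ≤ R) : |D.y n (D.idx n x)| ≤ R + 1 := by
  have hx' := abs_le.mp hx
  have := D.y_idx hδ (x := x) (by linarith)
  exact abs_le.mpr ⟨by linarith, by linarith⟩

/-- For a monotone or antitone limit, pointwise convergence at continuity points upgrades to
locally strict convergence, since the variation of the blow-ups is asymptotically the modulus of
the total increment. -/
lemma locStrict {w : ℕ → ℝ → ℝ}
    (hw : ∀ R, ∀ᶠ n in atTop, ∀ x, |x| ≤ R → w n x = D.W n (D.idx n x))
    {nk : ℕ → ℕ} (hnk : Tendsto nk atTop atTop) {winf : ℝ → ℝ}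
    (hmono : Monotone winf ∨ Antitone winf)
    (hpt : ∀ x, ContinuousAt winf x → Tendsto (fun h => w (nk h) x) atTop (nhds (winf x))) :
    LocStrictBV (fun h => w (nk h)) winf := by
  intro a b hab hca hcb
  set R := max |a| |b| with hR
  have hxR : ∀ x, a ≤ x → x ≤ b → |x| ≤ R := fun x h1 h2 => by
    refine abs_le.mpr ⟨?_, ?_⟩
    · have := neg_abs_le a
      have := le_max_left |a| |b|
      linarith
    · have := le_abs_self b
      have := le_max_right |a| |b|
      linarith
  have hcount : {x | ¬ ContinuousAt winf x}.Countable := by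
    rcases hmono with h | h
    · exact h.countable_not_continuousAt
    · exact h.countable_not_continuousAt
  have hmeas : Measurable winf := by
    rcases hmono with h | h
    · exact h.measurable
    · exact h.measurable
  obtain ⟨T, hT⟩ : ∃ T : ℝ → ℝ, ∀ x y, x ≤ y → |winf y - winf x| = T y - T x := by
    rcases hmono with h | h
    · exact ⟨winf, fun x y hxy => abs_of_nonneg (sub_nonneg.mpr (h hxy))⟩
    · refine ⟨fun x => - winf x, fun x y hxy => ?_⟩
      rw [abs_of_nonpos (sub_nonpos.mpr (h hxy))]; ring
  have hTm : ∀ x y, x ≤ y → T x ≤ T y := fun x y h => by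
    have := hT x y h
    linarith [abs_nonneg (winf y - winf x)]
  constructor
  · obtain ⟨C, hC, hbd⟩ := D.bdd (R + 1)
    have hbd' : ∀ᶠ n in atTop, ∀ x, |x| ≤ R → |w n x| ≤ C := by
      filter_upwards [hbd, hw R, D.δ_pos, D.δ_lt one_pos, D.dom R] with n hb hw hδ hδ1 hk x hx
      rw [hw x hx]
      exact hb _ (D.abs_y_idx hδ hδ1 hk.1 hx)
    have hlim := MeasureTheory.tendsto_integral_filter_of_dominated_convergence
      (μ := volume.restrict (Ioo a b)) (l := atTop)
      (F := fun h x => |w (nk h) x - winf x|) (f := fun _ => (0 : ℝ))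
      (fun _ => C + (|winf a| + (T b - T a))) ?_ ?_ ?_ ?_
    · simpa using hlim
    · filter_upwards [hnk.eventually (hw R)] with h hw
      have hm : Measurable fun x => |D.W (nk h) (D.idx (nk h) x) - winf x| := by
        have h1 : Measurable fun x => D.W (nk h) (D.idx (nk h) x) := by
          have h2 : Measurable fun x => D.idx (nk h) x := by
            unfold idx
            exact Nat.measurable_floor.comp (by fun_prop)
          exact (measurable_from_nat (f := D.W (nk h))).comp h2
        exact (h1.sub hmeas).abs
      refine hm.aestronglyMeasurable.congr ?_
      filter_upwards [ae_restrict_mem measurableSet_Ioo] with x hx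
      rw [hw x (hxR x hx.1.le hx.2.le)]
    · filter_upwards [hnk.eventually hbd'] with h hb
      filter_upwards [ae_restrict_mem measurableSet_Ioo] with x hx
      rw [Real.norm_eq_abs, abs_abs]
      have h1 := hb x (hxR x hx.1.le hx.2.le)
      have h2 := hT a x hx.1.le
      have h3 := hTm x b hx.2.le
      have h4 := abs_sub (w (nk h) x) (winf x)
      have h5 : |winf x| ≤ |winf a| + |winf x - winf a| := by
        have := abs_add_le (winf a) (winf x - winf a)
        simpa using this
      linarith
    · exact integrable_const _
    · refine ae_restrict_of_ae ?_
      filter_upwards [hcount.ae_notMem volume] with x hx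
      have h1 := hpt x (not_not.mp hx)
      have h2 : Tendsto (fun h => w (nk h) x - winf x) atTop (nhds 0) := by
        simpa using h1.sub_const (winf x)
      simpa using h2.abs
  · set V := |winf b - winf a| with hVdef
    -- continuity points close to the ends carry almost all of the increment
    have hpts : ∀ ε : ℝ, 0 < ε → ∃ a' ∈ Ioo a b, ∃ b' ∈ Ioo a b, ContinuousAt winf a' ∧
        ContinuousAt winf b' ∧ V - ε < |winf b' - winf a'| := by
      intro ε hε
      have hd := hcount.dense_compl ℝ
      obtain ⟨r1, hr1, h1⟩ := Metric.continuousAt_iff.mp hca (ε / 2) (half_pos hε)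
      obtain ⟨r2, hr2, h2⟩ := Metric.continuousAt_iff.mp hcb (ε / 2) (half_pos hε)
      obtain ⟨a', ha', ha1, ha2⟩ := hd.exists_between (show a < min b (a + r1) from
        lt_min hab (by linarith))
      obtain ⟨b', hb', hb1, hb2⟩ := hd.exists_between (show max a (b - r2) < b from
        max_lt hab (by linarith))
      rw [lt_min_iff] at ha2
      rw [max_lt_iff] at hb1
      refine ⟨a', ⟨ha1, ha2.1⟩, b', ⟨hb1.1, hb2⟩, not_not.mp ha', not_not.mp hb', ?_⟩
      have h3 : |winf a' - winf a| < ε / 2 := h1 (by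
        rw [Real.dist_eq, abs_lt]; constructor <;> linarith)
      have h4 : |winf b' - winf b| < ε / 2 := h2 (by
        rw [Real.dist_eq, abs_lt]; constructor <;> linarith)
      have h5 : |winf b - winf a| ≤ |winf b' - winf a'| + |winf a' - winf a| + |winf b' - winf b| := by
        have e : winf b - winf a = (winf b' - winf a') + (winf a' - winf a) - (winf b' - winf b) := by
          ring
        rw [e]
        exact (abs_sub _ _).trans (by gcongr; exact abs_add_le _ _)
      linarith
    have hlow : ∀ (F : ℝ → ℝ) (a' b' c : ℝ), a' ∈ Ioo a b → b' ∈ Ioo a b → c ≤ |F b' - F a'| →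
        ENNReal.ofReal c ≤ eVariationOn F (Ioo a b) := by
      intro F a' b' c ha' hb' hc
      refine le_trans ?_ (eVariationOn.edist_le F hb' ha')
      rw [edist_dist, Real.dist_eq]
      exact ENNReal.ofReal_le_ofReal hc
    have hinf : eVariationOn winf (Ioo a b) = ENNReal.ofReal V := by
      have h1 : Tendsto (fun _ : ℕ => eVariationOn winf (Ioo a b)) atTop
          (nhds (ENNReal.ofReal V)) := by
        refine ofReal_squeeze fun ε hε => Eventually.of_forall fun _ => ⟨?_, ?_⟩
        · obtain ⟨a', ha', b', hb', -, -, h⟩ := hpts ε hε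
          exact hlow winf a' b' _ ha' hb' h.le
        · refine (eVar_le hab.le fun x y _ hxy _ => (hT x y hxy).le).trans ?_
          apply ENNReal.ofReal_le_ofReal
          rw [← hT a b hab.le]; linarith
      exact tendsto_nhds_unique tendsto_const_nhds h1
    rw [hinf]
    refine ofReal_squeeze fun ε hε => ?_
    have hev1 : ∀ᶠ h in atTop, ENNReal.ofReal (V - ε) ≤ eVariationOn (w (nk h)) (Ioo a b) := by
      obtain ⟨a', ha', b', hb', hca', hcb', h⟩ := hpts ε hε
      have h1 := ((hpt b' hcb').sub (hpt a' hca')).abs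
      filter_upwards [h1.eventually (lt_mem_nhds h)] with m hm
      exact hlow _ a' b' _ ha' hb' hm.le
    have hev2 : ∀ᶠ h in atTop, eVariationOn (w (nk h)) (Ioo a b) ≤ ENNReal.ofReal (V + ε) := by
      have h1 := ((hpt b hcb).sub (hpt a hca)).abs
      have h2 := h1.eventually (gt_mem_nhds (show |winf b - winf a| < V + ε / 2 by linarith))
      filter_upwards [h2, hnk.eventually (hw R), hnk.eventually D.δ_pos,
        hnk.eventually (D.δ_lt one_pos), hnk.eventually (D.dom R),
        hnk.eventually (D.variation (R + 1) (half_pos hε))] with m hm hw hδ hδ1 hk hvar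
      set n := nk m
      have hS : ∀ x y, a ≤ x → x ≤ y → y ≤ b →
          ∑ i ∈ Finset.range (D.idx n y), |D.inc n i| - ∑ i ∈ Finset.range (D.idx n x), |D.inc n i|
          = ∑ i ∈ Finset.Ico (D.idx n x) (D.idx n y), |D.inc n i| := fun x y _ hxy _ => by
        rw [Finset.sum_Ico_eq_sub _ (D.idx_mono hδ hxy)]
      refine (eVar_le (T := fun x => ∑ i ∈ Finset.range (D.idx n x), |D.inc n i|) hab.le
        fun x y hx hxy hy => ?_).trans ?_
      · rw [hS x y hx hxy hy, hw x (hxR x hx (hxy.trans hy)), hw y (hxR y (hx.trans hxy) hy),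
          ← Finset.sum_Ico_sub _ (D.idx_mono hδ hxy)]
        exact Finset.abs_sum_le_sum_abs _ _
      · apply ENNReal.ofReal_le_ofReal
        rw [hS a b le_rfl hab.le le_rfl]
        have h3 := hvar _ _ (D.idx_mono hδ hab.le)
          (D.abs_y_idx hδ hδ1 hk.1 (hxR a le_rfl hab.le))
          (D.abs_y_idx hδ hδ1 hk.1 (hxR b hab.le le_rfl))
        rw [hw a (hxR a le_rfl hab.le), hw b (hxR b hab.le le_rfl)] at hm
        linarith
    exact hev1.and hev2

end Blow

/-! ### Identification of the limit -/

namespace Blow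

variable (D : Blow)

/-- Limits of the blow-ups: a subsequence along which the level of the plateau through the centre
converges, converges to the corresponding oblique translation of the staircase. -/
theorem main {H V : ℝ} (hV : V = D.M * H)
    (hcase : D.M = 0 ∨ (D.M ≠ 0 ∧ 0 < H ∧ D.β * D.M ^ 2 * H ^ 3 = 1)) {w : ℕ → ℝ → ℝ}
    (hw : ∀ R, ∀ᶠ n in atTop, ∀ x, |x| ≤ R → w n x = D.W n (D.idx n x))
    (nk : ℕ → ℕ) (hnk : Tendsto nk atTop atTop) :
    ∃ φ : ℕ → ℕ, StrictMono φ ∧ ∃ winf : ℝ → ℝ, Obl H V winf ∧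
        LocStrictBV (fun h => w (nk (φ h))) winf := by
  rcases hcase with hM | ⟨hM, hH, hopt⟩
  · refine ⟨id, strictMono_id, fun _ => 0, ⟨0, by simp, fun x => by simp [hV, hM, canStair]⟩, ?_⟩
    refine D.locStrict hw hnk (Or.inl monotone_const) fun x _ => ?_
    rw [Metric.tendsto_nhds]
    intro ε hε
    filter_upwards [hnk.eventually (D.zero_lim hM (|x| + 1) (half_pos hε)),
      hnk.eventually (hw |x|), hnk.eventually D.δ_pos,
        hnk.eventually (D.δ_lt one_pos), hnk.eventually (D.dom |x|)] with m hz hw hδ hδ1 hk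
    rw [hw x le_rfl, Real.dist_eq, sub_zero]
    have := hz _ (D.abs_y_idx hδ hδ1 hk.1 le_rfl)
    linarith
  -- the central plateau meets the line of slope `M` at `ν n`
  set ν : ℕ → ℝ := fun n => D.W n (D.k n) / D.M with hν
  have hνb : ∀ ε : ℝ, 0 < ε → ∀ᶠ n in atTop, |ν n| ≤ H + ε := by
    intro ε hε
    have hε' : 0 < min ε (H / 2) / 2 := by positivity
    filter_upwards [D.stair hM hH hopt 0 hε'] with n hn
    obtain ⟨z, h1, h2⟩ := hn (D.k n) (by simp [y])
    have he1 := min_le_left ε (H / 2)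
    have he2 := min_le_right ε (H / 2)
    have h3 : D.W n (D.k n) - D.M * (D.W n (D.k n) / D.M + 2 * H * z) = D.M * (-(2 * H * z)) := by
      field_simp; ring
    rw [h3, abs_mul, mul_le_mul_iff_right₀ (abs_pos.mpr hM), abs_neg] at h1
    have h1' := abs_le.mp h1
    have hz0 : z = 0 := by
      by_contra hz
      rcases lt_or_gt_of_ne hz with h | h
      · have : (z : ℝ) ≤ -1 := by exact_mod_cast (show z ≤ -1 by omega)
        nlinarith
      · have : (1 : ℝ) ≤ z := by exact_mod_cast h
        nlinarith
    rw [hz0] at h2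
    have h4 : |D.y n (D.k n) - D.W n (D.k n) / D.M - 2 * H * ((0 : ℤ) : ℝ)| = |ν n| := by
      simp [y, hν, abs_div]
    rw [h4] at h2
    linarith
  obtain ⟨μ, -, φ, hφ, hφμ⟩ := (isCompact_Icc (a := -(2 * H)) (b := 2 * H)).tendsto_subseq'
    (x := fun h => ν (nk h)) (Eventually.frequently (by
      filter_upwards [hnk.eventually (hνb H hH)] with h hh
      have := abs_le.mp hh
      exact ⟨by linarith, by linarith⟩))
  have hnkφ : Tendsto (fun h => nk (φ h)) atTop atTop := hnk.comp hφ.tendsto_atTop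
  have hμ : |μ| ≤ H := by
    refine le_of_forall_pos_le_add fun ε hε => ?_
    exact le_of_tendsto hφμ.abs (hnkφ.eventually (hνb ε hε))
  have hVne : V ≠ 0 := by rw [hV]; exact mul_ne_zero hM hH.ne'
  set winf : ℝ → ℝ := fun x => canStair H V (x - H * (μ / H)) + V * (μ / H) with hwinf
  set Z : ℝ → ℤ := fun x => ⌊((x - H * (μ / H)) / H + 1) / 2⌋ with hZ
  have hwZ : ∀ x, winf x = V * (2 * Z x) + V * (μ / H) := fun x => rfl
  have hwM : ∀ x, winf x = D.M * (μ + 2 * H * Z x) := fun x => by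
    rw [hwZ, hV]; field_simp; ring
  have hZle : ∀ x, 2 * H * Z x ≤ x - μ + H := fun x => by
    have h1 := Int.floor_le (((x - H * (μ / H)) / H + 1) / 2)
    have h2 : ((x - H * (μ / H)) / H + 1) / 2 * (2 * H) = x - μ + H := by field_simp
    have h3 : (Z x : ℝ) ≤ ((x - H * (μ / H)) / H + 1) / 2 := h1
    nlinarith
  have hZlt : ∀ x, x - μ + H < 2 * H * Z x + 2 * H := fun x => by
    have h1 := Int.lt_floor_add_one (((x - H * (μ / H)) / H + 1) / 2)
    have h2 : ((x - H * (μ / H)) / H + 1) / 2 * (2 * H) = x - μ + H := by field_simp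
    have h3 : ((x - H * (μ / H)) / H + 1) / 2 < Z x + 1 := h1
    nlinarith
  have hZm : Monotone Z := fun x y h => by
    apply Int.floor_le_floor
    gcongr
  refine ⟨φ, hφ, winf, ⟨μ / H, ?_, fun x => rfl⟩, ?_⟩
  · have := abs_le.mp hμ
    constructor
    · rw [le_div_iff₀ hH]; linarith
    · rw [div_le_iff₀ hH]; linarith
  refine D.locStrict hw hnkφ ?_ fun x hx => ?_
  · rcases lt_or_gt_of_ne hVne with h | h
    · right
      intro x y hxy
      have : (Z x : ℝ) ≤ Z y := by exact_mod_cast hZm hxy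
      rw [hwZ, hwZ]; nlinarith
    · left
      intro x y hxy
      have : (Z x : ℝ) ≤ Z y := by exact_mod_cast hZm hxy
      rw [hwZ, hwZ]; nlinarith
  -- a continuity point is interior to its plateau
  have hxZ : 2 * H * Z x < x - μ + H := by
    refine lt_of_le_of_ne (hZle x) fun heq => ?_
    obtain ⟨r, hr, hcr⟩ := Metric.continuousAt_iff.mp hx |V| (abs_pos.mpr hVne)
    have h1 := hcr (x := x - r / 2) (by
      rw [Real.dist_eq, abs_lt]; constructor <;> linarith)
    have h2 : Z (x - r / 2) ≤ Z x - 1 := by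
      by_contra! hc
      have h3 : (Z x : ℝ) ≤ Z (x - r / 2) := by exact_mod_cast (show Z x ≤ Z (x - r / 2) by omega)
      have := hZle (x - r / 2)
      nlinarith
    have h2' : (Z (x - r / 2) : ℝ) ≤ Z x - 1 := by exact_mod_cast h2
    rw [Real.dist_eq, hwZ, hwZ, show V * (2 * (Z (x - r / 2) : ℝ)) + V * (μ / H) -
      (V * (2 * Z x) + V * (μ / H)) = V * (2 * (Z (x - r / 2) - Z x)) by ring, abs_mul,
      abs_of_nonpos (a := 2 * ((Z (x - r / 2) : ℝ) - Z x)) (by linarith)] at h1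
    have := abs_pos.mpr hVne
    nlinarith
  set γ := min (x - μ + H - 2 * H * Z x) (2 * H * Z x + 2 * H - (x - μ + H)) with hγ
  have hγ0 : 0 < γ := lt_min (by linarith) (by linarith [hZlt x])
  have hγ1 : γ ≤ x - μ + H - 2 * H * Z x := min_le_left _ _
  have hγ2 : γ ≤ 2 * H * Z x + 2 * H - (x - μ + H) := min_le_right _ _
  rw [Metric.tendsto_nhds]
  intro η hη
  have hMp := abs_pos.mpr hM
  set ε := min (γ / 4) (η / (4 * |D.M|)) with hε
  have hε0 : 0 < ε := lt_min (by linarith) (by positivity)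
  have hε1 : ε ≤ γ / 4 := min_le_left _ _
  have hε2 : |D.M| * ε ≤ η / 4 := by
    have : ε ≤ η / (4 * |D.M|) := min_le_right _ _
    calc |D.M| * ε ≤ |D.M| * (η / (4 * |D.M|)) := by gcongr
      _ = η / 4 := by field_simp
  filter_upwards [hnkφ.eventually (D.stair hM hH hopt (|x| + 1) hε0),
      hnkφ.eventually (hw |x|), hnkφ.eventually D.δ_pos, hnkφ.eventually (D.δ_lt one_pos),
      hnkφ.eventually (D.δ_lt hε0), hnkφ.eventually (D.dom |x|),
      Metric.tendsto_nhds.mp hφμ ε hε0] with m hst hw hδ hδ1 hδε hk hνμ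
  set n := nk (φ m)
  change |ν n - μ| < ε at hνμ
  obtain ⟨z, h1, h2⟩ := hst _ (D.abs_y_idx hδ hδ1 hk.1 le_rfl)
  obtain ⟨h3, h4⟩ := D.y_idx hδ (x := x) (by linarith [neg_abs_le x, hk.1])
  change |D.W n (D.idx n x) - D.M * (ν n + 2 * H * z)| ≤ |D.M| * ε at h1
  change |D.y n (D.idx n x) - ν n - 2 * H * z| ≤ H + ε at h2
  have h2' := abs_le.mp h2
  have hνμ' := abs_lt.mp hνμ
  have hzZ : z = Z x := by
    by_contra hne
    rcases lt_or_gt_of_ne hne with h | h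
    · have : (z : ℝ) + 1 ≤ Z x := by exact_mod_cast h
      nlinarith
    · have : (Z x : ℝ) + 1 ≤ z := by exact_mod_cast h
      nlinarith
  rw [hzZ] at h1
  rw [hw x le_rfl, Real.dist_eq, hwM]
  have h5 : |D.M * (ν n - μ)| ≤ |D.M| * ε := by
    rw [abs_mul]; gcongr
  have h6 := abs_add_le (D.W n (D.idx n x) - D.M * (ν n + 2 * H * Z x)) (D.M * (ν n - μ))
  rw [show D.W n (D.idx n x) - D.M * (ν n + 2 * H * Z x) + D.M * (ν n - μ) =
    D.W n (D.idx n x) - D.M * (μ + 2 * H * Z x) by ring] at h6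
  linarith

end Blow

/-! ### Asymptotics of the scales and of the rescaled jump cost -/

/-- The rescaled cost of a jump of height `h`. -/
noncomputable def jcost (n : ℕ) (h : ℝ) : ℝ := Real.log (1 + (h / dlt n) ^ 2) / Real.log n

lemma log_pos' {n : ℕ} (hn : 2 ≤ n) : 0 < Real.log n :=
  Real.log_pos (by exact_mod_cast (show 1 < n by omega))

lemma omg_pos {n : ℕ} (hn : 2 ≤ n) : 0 < omg n := by
  have := log_pos' hn
  unfold omg
  positivity

lemma omg_cube {n : ℕ} (hn : 2 ≤ n) : omg n ^ 3 = Real.log n / n := by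
  have := log_pos' hn
  unfold omg
  rw [← Real.rpow_natCast, ← Real.rpow_mul (by positivity)]
  norm_num

lemma dlt_pos {n : ℕ} (hn : 2 ≤ n) : 0 < dlt n := by
  have := omg_pos hn
  unfold dlt
  positivity

lemma dlt_mul {n : ℕ} (hn : 2 ≤ n) : (n : ℝ) * omg n * dlt n = 1 := by
  have := omg_pos hn
  have : (0 : ℝ) < n := by positivity
  unfold dlt
  field_simp

lemma dlt_log {n : ℕ} (hn : 2 ≤ n) : dlt n * Real.log n = omg n ^ 2 := by
  have h1 := omg_pos hn
  have h2 : (0 : ℝ) < n := by positivity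
  have h3 := omg_cube hn
  unfold dlt
  rw [eq_div_iff h2.ne'] at h3
  rw [← h3]
  field_simp

lemma log_dlt {n : ℕ} (hn : 2 ≤ n) :
    - Real.log (dlt n) = (2 * Real.log n + Real.log (Real.log n)) / 3 := by
  have h1 := omg_pos hn
  have h2 : (0 : ℝ) < n := by positivity
  have h3 := congrArg Real.log (omg_cube hn)
  have h4 := log_pos' hn
  rw [Real.log_pow, Real.log_div h4.ne' h2.ne'] at h3
  unfold dlt
  rw [one_div, Real.log_inv, Real.log_mul h2.ne' h1.ne']
  push_cast at h3
  linarith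

lemma tendsto_log_nat : Tendsto (fun n : ℕ => Real.log n) atTop atTop :=
  Real.tendsto_log_atTop.comp tendsto_natCast_atTop_atTop

lemma tendsto_loglog : Tendsto (fun n : ℕ => Real.log (Real.log n) / Real.log n) atTop (nhds 0) := by
  have h : Tendsto (fun x : ℝ => Real.log x / x) atTop (nhds 0) :=
    Real.isLittleO_log_id_atTop.tendsto_div_nhds_zero
  exact h.comp tendsto_log_nat

lemma omg_lim : Tendsto omg atTop (nhds 0) := by
  have h : Tendsto (fun x : ℝ => Real.log x / x) atTop (nhds 0) :=
    Real.isLittleO_log_id_atTop.tendsto_div_nhds_zero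
  have h1 : Tendsto (fun n : ℕ => Real.log n / n) atTop (nhds 0) :=
    h.comp tendsto_natCast_atTop_atTop
  have h2 := h1.rpow_const (p := (1 : ℝ) / 3) (Or.inr (by norm_num))
  rw [Real.zero_rpow (by norm_num)] at h2
  exact h2

lemma dlt_lim : Tendsto dlt atTop (nhds 0) := by
  have h : Tendsto (fun n => omg n ^ 2) atTop (nhds 0) := by simpa using omg_lim.pow 2
  refine tendsto_of_tendsto_of_tendsto_of_le_of_le' tendsto_const_nhds h ?_ ?_
  · filter_upwards [eventually_ge_atTop 2] with n hn using (dlt_pos hn).le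
  · filter_upwards [eventually_ge_atTop 2, tendsto_log_nat.eventually_ge_atTop 1] with n hn hl
    rw [← dlt_log hn]
    have := dlt_pos hn
    nlinarith

lemma jcost_cost {n : ℕ} (hn : 2 ≤ n) : Cost (jcost n) := by
  have h1 := log_pos' hn
  refine ⟨fun h => ?_, by simp [jcost], fun h h' hh => ?_⟩
  · exact div_nonneg (Real.log_nonneg (by nlinarith [sq_nonneg (h / dlt n)])) h1.le
  · unfold jcost
    have : (h / dlt n) ^ 2 ≤ (h' / dlt n) ^ 2 := by
      rw [div_pow, div_pow]
      gcongr ?_ / _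
      exact sq_le_sq.mpr hh
    gcongr

lemma jcost_up (C η : ℝ) (hη : 0 < η) :
    ∀ᶠ n : ℕ in atTop, ∀ h, |h| ≤ C → jcost n h ≤ 4 / 3 + η := by
  have h1 : Tendsto (fun n : ℕ => Real.log (1 + C ^ 2) / Real.log n) atTop (nhds 0) :=
    tendsto_log_nat.const_div_atTop _
  have h2 := h1.add (tendsto_loglog.const_mul (2 / 3))
  rw [mul_zero, add_zero] at h2
  filter_upwards [eventually_ge_atTop 2, h2.eventually (gt_mem_nhds hη),
    dlt_lim.eventually (gt_mem_nhds one_pos)] with n hn hl hd h hh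
  have hL := log_pos' hn
  have hδ := dlt_pos hn
  have h3 : 1 + (h / dlt n) ^ 2 ≤ (1 + C ^ 2) * (dlt n ^ 2)⁻¹ := by
    have h4 : h ^ 2 ≤ C ^ 2 := sq_le_sq.mpr (hh.trans (le_abs_self C))
    have h5 : dlt n ^ 2 ≤ 1 := by nlinarith
    rw [← div_eq_mul_inv, le_div_iff₀ (by positivity)]
    have : (1 + (h / dlt n) ^ 2) * dlt n ^ 2 = dlt n ^ 2 + h ^ 2 := by field_simp
    linarith
  have h6 : Real.log (1 + (h / dlt n) ^ 2) ≤ Real.log (1 + C ^ 2) + 2 * (- Real.log (dlt n)) := by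
    refine (Real.log_le_log (by positivity) h3).trans ?_
    rw [Real.log_mul (by positivity) (by positivity), Real.log_inv, Real.log_pow]
    push_cast
    linarith
  rw [log_dlt hn] at h6
  unfold jcost
  rw [div_le_iff₀ hL]
  have h7 : (Real.log (1 + C ^ 2) / Real.log n + 2 / 3 * (Real.log (Real.log n) / Real.log n)) *
    Real.log n = Real.log (1 + C ^ 2) + 2 / 3 * Real.log (Real.log n) := by field_simp
  nlinarith

lemma jcost_low (η : ℝ) (hη : 0 < η) :
    ∀ᶠ n : ℕ in atTop, ∀ h, 1 / Real.log n ^ 2 ≤ |h| → 4 / 3 - η ≤ jcost n h := by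
  have h2 := tendsto_loglog.const_mul (10 / 3)
  rw [mul_zero] at h2
  filter_upwards [eventually_ge_atTop 2, h2.eventually (gt_mem_nhds hη)] with n hn hl h hh
  have hL := log_pos' hn
  have hδ := dlt_pos hn
  have h3 : (1 / Real.log n ^ 2 / dlt n) ^ 2 ≤ 1 + (h / dlt n) ^ 2 := by
    have : (1 / Real.log n ^ 2 / dlt n) ^ 2 ≤ (h / dlt n) ^ 2 := by
      rw [div_pow _ (dlt n), div_pow h]
      gcongr ?_ / _
      rw [← sq_abs h]
      gcongr
    linarith
  have h4 := Real.log_le_log (by positivity) h3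
  rw [Real.log_pow, Real.log_div (by positivity) hδ.ne', one_div, Real.log_inv, Real.log_pow] at h4
  have h5 := log_dlt hn
  unfold jcost
  rw [le_div_iff₀ hL]
  have h7 : 10 / 3 * (Real.log (Real.log n) / Real.log n) *
    Real.log n = 10 / 3 * Real.log (Real.log n) := by field_simp
  push_cast at h4
  nlinarith

lemma jcost_small (η : ℝ) (hη : 0 < η) :
    ∀ᶠ n : ℕ in atTop, ∀ h, |h| < 1 / Real.log n ^ 2 → |h| ≤ η * dlt n + η * jcost n h := by
  filter_upwards [eventually_ge_atTop 2, omg_lim.eventually (gt_mem_nhds hη),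
    tendsto_log_nat.eventually_ge_atTop (2 / η)] with n hn hω hLη h hh
  have hL := log_pos' hn
  have hδ := dlt_pos hn
  have hω0 := omg_pos hn
  have hg : Real.log (1 + (h / dlt n) ^ 2) = Real.log n * jcost n h := by
    unfold jcost; field_simp
  have hg0 := (jcost_cost hn).nonneg h
  set s := |h| / dlt n with hs
  have hs0 : 0 ≤ s := by positivity
  have hs2 : (h / dlt n) ^ 2 = s ^ 2 := by rw [hs, div_pow, div_pow, sq_abs]
  have hhs : |h| = s * dlt n := by rw [hs]; field_simp
  rw [hs2] at hg
  rcases le_or_gt s 1 with h1 | h1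
  · have h2 : s ^ 2 / 2 ≤ Real.log n * jcost n h := by
      rw [← hg]
      refine le_trans ?_ (Real.le_log_one_add_of_nonneg (sq_nonneg s))
      rw [le_div_iff₀ (by positivity)]
      nlinarith [sq_nonneg s, mul_le_one₀ h1 hs0 h1]
    -- weighted arithmetic-geometric mean inequality with weight `omg n`
    have h3 : s * omg n ≤ omg n ^ 2 + s ^ 2 / 2 := by nlinarith [sq_nonneg (s - omg n)]
    have h4 : omg n * |h| ≤ omg n * (omg n * dlt n + omg n * jcost n h) := by
      calc omg n * |h| = s * omg n * dlt n := by rw [hhs]; ring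
        _ ≤ (omg n ^ 2 + Real.log n * jcost n h) * dlt n := by gcongr; linarith
        _ = omg n ^ 2 * dlt n + (dlt n * Real.log n) * jcost n h := by ring
        _ = _ := by rw [dlt_log hn]; ring
    have h5 := le_of_mul_le_mul_left h4 hω0
    refine h5.trans ?_
    gcongr
  · have h2 : 1 / 2 ≤ Real.log n * jcost n h := by
      rw [← hg]
      have : Real.log 2 ≤ Real.log (1 + s ^ 2) := Real.log_le_log (by norm_num) (by nlinarith)
      linarith [Real.log_two_gt_d9]
    have h3 : 2 ≤ Real.log n * η := by rwa [div_le_iff₀ hη] at hLη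
    have h4 : |h| * Real.log n ^ 2 ≤ 1 := by
      rw [lt_div_iff₀ (by positivity)] at hh; exact hh.le
    have h5 : |h| ≤ η * jcost n h := by
      have : |h| * Real.log n ^ 2 ≤ η * jcost n h * Real.log n ^ 2 := by nlinarith
      exact le_of_mul_le_mul_right this (by positivity)
    have : 0 ≤ η * dlt n := by positivity
    linarith

lemma jcost_poly (K : ℝ) : ∀ᶠ n : ℕ in atTop, ∀ h, |h| ≤ K * n ^ 2 * dlt n → jcost n h ≤ 5 := by
  filter_upwards [eventually_ge_atTop 2,
    tendsto_log_nat.eventually_ge_atTop (Real.log (1 + K ^ 2))] with n hn hL1 h hh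
  have hL := log_pos' hn
  have hδ := dlt_pos hn
  have hn1 : (1 : ℝ) ≤ n := by exact_mod_cast (show 1 ≤ n by omega)
  have h1 : (h / dlt n) ^ 2 ≤ (K * n ^ 2) ^ 2 := by
    apply sq_le_sq.mpr
    rw [abs_div, abs_of_pos hδ, div_le_iff₀ hδ]
    exact hh.trans (by gcongr; exact le_abs_self _)
  have h2 : 1 + (h / dlt n) ^ 2 ≤ (1 + K ^ 2) * (n : ℝ) ^ 4 := by
    have : (1 : ℝ) ≤ (n : ℝ) ^ 4 := one_le_pow₀ hn1
    nlinarith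
  have h3 := Real.log_le_log (by positivity) h2
  rw [Real.log_mul (by positivity) (by positivity), Real.log_pow] at h3
  unfold jcost
  rw [div_le_iff₀ hL]
  push_cast at h3
  linarith

/-! ### The discrete functional as a finite sum -/

/-- Mean of `f` over the cell `[i / n, (i + 1) / n]`. -/
noncomputable def cmean (f : ℝ → ℝ) (n i : ℕ) : ℝ := n * ∫ x in (i / n : ℝ)..((i + 1 : ℕ) / n : ℝ), f x

lemma sum_cells {F : ℝ → ℝ} {n m : ℕ} (G : ℕ → ℝ → ℝ)
    (hG : ∀ i < m, IntervalIntegrable (G i) volume (i / n : ℝ) ((i + 1 : ℕ) / n : ℝ))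
    (h : ∀ i < m, ∀ x ∈ Ioo (i / n : ℝ) ((i + 1 : ℕ) / n : ℝ), F x = G i x) :
    ∫ x in (0 : ℝ)..(m / n : ℝ), F x =
      ∑ i ∈ Finset.range m, ∫ x in (i / n : ℝ)..((i + 1 : ℕ) / n : ℝ), G i x := by
  have hle : ∀ i : ℕ, (i / n : ℝ) ≤ ((i + 1 : ℕ) / n : ℝ) := fun i => by
    push_cast; gcongr; linarith
  have heq : ∀ i < m, EqOn (G i) F (uIoo (i / n : ℝ) ((i + 1 : ℕ) / n : ℝ)) := fun i hi x hx => by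
    rw [uIoo_of_le (hle i)] at hx
    exact (h i hi x hx).symm
  have h1 := intervalIntegral.sum_integral_adjacent_intervals (f := F) (μ := volume)
    (a := fun i : ℕ => (i / n : ℝ)) (n := m) fun i hi => (hG i hi).congr_uIoo (heq i hi)
  simp only [Nat.cast_zero, zero_div] at h1
  rw [← h1]
  refine Finset.sum_congr rfl fun i hi => ?_
  rw [Finset.mem_range] at hi
  exact (intervalIntegral.integral_congr_uIoo (heq i hi)).symm

lemma pc_cell {n : ℕ} {v : ℝ → ℝ} (hv : IsPC (1 / (n : ℝ)) v) (z : ℤ) {x : ℝ}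
    (h1 : (z / n : ℝ) ≤ x) (h2 : x < ((z + 1) / n : ℝ)) : v x = v (z / n : ℝ) := by
  have := hv z x ⟨by rwa [mul_one_div], by rwa [mul_one_div]⟩
  rwa [mul_one_div] at this

lemma dpmf_formula {β : ℝ} {f : ℝ → ℝ} (hf : ContinuousOn f (Icc 0 1)) {n : ℕ} (hn : 1 ≤ n) :
    ∃ c : ℝ, ∀ v, IsPC (1 / (n : ℝ)) v → DPMF n β f 0 1 v =
      ∑ i ∈ Finset.range (n - 1),
        (1 / n : ℝ) * Real.log (1 + (n * (v ((i + 1 : ℕ) / n) - v (i / n))) ^ 2) +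
      β * (∑ i ∈ Finset.range n, (1 / n : ℝ) * (v (i / n) - cmean f n i) ^ 2 + c) := by
  have hn0 : (0 : ℝ) < n := by exact_mod_cast hn
  refine ⟨∑ i ∈ Finset.range n, ((∫ x in (i / n : ℝ)..((i + 1 : ℕ) / n : ℝ), f x ^ 2) -
    (1 / n : ℝ) * cmean f n i ^ 2), fun v hv => ?_⟩
  have hlen : ∀ i : ℕ, ((i + 1 : ℕ) / n : ℝ) - (i / n : ℝ) = 1 / n := fun i => by
    push_cast; field_simp; ring
  have hle : ∀ i : ℕ, (i / n : ℝ) ≤ ((i + 1 : ℕ) / n : ℝ) := fun i => by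
    push_cast; gcongr; linarith
  have hcell : ∀ i : ℕ, ∀ x ∈ Ioo (i / n : ℝ) ((i + 1 : ℕ) / n : ℝ), v x = v (i / n) := by
    intro i x hx
    have := pc_cell hv (i : ℤ) (x := x) (by simpa using hx.1.le) (by simpa using hx.2)
    simpa using this
  have hlow : lowGrid (1 / (n : ℝ)) 0 = 0 := by simp [lowGrid]
  have hhigh : highGrid (1 / (n : ℝ)) 1 = 1 := by
    simp [highGrid, hn0.ne']
  have htop : highGrid (1 / (n : ℝ)) 1 - 1 / (n : ℝ) = ((n - 1 : ℕ) / n : ℝ) := by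
    rw [hhigh, Nat.cast_sub hn]; field_simp; simp
  have hone : (1 : ℝ) = (n / n : ℝ) := by field_simp
  unfold DPMF
  rw [htop, hlow]
  congr 1
  · rw [sum_cells (G := fun i _ => Real.log (1 + (n * (v ((i + 1 : ℕ) / n) - v (i / n))) ^ 2))]
    · refine Finset.sum_congr rfl fun i _ => ?_
      rw [intervalIntegral.integral_const, hlen, smul_eq_mul]
    · exact fun i _ => intervalIntegrable_const
    · intro i _ x hx
      have hx' : x + 1 / n ∈ Ioo ((i + 1 : ℕ) / n : ℝ) ((i + 1 + 1 : ℕ) / n : ℝ) := by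
        have h1 := hlen i
        have h2 := hlen (i + 1)
        exact ⟨by linarith [hx.1], by linarith [hx.2]⟩
      rw [Dd, hcell i x hx, hcell (i + 1) _ hx']
      congr 3
      field_simp
  · congr 1
    have hcts : ∀ i < n, ContinuousOn f (uIcc (i / n : ℝ) ((i + 1 : ℕ) / n : ℝ)) := fun i hi => by
      refine hf.mono ?_
      rw [uIcc_of_le (hle i)]
      apply Icc_subset_Icc (by positivity)
      rw [div_le_one hn0]
      exact_mod_cast hi
    conv_lhs => rw [hone]
    rw [sum_cells (G := fun i x => (v (i / n) - f x) ^ 2), ← Finset.sum_add_distrib]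
    · refine Finset.sum_congr rfl fun i hi => ?_
      rw [Finset.mem_range] at hi
      have hf1 := (hcts i hi).intervalIntegrable (μ := volume)
      have hf2 : IntervalIntegrable (fun x => f x ^ 2) volume (i / n : ℝ) ((i + 1 : ℕ) / n : ℝ) :=
        ((hcts i hi).pow 2).intervalIntegrable
      have h1 : ∀ x, (v (i / n) - f x) ^ 2 = v (i / n) ^ 2 - 2 * v (i / n) * f x + f x ^ 2 :=
        fun x => by ring
      simp only [h1]
      rw [intervalIntegral.integral_add ((intervalIntegrable_const).sub (hf1.const_mul _)) hf2,
        intervalIntegral.integral_sub intervalIntegrable_const (hf1.const_mul _),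
        intervalIntegral.integral_const, intervalIntegral.integral_const_mul, hlen, smul_eq_mul]
      unfold cmean
      field_simp
      ring
    · intro i hi
      exact (((continuousOn_const).sub (hcts i hi)).pow 2).intervalIntegrable
    · intro i _ x hx
      rw [hcell i x hx]

/-- The means of a bounded function are bounded. -/
lemma cmean_sub_le {f : ℝ → ℝ} {n i : ℕ} (hn : 1 ≤ n) {c C : ℝ}
    (hf : IntervalIntegrable f volume (i / n : ℝ) ((i + 1 : ℕ) / n : ℝ))
    (h : ∀ x ∈ Icc (i / n : ℝ) ((i + 1 : ℕ) / n : ℝ), |f x - c| ≤ C) : |cmean f n i - c| ≤ C := by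
  have hn0 : (0 : ℝ) < n := by exact_mod_cast hn
  have hle : (i / n : ℝ) ≤ ((i + 1 : ℕ) / n : ℝ) := by
    push_cast; gcongr; linarith
  have hlen : ((i + 1 : ℕ) / n : ℝ) - (i / n : ℝ) = 1 / n := by
    push_cast; field_simp; ring
  have h1 : cmean f n i - c = n * ∫ x in (i / n : ℝ)..((i + 1 : ℕ) / n : ℝ), (f x - c) := by
    rw [intervalIntegral.integral_sub hf intervalIntegrable_const, intervalIntegral.integral_const,
      hlen, smul_eq_mul]
    unfold cmean
    field_simp
  have h2 := intervalIntegral.norm_integral_le_of_norm_le_const (a := (i / n : ℝ))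
    (b := ((i + 1 : ℕ) / n : ℝ)) (C := C) (f := fun x => f x - c) fun x hx => by
      rw [uIoc_of_le hle] at hx
      exact h x ⟨hx.1.le, hx.2⟩
  rw [hlen, Real.norm_eq_abs, abs_of_pos (show (0 : ℝ) < 1 / n by positivity)] at h2
  rw [h1, abs_mul, abs_of_pos hn0]
  calc (n : ℝ) * _ ≤ n * (C * (1 / n)) := by gcongr
    _ = C := by field_simp

/-- In blow-up variables the functional is, up to a factor and an additive constant, the discrete
energy `En` plus the fidelity term of the last cell. -/
lemma dpmf_blow {β : ℝ} {f : ℝ → ℝ} (hf : ContinuousOn f (Icc 0 1)) {n : ℕ} (hn : 2 ≤ n) (x₀ : ℝ) :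
    ∃ c : ℝ, ∀ v, IsPC (1 / (n : ℝ)) v → ∀ V : ℕ → ℝ,
      (∀ i : ℕ, i < n → v (i / n) = x₀ + omg n * V i) → DPMF n β f 0 1 v =
      omg n ^ 3 * (En (jcost n) (β * dlt n) (fun i => (cmean f n i - x₀) / omg n) V 0 (n - 1) +
        β * dlt n * (V (n - 1) - (cmean f n (n - 1) - x₀) / omg n) ^ 2) + c := by
  obtain ⟨c, hc⟩ := dpmf_formula (β := β) hf (show 1 ≤ n by omega)
  refine ⟨β * c, fun v hv V hV => ?_⟩
  have hn0 : (0 : ℝ) < n := by positivity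
  have hω := omg_pos hn
  have hL := log_pos' hn
  have hδ := dlt_pos hn
  have hd := dlt_mul hn
  have h3 := omg_cube hn
  rw [hc v hv]
  have hnn : Finset.range n = Finset.range (n - 1 + 1) := by congr 1; omega
  rw [hnn, Finset.sum_range_succ]
  unfold En
  rw [Finset.sum_add_distrib, Finset.range_eq_Ico]
  have hfid : ∀ i < n, β * ((1 / n : ℝ) * (v (i / n) - cmean f n i) ^ 2) =
      omg n ^ 3 * (β * dlt n * (V i - (cmean f n i - x₀) / omg n) ^ 2) := by
    intro i hi
    have e1 : (1 / n : ℝ) = omg n * dlt n := by field_simp; linarith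
    have e2 : v (i / n) - cmean f n i = omg n * (V i - (cmean f n i - x₀) / omg n) := by
      rw [hV i hi]; field_simp; ring
    rw [e1, e2]; ring
  have hA : ∑ i ∈ Finset.Ico 0 (n - 1),
      (1 / n : ℝ) * Real.log (1 + (n * (v ((i + 1 : ℕ) / n) - v (i / n))) ^ 2) =
      omg n ^ 3 * ∑ i ∈ Finset.Ico 0 (n - 1), jcost n (V (i + 1) - V i) := by
    rw [Finset.mul_sum]
    refine Finset.sum_congr rfl fun i hi => ?_
    rw [Finset.mem_Ico] at hi
    have e1 : (n : ℝ) * (v ((i + 1 : ℕ) / n) - v (i / n)) = (V (i + 1) - V i) / dlt n := by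
      rw [hV i (by omega), hV (i + 1) (by omega), eq_div_iff hδ.ne']
      calc _ = (n * omg n * dlt n) * (V (i + 1) - V i) := by ring
        _ = _ := by rw [hd, one_mul]
    rw [e1, h3]
    unfold jcost
    field_simp
  have hB : β * ∑ i ∈ Finset.Ico 0 (n - 1), (1 / n : ℝ) * (v (i / n) - cmean f n i) ^ 2 =
      omg n ^ 3 * ∑ i ∈ Finset.Ico 0 (n - 1), β * dlt n * (V i - (cmean f n i - x₀) / omg n) ^ 2 := by
    rw [Finset.mul_sum, Finset.mul_sum]
    refine Finset.sum_congr rfl fun i hi => ?_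
    rw [Finset.mem_Ico] at hi
    exact hfid i (by omega)
  have hC := hfid (n - 1) (by omega)
  rw [hA]
  linear_combination hB + hC

/-! ### Minimizers as blow-up sequences -/

/-- A minimizer read in blow-up variables minimizes the discrete energy on every window. -/
lemma min_lm {β : ℝ} {f : ℝ → ℝ} (hf : ContinuousOn f (Icc 0 1)) {n : ℕ} (hn : 2 ≤ n)
    {u : ℝ → ℝ} (hu : IsMinimizer n β f u) (x₀ : ℝ) :
    LM (jcost n) (β * dlt n) (fun i => (cmean f n i - x₀) / omg n)
      (fun i => (u (i / n) - x₀) / omg n) (n - 1) := by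
  intro A B hAB hBN V hVA hVB
  have hω := omg_pos hn
  have hn0 : (0 : ℝ) < n := by positivity
  obtain ⟨c, hc⟩ := dpmf_blow (β := β) hf hn x₀
  set a : ℕ → ℝ := fun i => (cmean f n i - x₀) / omg n with ha
  set W : ℕ → ℝ := fun i => (u (i / n) - x₀) / omg n with hW
  have hv : IsPC (1 / (n : ℝ)) (fun x => x₀ + omg n * V ⌊(n : ℝ) * x⌋₊) := by
    intro z x hx
    have h1 : ⌊(n : ℝ) * x⌋ = z := by
      rw [Int.floor_eq_iff]
      constructor
      · have := hx.1
        rw [mul_one_div, div_le_iff₀ hn0] at this; linarith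
      · have := hx.2
        rw [mul_one_div, lt_div_iff₀ hn0] at this; linarith
    have h2 : ⌊(n : ℝ) * (z * (1 / n))⌋ = z := by
      rw [show (n : ℝ) * (z * (1 / n)) = z by field_simp, Int.floor_intCast]
    simp only [← Int.floor_toNat, h1, h2]
  have h1 := hu.2 _ hv
  rw [hc u hu.1 W fun i _ => by simp only [hW]; field_simp; ring,
    hc _ hv V fun i _ => by
      rw [show (n : ℝ) * (i / n) = i by field_simp, Nat.floor_natCast]] at h1
  have h2 := le_of_mul_le_mul_left (le_of_add_le_add_right h1) (pow_pos hω 3)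
  rw [hVB (n - 1) hBN] at h2
  have h3 := le_of_add_le_add_right h2
  rw [← En_add _ _ _ _ (Nat.zero_le A) (hAB.le.trans hBN), ← En_add _ _ _ V (Nat.zero_le A)
    (hAB.le.trans hBN), ← En_add _ _ _ W hAB.le hBN, ← En_add _ _ _ V hAB.le hBN] at h3
  have h4 : En (jcost n) (β * dlt n) a V 0 A = En (jcost n) (β * dlt n) a W 0 A := by
    refine Finset.sum_congr rfl fun i hi => ?_
    rw [Finset.mem_Ico] at hi
    rw [hVA i (by omega), hVA (i + 1) (by omega)]
  have h5 : En (jcost n) (β * dlt n) a V B (n - 1) = En (jcost n) (β * dlt n) a W B (n - 1) := by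
    refine Finset.sum_congr rfl fun i hi => ?_
    rw [Finset.mem_Ico] at hi
    rw [hVB i (by omega), hVB (i + 1) (by omega)]
  linarith

/-- Crude polynomial bound, from the comparison of the minimizer with the zero function. -/
lemma min_crude {β : ℝ} (hβ : 0 < β) {f : ℝ → ℝ} (hf : ContinuousOn f (Icc 0 1)) {F : ℝ}
    (hF : ∀ x ∈ Icc (0 : ℝ) 1, |f x| ≤ F) {n : ℕ} (hn : 2 ≤ n) {u : ℝ → ℝ}
    (hu : IsMinimizer n β f u) {i : ℕ} (hi : i < n) : |u (i / n)| ≤ 2 * n * F := by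
  have hn0 : (0 : ℝ) < n := by positivity
  have hn1 : (1 : ℝ) ≤ n := by exact_mod_cast (show 1 ≤ n by omega)
  have hF0 : 0 ≤ F := (abs_nonneg _).trans (hF 0 (by simp))
  have hmean : ∀ j < n, |cmean f n j| ≤ F := by
    intro j hj
    have hsub : Icc (j / n : ℝ) ((j + 1 : ℕ) / n : ℝ) ⊆ Icc 0 1 := by
      apply Icc_subset_Icc (by positivity)
      rw [div_le_one hn0]
      exact_mod_cast hj
    have hle : (j / n : ℝ) ≤ ((j + 1 : ℕ) / n : ℝ) := by
      push_cast; gcongr; linarith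
    have := cmean_sub_le (f := f) (n := n) (i := j) (c := 0) (C := F) (by omega)
      (ContinuousOn.intervalIntegrable (by rw [uIcc_of_le hle]; exact hf.mono hsub))
      (fun x hx => by rw [sub_zero]; exact hF x (hsub hx))
    simpa using this
  obtain ⟨c, hc⟩ := dpmf_formula (β := β) hf (show 1 ≤ n by omega)
  have hv : IsPC (1 / (n : ℝ)) (fun _ => 0) := fun _ _ _ => rfl
  have h1 := hu.2 _ hv
  rw [hc u hu.1, hc _ hv] at h1
  have h2 : ∑ j ∈ Finset.range (n - 1), (1 / n : ℝ) *
      Real.log (1 + ((n : ℝ) * ((fun _ : ℝ => (0 : ℝ)) ((j + 1 : ℕ) / n) -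
        (fun _ : ℝ => (0 : ℝ)) (j / n))) ^ 2) = 0 := by simp
  have h3 : 0 ≤ ∑ j ∈ Finset.range (n - 1), (1 / n : ℝ) *
      Real.log (1 + ((n : ℝ) * (u ((j + 1 : ℕ) / n) - u (j / n))) ^ 2) := by
    refine Finset.sum_nonneg fun j _ => ?_
    refine mul_nonneg (by positivity) (Real.log_nonneg ?_)
    linarith [sq_nonneg ((n : ℝ) * (u ((j + 1 : ℕ) / n) - u (j / n)))]
  have h4 : ∑ j ∈ Finset.range n, (1 / n : ℝ) * ((fun _ : ℝ => (0 : ℝ)) (j / n) - cmean f n j) ^ 2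
      ≤ F ^ 2 := by
    calc _ ≤ ∑ j ∈ Finset.range n, (1 / n : ℝ) * F ^ 2 := by
          refine Finset.sum_le_sum fun j hj => ?_
          gcongr ?_ * ?_
          rw [zero_sub, neg_sq, ← sq_abs]
          gcongr
          exact hmean j (Finset.mem_range.mp hj)
      _ = F ^ 2 := by
          rw [Finset.sum_const, Finset.card_range, nsmul_eq_mul]; field_simp
  have h5 : (1 / n : ℝ) * (u (i / n) - cmean f n i) ^ 2 ≤
      ∑ j ∈ Finset.range n, (1 / n : ℝ) * (u (j / n) - cmean f n j) ^ 2 :=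
    Finset.single_le_sum (f := fun j : ℕ => (1 / n : ℝ) * (u (j / n) - cmean f n j) ^ 2)
      (fun j _ => by positivity) (Finset.mem_range.mpr hi)
  rw [h2] at h1
  have h6 : (1 / n : ℝ) * (u (i / n) - cmean f n i) ^ 2 ≤ F ^ 2 := by
    have : β * (∑ j ∈ Finset.range n, (1 / n : ℝ) * (u (j / n) - cmean f n j) ^ 2 + c) ≤
        β * (∑ j ∈ Finset.range n, (1 / n : ℝ) *
          ((fun _ : ℝ => (0 : ℝ)) (j / n) - cmean f n j) ^ 2 + c) := by linarith
    have := le_of_mul_le_mul_left this hβ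
    linarith
  have h7 : (u (i / n) - cmean f n i) ^ 2 ≤ (n * F) ^ 2 := by
    rw [one_div, inv_mul_le_iff₀ hn0] at h6
    have : (n : ℝ) * F ^ 2 ≤ n * n * F ^ 2 := by
      gcongr; nlinarith
    linarith
  have h8 := abs_le_of_sq_le_sq h7 (by positivity)
  have h9 := abs_add_le (u (i / n) - cmean f n i) (cmean f n i)
  rw [sub_add_cancel] at h9
  have h10 := hmean i hi
  nlinarith

section Setup

variable {β : ℝ} {f f' : ℝ → ℝ} {u : ℕ → ℝ → ℝ} {k : ℕ → ℕ} {xs : ℕ → ℝ} {xinf : ℝ}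

lemma setup_dom (hxs : ∀ n, xs n = (k n : ℝ) / (n : ℝ)) (hxinf : xinf ∈ Set.Ioo (0 : ℝ) 1)
    (hx : Tendsto xs atTop (nhds xinf)) (R : ℝ) : ∀ᶠ n in atTop,
    R ≤ k n * dlt n ∧ R ≤ (((n - 1 : ℕ) : ℝ) - k n) * dlt n := by
  have h1 : Tendsto (fun n => (|R| + 1) * omg n) atTop (nhds 0) := by
    simpa using omg_lim.const_mul (|R| + 1)
  filter_upwards [eventually_ge_atTop 2, hx.eventually (lt_mem_nhds (half_lt_self hxinf.1)),
    hx.eventually (gt_mem_nhds (show xinf < (xinf + 1) / 2 by linarith [hxinf.2])),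
    h1.eventually (gt_mem_nhds (half_pos hxinf.1)),
    h1.eventually (gt_mem_nhds (show 0 < (1 - xinf) / 2 by linarith [hxinf.2])),
    dlt_lim.eventually (gt_mem_nhds one_pos)] with n hn h2 h3 h4 h5 h6
  have hω := omg_pos hn
  have hδ := dlt_pos hn
  have hd := dlt_mul hn
  have hn0 : (0 : ℝ) < n := by positivity
  have hk : (k n : ℝ) = n * xs n := by rw [hxs]; field_simp
  have hR := le_abs_self R
  have e1 : k n * dlt n * omg n = xs n := by
    rw [hk]; linear_combination xs n * hd
  have e2 : (n : ℝ) * dlt n * omg n = 1 := by linear_combination hd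
  rw [Nat.cast_sub (by omega)]
  push_cast
  constructor
  · have : R * omg n ≤ k n * dlt n * omg n := by rw [e1]; nlinarith
    exact le_of_mul_le_mul_right this hω
  · have : R * omg n ≤ ((n : ℝ) - 1 - k n) * dlt n * omg n := by
      have : ((n : ℝ) - 1 - k n) * dlt n * omg n = 1 - dlt n * omg n - xs n := by
        linear_combination e2 - e1
      rw [this]; nlinarith
    exact le_of_mul_le_mul_right this hω

lemma setup_aff (hder : ∀ x ∈ Set.Icc (0 : ℝ) 1, HasDerivAt f (f' x) x)
    (hcont : ContinuousOn f' (Set.Icc (0 : ℝ) 1))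
    (hxs : ∀ n, xs n = (k n : ℝ) / (n : ℝ)) (hxinf : xinf ∈ Set.Ioo (0 : ℝ) 1)
    (hx : Tendsto xs atTop (nhds xinf)) (R η : ℝ) (hη : 0 < η) : ∀ᶠ n in atTop, ∀ i : ℕ,
    |((i : ℝ) - k n) * dlt n| ≤ R →
      |(cmean f n i - f (xs n)) / omg n - f' xinf * (((i : ℝ) - k n) * dlt n)| ≤ η := by
  rcases lt_or_ge R 0 with hR | hR
  · exact Eventually.of_forall fun n i hi => absurd ((abs_nonneg _).trans hi) (by linarith)
  have hnhds : Icc (0 : ℝ) 1 ∈ nhds xinf := Icc_mem_nhds hxinf.1 hxinf.2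
  have hstrict : HasStrictDerivAt f (f' xinf) xinf :=
    hasStrictDerivAt_of_hasDerivAt_of_continuousAt
      (by filter_upwards [hnhds] with x hx using hder x hx) (hcont.continuousAt hnhds)
  set M := f' xinf
  set ε := η / (2 * (R + 1)) with hε
  have hε0 : 0 < ε := by positivity
  have hlit := hstrict.hasStrictFDerivAt.isLittleO.def hε0
  rw [Metric.eventually_nhds_iff] at hlit
  obtain ⟨r, hr, hlit⟩ := hlit
  obtain ⟨r', hr', hball⟩ := Metric.mem_nhds_iff.mp hnhds
  set ρ := min r r' with hρ
  have hρ0 : 0 < ρ := lt_min hr hr'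
  have hω1 : Tendsto (fun n => omg n * (R + 1)) atTop (nhds 0) := by
    simpa using omg_lim.mul_const (R + 1)
  have hd1 : Tendsto (fun n => |M| * dlt n) atTop (nhds 0) := by
    simpa using dlt_lim.const_mul |M|
  filter_upwards [eventually_ge_atTop 2, Metric.tendsto_nhds.mp hx (ρ / 2) (half_pos hρ0),
    hω1.eventually (gt_mem_nhds (half_pos hρ0)), hd1.eventually (gt_mem_nhds (half_pos hη)),
    dlt_lim.eventually (gt_mem_nhds one_pos)] with n hn hxn hωn hdn hδ1 i hi
  have hω := omg_pos hn
  have hδ := dlt_pos hn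
  have hd := dlt_mul hn
  have hn0 : (0 : ℝ) < n := by positivity
  set y := ((i : ℝ) - k n) * dlt n with hy
  have hinv : (1 / n : ℝ) = omg n * dlt n := by field_simp; linarith
  have e1 : (i / n : ℝ) = xs n + omg n * y := by
    rw [hxs, hy, div_eq_mul_one_div, div_eq_mul_one_div (k n : ℝ), hinv]; ring
  have e2 : ((i + 1 : ℕ) / n : ℝ) = xs n + omg n * y + omg n * dlt n := by
    rw [← e1, ← hinv]; push_cast; ring
  have hi' := abs_le.mp hi
  rw [Real.dist_eq] at hxn
  have hxn' := abs_lt.mp hxn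
  have hnear : ∀ p ∈ Icc (i / n : ℝ) ((i + 1 : ℕ) / n : ℝ), |p - xs n| ≤ omg n * (R + 1) := by
    intro p hp
    rw [e1, e2] at hp
    have h1 := hp.1
    have h2 := hp.2
    refine abs_le.mpr ⟨?_, ?_⟩ <;> nlinarith
  have hnear' : ∀ p ∈ Icc (i / n : ℝ) ((i + 1 : ℕ) / n : ℝ), |p - xinf| < ρ := by
    intro p hp
    have := abs_add_le (p - xs n) (xs n - xinf)
    rw [sub_add_sub_cancel] at this
    linarith [hnear p hp]
  have hle : (i / n : ℝ) ≤ ((i + 1 : ℕ) / n : ℝ) := by rw [e1, e2]; nlinarith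
  have hfi : IntervalIntegrable f volume (i / n : ℝ) ((i + 1 : ℕ) / n : ℝ) := by
    apply ContinuousOn.intervalIntegrable
    rw [uIcc_of_le hle]
    intro p hp
    have : p ∈ Icc (0 : ℝ) 1 := hball (by
      rw [Metric.mem_ball, Real.dist_eq]; exact (hnear' p hp).trans_le (min_le_right _ _))
    exact (hder p this).continuousAt.continuousWithinAt
  have hmean := cmean_sub_le (n := n) (i := i) (c := f (xs n) + M * (omg n * y))
    (C := ε * (omg n * (R + 1)) + |M| * (omg n * dlt n)) (by omega) hfi fun p hp => by
      have h1 := hlit (y := (p, xs n)) (by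
        rw [Prod.dist_eq, max_lt_iff, Real.dist_eq, Real.dist_eq]
        exact ⟨(hnear' p hp).trans_le (min_le_left _ _),
          hxn.trans_le ((half_le_self hρ0.le).trans (min_le_left _ _))⟩)
      simp only [Real.norm_eq_abs, ContinuousLinearMap.toSpanSingleton_apply, smul_eq_mul] at h1
      have h2 : |M * (p - xs n - omg n * y)| ≤ |M| * (omg n * dlt n) := by
        rw [abs_mul]
        gcongr
        rw [e1, e2] at hp
        rw [abs_of_nonneg (by linarith [hp.1])]
        linarith [hp.2]
      have h3 : ε * |p - xs n| ≤ ε * (omg n * (R + 1)) := by gcongr; exact hnear p hp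
      calc |f p - (f (xs n) + M * (omg n * y))|
          = |(f p - f (xs n) - (p - xs n) * M) + M * (p - xs n - omg n * y)| := by congr 1; ring
        _ ≤ _ := (abs_add_le _ _).trans (by linarith)
  have e3 : (cmean f n i - f (xs n)) / omg n - M * y =
      (cmean f n i - (f (xs n) + M * (omg n * y))) / omg n := by field_simp; ring
  rw [e3, abs_div, abs_of_pos hω, div_le_iff₀ hω]
  have e4 : ε * (R + 1) = η / 2 := by rw [hε]; field_simp
  refine hmean.trans ?_
  have : ε * (omg n * (R + 1)) + |M| * (omg n * dlt n) = (ε * (R + 1) + |M| * dlt n) * omg n := by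
    ring
  rw [this, e4]
  gcongr
  linarith

lemma setup_crude (hβ : 0 < β) (hf : ContinuousOn f (Icc 0 1))
    (hu : ∀ n, 2 ≤ n → IsMinimizer n β f (u n)) (hk : ∀ n, 2 ≤ n → k n < n)
    (hxs : ∀ n, xs n = (k n : ℝ) / (n : ℝ)) (C : ℝ) :
    ∀ᶠ n in atTop, ∀ i : ℕ, i ≤ n - 1 → ∀ c, |c| ≤ C →
      jcost n (c - (u n (i / n) - f (xs n)) / omg n) ≤ 5 := by
  obtain ⟨F, hF⟩ := isCompact_Icc.exists_bound_of_continuousOn hf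
  have hF0 : 0 ≤ F := (norm_nonneg _).trans (hF 0 (by simp))
  filter_upwards [eventually_ge_atTop 2, jcost_poly (|C| + 3 * F),
    omg_lim.eventually (gt_mem_nhds one_pos)] with n hn hp hω1 i hi c hc
  have hω := omg_pos hn
  have hδ := dlt_pos hn
  have hd := dlt_mul hn
  have hn0 : (0 : ℝ) < n := by positivity
  have hn1 : (1 : ℝ) ≤ n := by exact_mod_cast (show 1 ≤ n by omega)
  apply hp
  have h1 := min_crude hβ hf hF hn (hu n hn) (i := i) (by omega)
  have h2 : |f (xs n)| ≤ F := hF _ (by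
    rw [hxs]
    refine ⟨by positivity, ?_⟩
    rw [div_le_one hn0]
    exact_mod_cast (hk n hn).le)
  have h3 := abs_sub (u n (i / n)) (f (xs n))
  have h4 : |u n (i / n) - f (xs n)| ≤ 3 * F * n := by nlinarith
  have e1 : (n : ℝ) ^ 2 * dlt n = n / omg n := by
    rw [eq_div_iff hω.ne']; linear_combination (n : ℝ) * hd
  have h5 : |(u n (i / n) - f (xs n)) / omg n| ≤ 3 * F * (n ^ 2 * dlt n) := by
    rw [abs_div, abs_of_pos hω, e1, ← mul_div_assoc]
    gcongr
  have h6 : |c| ≤ |C| * (n ^ 2 * dlt n) := by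
    have : 1 ≤ (n : ℝ) / omg n := by rw [le_div_iff₀ hω]; linarith
    rw [e1]
    have := abs_nonneg C
    nlinarith [le_abs_self C]
  have h7 := abs_sub c ((u n (i / n) - f (xs n)) / omg n)
  nlinarith

end Setup

/-- Blow-ups `w_n(y) = (u_n(x_n + ω(n)y) − f(x_n))/ω(n)` of minimizers
around points `x_n = k_n/n → x_∞ ∈ (0,1)` are relatively compact with respect to locally
strict convergence, and every limit point is an oblique translation of the canonical
`(H,V)`-staircase with `H = (1/(β|f'(x_∞)|²))^{1/3}`, `V = f'(x_∞)H`. -/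
theorem blowup_compactness_oblique
    (β : ℝ) (hβ : 0 < β) (f f' : ℝ → ℝ)
    (hder : ∀ x ∈ Set.Icc (0 : ℝ) 1, HasDerivAt f (f' x) x)
    (hcont : ContinuousOn f' (Set.Icc (0 : ℝ) 1))
    (u : ℕ → ℝ → ℝ) (hu : ∀ n, 2 ≤ n → IsMinimizer n β f (u n))
    (k : ℕ → ℕ) (hk : ∀ n, 2 ≤ n → k n < n)
    (xs : ℕ → ℝ) (hxs : ∀ n, xs n = (k n : ℝ) / (n : ℝ))
    (xinf : ℝ) (hxinf : xinf ∈ Set.Ioo (0 : ℝ) 1)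
    (hx : Tendsto xs atTop (nhds xinf))
    (w : ℕ → ℝ → ℝ)
    (hw : ∀ n y, w n y = (u n (xs n + omg n * y) - f (xs n)) / omg n)
    (H V : ℝ)
    (hH : H = (1 / (β * |f' xinf| ^ 2)) ^ ((1 : ℝ) / 3))
    (hV : V = f' xinf * H) :
    ∀ nk : ℕ → ℕ, Tendsto nk atTop atTop →
      ∃ φ : ℕ → ℕ, StrictMono φ ∧ ∃ winf : ℝ → ℝ, Obl H V winf ∧
        LocStrictBV (fun h => w (nk (φ h))) winf := by
  have hf : ContinuousOn f (Icc 0 1) := fun x hx => (hder x hx).continuousAt.continuousWithinAt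
  let D : Blow :=
    { β := β
      M := f' xinf
      δ := dlt
      θ := fun n => 1 / Real.log n ^ 2
      g := jcost
      k := k
      N := fun n => n - 1
      W := fun n i => (u n (i / n) - f (xs n)) / omg n
      a := fun n i => (cmean f n i - f (xs n)) / omg n
      β_pos := hβ
      δ_pos := by filter_upwards [eventually_ge_atTop 2] with n hn using dlt_pos hn
      δ_lim := dlt_lim
      cost := by filter_upwards [eventually_ge_atTop 2] with n hn using jcost_cost hn
      lm := by
        filter_upwards [eventually_ge_atTop 2] with n hn using min_lm hf hn (hu n hn) (f (xs n))
      dom := setup_dom hxs hxinf hx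
      aff := setup_aff hder hcont hxs hxinf hx
      crude := setup_crude hβ hf hu hk hxs
      gup := jcost_up
      glow := jcost_low
      small := jcost_small }
  refine D.main (H := H) hV ?_ fun R => ?_
  · by_cases hM : f' xinf = 0
    · exact Or.inl hM
    · right
      have h1 : 0 < β * |f' xinf| ^ 2 := by
        have := abs_pos.mpr hM
        positivity
      have h2 : H ^ 3 = 1 / (β * |f' xinf| ^ 2) := by
        rw [hH, ← Real.rpow_natCast, ← Real.rpow_mul (by positivity)]
        norm_num
      refine ⟨hM, by rw [hH]; positivity, ?_⟩
      change β * f' xinf ^ 2 * H ^ 3 = 1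
      rw [h2, sq_abs]
      rw [sq_abs] at h1
      field_simp
  · filter_upwards [eventually_ge_atTop 2, setup_dom hxs hxinf hx R] with n hn hdom y hy
    have hω := omg_pos hn
    have hδ := dlt_pos hn
    have hd := dlt_mul hn
    have hn0 : (0 : ℝ) < n := by positivity
    have h0 : 0 ≤ (k n : ℝ) + y / dlt n := by
      have e : (k n : ℝ) + y / dlt n = (k n * dlt n + y) / dlt n := by field_simp
      rw [e]
      exact div_nonneg (by linarith [(abs_le.mp hy).1, hdom.1]) hδ.le
    -- the point `xs n + omg n * y` lies in the cell of index `⌊k n + y / dlt n⌋₊`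
    have e1 : xs n + omg n * y = ((k n : ℝ) + y / dlt n) / n := by
      have e2 : y / dlt n = n * omg n * y := by
        rw [div_eq_iff hδ.ne']; linear_combination (-y) * hd
      rw [hxs, e2]; field_simp
    have h1 := Nat.floor_le h0
    have h2 := Nat.lt_floor_add_one ((k n : ℝ) + y / dlt n)
    have h3 := pc_cell (hu n hn).1 (⌊(k n : ℝ) + y / dlt n⌋₊ : ℤ) (x := xs n + omg n * y)
      (by rw [e1, Int.cast_natCast]; gcongr) (by rw [e1, Int.cast_natCast]; gcongr)
    rw [hw, h3, Int.cast_natCast]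
    rfl

end PeronaMalik
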